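/- arXiv:2401.00837 — 3 statements merged into one kernel-verified Lean document; each statement's English description precedes it below -/
import Mathlib

section
/- Let S ⊆ {-1,0,1}^d \ {0} be a step set (with positive weights) that is symmetric over every coordinate axis. Then for every n ≥ 0, the total weight s_n of walks of length n taking steps in S, beginning at the origin, and never leaving ℕ^d equals the coefficient of z_1^n ··· z_d^n t^n in the power series expansion (around the origin) of the rational function (1+z_1)···(1+z_d) / (1 - t (z_1···z_d) S(z)). -/
open Finset Filter
open scoped Classical

noncomputable section

/-- Total weight of walks of length `n` with steps in `S` (weighted by `w`),
starting at the origin and never leaving `ℕ^d`. -/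
def walkWeight (d : ℕ) (S : Finset (Fin d → ℤ)) (w : (Fin d → ℤ) → ℝ) (n : ℕ) : ℝ :=
  ∑ f : Fin n → {i // i ∈ S},
    if ∀ m : ℕ, m ≤ n → ∀ j : Fin d,
        0 ≤ ∑ k ∈ Finset.univ.filter (fun k : Fin n => (k : ℕ) < m), ((f k : Fin d → ℤ) j)
    then ∏ k : Fin n, w (f k) else 0

/-- The step set `S` (with weights `w`) is symmetric over the `k`-th coordinate axis. -/
def SymmetricAxis (d : ℕ) (S : Finset (Fin d → ℤ)) (w : (Fin d → ℤ) → ℝ) (k : Fin d) : Prop :=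
  ∀ i ∈ S, Function.update i k (-(i k)) ∈ S ∧ w (Function.update i k (-(i k))) = w i

/-- The polynomial `(z_1⋯z_d)·S(z)` as a multivariate power series in the variables
`z_1,…,z_d,t` (the variable `z_j` is `X (Fin.castSucc j)` and `t` is `X (Fin.last d)`). -/
def zProdS (d : ℕ) (S : Finset (Fin d → ℤ)) (w : (Fin d → ℤ) → ℝ) :
    MvPowerSeries (Fin (d + 1)) ℝ :=
  ∑ i ∈ S, MvPowerSeries.C (σ := Fin (d + 1)) (R := ℝ) (w i) *
    ∏ j : Fin d, MvPowerSeries.X (Fin.castSucc j) ^ (i j + 1).toNat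

/-- The transfer operator of a weighted step set: `φ ↦ (x ↦ ∑ i ∈ S, w i * φ (x + i))`. -/
def transfer {d : ℕ} (S : Finset (Fin d → ℤ)) (w : (Fin d → ℤ) → ℝ)
    (φ : (Fin d → ℤ) → ℝ) (x : Fin d → ℤ) : ℝ :=
  ∑ i ∈ S, w i * φ (x + i)

/-- The reflection of the `k`-th coordinate about `c / 2`. -/
def reflectCoord {d : ℕ} (k : Fin d) (c : ℤ) (x : Fin d → ℤ) : Fin d → ℤ :=
  Function.update x k (c - x k)

section Transfer

variable {d : ℕ} {S : Finset (Fin d → ℤ)} {w : (Fin d → ℤ) → ℝ}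

lemma transfer_comp_reflectCoord {k : Fin d} (hk : SymmetricAxis d S w k) (c : ℤ)
    (φ : (Fin d → ℤ) → ℝ) :
    transfer S w (φ ∘ reflectCoord k c) = transfer S w φ ∘ reflectCoord k c := by
  funext x
  simp only [transfer, Function.comp_apply]
  refine Finset.sum_nbij' (fun i => Function.update i k (-(i k)))
    (fun i => Function.update i k (-(i k))) (fun i hi => (hk i hi).1) (fun i hi => (hk i hi).1)
    (fun i _ => by simp) (fun i _ => by simp) (fun i hi => ?_)
  rw [(hk i hi).2]
  congr 2
  funext j
  by_cases hj : j = k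
  · subst hj
    simp [reflectCoord]
    ring
  · simp [reflectCoord, hj]

lemma iterate_transfer_comp_reflectCoord {k : Fin d} (hk : SymmetricAxis d S w k) (c : ℤ)
    (φ : (Fin d → ℤ) → ℝ) (n : ℕ) :
    (transfer S w)^[n] (φ ∘ reflectCoord k c) = (transfer S w)^[n] φ ∘ reflectCoord k c := by
  induction n with
  | zero => rfl
  | succ n ih => rw [Function.iterate_succ_apply', ih, transfer_comp_reflectCoord hk,
      Function.iterate_succ_apply']

lemma iterate_transfer_add (φ ψ : (Fin d → ℤ) → ℝ) (n : ℕ) :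
    (transfer S w)^[n] (φ + ψ) = (transfer S w)^[n] φ + (transfer S w)^[n] ψ := by
  induction n with
  | zero => rfl
  | succ n ih =>
    simp only [Function.iterate_succ_apply', ih]
    funext x
    simp [transfer, mul_add, Finset.sum_add_distrib]

lemma iterate_transfer_smul (a : ℝ) (φ : (Fin d → ℤ) → ℝ) (n : ℕ) :
    (transfer S w)^[n] (a • φ) = a • (transfer S w)^[n] φ := by
  induction n with
  | zero => rfl
  | succ n ih =>
    simp only [Function.iterate_succ_apply', ih]
    funext x
    simp [transfer, Finset.mul_sum, mul_left_comm]

/-- A function that is odd about `x k = -1` has vanishing iterated transfers on that hyperplane. -/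
lemma iterate_transfer_eq_zero_of_odd {k : Fin d} (hk : SymmetricAxis d S w k)
    {φ : (Fin d → ℤ) → ℝ} (hφ : φ ∘ reflectCoord k (-2) = (-1 : ℝ) • φ) (n : ℕ)
    {x : Fin d → ℤ} (hx : x k = -1) : (transfer S w)^[n] φ x = 0 := by
  have h := congrFun (iterate_transfer_comp_reflectCoord hk (-2) φ n) x
  have hr : reflectCoord k (-2) x = x := by
    simp [reflectCoord, hx]
  rw [hφ, iterate_transfer_smul, Function.comp_apply, hr] at h
  simp only [Pi.smul_apply, smul_eq_mul] at h
  linarith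

/-- Replacing one factor of a product by its even part does not change the iterated transfer at
the origin. -/
lemma iterate_transfer_prod_update_even {k : Fin d} (hk : SymmetricAxis d S w k)
    (Φ : Fin d → ℤ → ℝ) (n : ℕ) :
    (transfer S w)^[n] (fun x => ∏ j,
        Function.update Φ k (fun y => (Φ k y + Φ k (-y)) / 2) j (x j)) 0 =
      (transfer S w)^[n] (fun x => ∏ j, Φ j (x j)) 0 := by
  set F : (Fin d → ℤ) → ℝ := fun x => ∏ j, Φ j (x j) with hF
  have hsplit : (fun x : Fin d → ℤ => ∏ j,
      Function.update Φ k (fun y => (Φ k y + Φ k (-y)) / 2) j (x j)) =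
      (1 / 2 : ℝ) • (F + F ∘ reflectCoord k 0) := by
    funext x
    simp only [hF, Pi.smul_apply, Pi.add_apply, Function.comp_apply, smul_eq_mul]
    rw [← Finset.mul_prod_erase _ _ (Finset.mem_univ k),
      ← Finset.mul_prod_erase _ (fun j => Φ j (x j)) (Finset.mem_univ k),
      ← Finset.mul_prod_erase _ (fun j => Φ j (reflectCoord k 0 x j)) (Finset.mem_univ k)]
    have h₁ : ∏ j ∈ Finset.univ.erase k,
        Function.update Φ k (fun y => (Φ k y + Φ k (-y)) / 2) j (x j) =
        ∏ j ∈ Finset.univ.erase k, Φ j (x j) :=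
      Finset.prod_congr rfl fun j hj => by simp [Finset.ne_of_mem_erase hj]
    have h₂ : ∏ j ∈ Finset.univ.erase k, Φ j (reflectCoord k 0 x j) =
        ∏ j ∈ Finset.univ.erase k, Φ j (x j) :=
      Finset.prod_congr rfl fun j hj => by simp [reflectCoord, Finset.ne_of_mem_erase hj]
    rw [h₁, h₂]
    simp [reflectCoord]
    ring
  have hr : reflectCoord k 0 (0 : Fin d → ℤ) = 0 := by
    simp [reflectCoord]
  rw [hsplit, iterate_transfer_smul, iterate_transfer_add, iterate_transfer_comp_reflectCoord hk]
  simp only [Pi.smul_apply, Pi.add_apply, Function.comp_apply, smul_eq_mul, hr]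
  ring

lemma iterate_transfer_prod_even (hsym : ∀ k, SymmetricAxis d S w k)
    (Φ : Fin d → ℤ → ℝ) (n : ℕ) (A : Finset (Fin d)) :
    (transfer S w)^[n] (fun x => ∏ j,
        (if j ∈ A then fun y => (Φ j y + Φ j (-y)) / 2 else Φ j) (x j)) 0 =
      (transfer S w)^[n] (fun x => ∏ j, Φ j (x j)) 0 := by
  induction A using Finset.induction_on with
  | empty => simp
  | insert k A hkA ih =>
    rw [← ih, ← iterate_transfer_prod_update_even (hsym k)
      (fun j => if j ∈ A then fun y => (Φ j y + Φ j (-y)) / 2 else Φ j)]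
    refine congrFun (congrArg _ (funext fun x => ?_)) 0
    refine Finset.prod_congr rfl fun j _ => ?_
    by_cases hj : j = k
    · subst hj
      simp [hkA]
    · simp [hj]

/-- The iterated transfer at the origin of a product only depends on the even parts of the
factors. -/
lemma iterate_transfer_prod_congr (hsym : ∀ k, SymmetricAxis d S w k)
    {Φ Ψ : Fin d → ℤ → ℝ} (h : ∀ j y, Φ j y + Φ j (-y) = Ψ j y + Ψ j (-y)) (n : ℕ) :
    (transfer S w)^[n] (fun x => ∏ j, Φ j (x j)) 0 =
      (transfer S w)^[n] (fun x => ∏ j, Ψ j (x j)) 0 := by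
  rw [← iterate_transfer_prod_even hsym Φ n Finset.univ,
    ← iterate_transfer_prod_even hsym Ψ n Finset.univ]
  simp [h]

end Transfer

section Walks

variable {d : ℕ} (S : Finset (Fin d → ℤ)) (w : (Fin d → ℤ) → ℝ)

/-- Total weight of the walks of length `n` starting at `x` that never leave `ℕ^d`. -/
def walkWeightFrom (n : ℕ) (x : Fin d → ℤ) : ℝ :=
  ∑ f : Fin n → {i // i ∈ S},
    if ∀ m : ℕ, m ≤ n → ∀ j : Fin d,
        0 ≤ x j + ∑ k ∈ Finset.univ.filter (fun k : Fin n => (k : ℕ) < m), ((f k : Fin d → ℤ) j)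
    then ∏ k : Fin n, w (f k) else 0

lemma walkWeightFrom_zero_right (n : ℕ) : walkWeightFrom S w n 0 = walkWeight d S w n := by
  simp [walkWeightFrom, walkWeight]

lemma walkWeightFrom_of_not_nonneg (n : ℕ) {x : Fin d → ℤ} (hx : ¬ ∀ j, 0 ≤ x j) :
    walkWeightFrom S w n x = 0 := by
  refine Finset.sum_eq_zero fun f _ => if_neg fun h => hx fun j => ?_
  simpa using h 0 (Nat.zero_le n) j

lemma walkWeightFrom_zero {x : Fin d → ℤ} (hx : ∀ j, 0 ≤ x j) : walkWeightFrom S w 0 x = 1 := by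
  simp [walkWeightFrom, hx]

lemma sum_filter_lt_succ_cons {n : ℕ} (a : ℤ) (g : Fin n → ℤ) (m : ℕ) :
    ∑ k ∈ Finset.univ.filter (fun k : Fin (n + 1) => (k : ℕ) < m + 1),
        (Fin.cons a g : Fin (n + 1) → ℤ) k =
      a + ∑ k ∈ Finset.univ.filter (fun k : Fin n => (k : ℕ) < m), g k := by
  simp [Finset.sum_filter, Fin.sum_univ_succ]

lemma walkWeightFrom_succ (n : ℕ) {x : Fin d → ℤ} (hx : ∀ j, 0 ≤ x j) :
    walkWeightFrom S w (n + 1) x = transfer S w (walkWeightFrom S w n) x := by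
  rw [walkWeightFrom, ← (Fin.consEquiv fun _ : Fin (n + 1) => {i // i ∈ S}).sum_comp,
    Fintype.sum_prod_type, transfer, ← Finset.sum_coe_sort S]
  refine Finset.sum_congr rfl fun i _ => ?_
  rw [walkWeightFrom, Finset.mul_sum]
  refine Finset.sum_congr rfl fun g _ => ?_
  have hcons : ∀ (m : ℕ) (j : Fin d),
      ∑ k ∈ Finset.univ.filter (fun k : Fin (n + 1) => (k : ℕ) < m + 1),
        ((Fin.consEquiv (fun _ : Fin (n + 1) => {i // i ∈ S}) (i, g) k : Fin d → ℤ) j) =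
      i.1 j + ∑ k ∈ Finset.univ.filter (fun k : Fin n => (k : ℕ) < m), (g k).1 j := by
    intro m j
    rw [← sum_filter_lt_succ_cons]
    refine Finset.sum_congr rfl fun k _ => ?_
    refine Fin.cases ?_ (fun k => ?_) k <;> simp [Fin.consEquiv]
  have hiff : (∀ m : ℕ, m ≤ n + 1 → ∀ j : Fin d, 0 ≤ x j +
      ∑ k ∈ Finset.univ.filter (fun k : Fin (n + 1) => (k : ℕ) < m),
        ((Fin.consEquiv (fun _ : Fin (n + 1) => {i // i ∈ S}) (i, g) k : Fin d → ℤ) j)) ↔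
      ∀ m : ℕ, m ≤ n → ∀ j : Fin d, 0 ≤ (x + i.1) j +
        ∑ k ∈ Finset.univ.filter (fun k : Fin n => (k : ℕ) < m), (g k).1 j := by
    constructor
    · intro h m hm j
      have := h (m + 1) (by omega) j
      rwa [hcons, ← add_assoc] at this
    · rintro h (_ | m) hm j
      · simpa using hx j
      · rw [hcons, ← add_assoc]
        exact h m (by omega) j
  simp only [hiff, mul_ite, mul_zero]
  congr 1
  simp [Fin.prod_univ_succ, Fin.consEquiv]

variable {S w}

/-- The reflection principle: walks confined to `ℕ^d` are counted by unrestricted walks, signed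
according to the orthant with apex `(-1, …, -1)` in which they end. -/
lemma walkWeightFrom_eq_iterate_transfer (hstep : ∀ i ∈ S, ∀ j, -1 ≤ i j)
    (hsym : ∀ k, SymmetricAxis d S w k) (n : ℕ) {x : Fin d → ℤ} (hx : ∀ j, 0 ≤ x j) :
    walkWeightFrom S w n x =
      (transfer S w)^[n] (fun y => ∏ j, ((y j + 1).sign : ℝ)) x := by
  induction n generalizing x with
  | zero =>
    rw [walkWeightFrom_zero S w hx, Function.iterate_zero, id, Finset.prod_eq_one]
    intro j _
    rw [Int.sign_eq_one_of_pos (by have := hx j; omega), Int.cast_one]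
  | succ n ih =>
    rw [walkWeightFrom_succ S w n hx, Function.iterate_succ_apply']
    refine Finset.sum_congr rfl fun i hi => ?_
    by_cases h : ∀ j, 0 ≤ (x + i) j
    · rw [ih h]
    · rw [walkWeightFrom_of_not_nonneg S w n h]
      push Not at h
      obtain ⟨k, hk⟩ := h
      rw [iterate_transfer_eq_zero_of_odd (hsym k) _ n (x := x + i) (k := k)]
      · have := hx k
        have := hstep i hi k
        simp only [Pi.add_apply] at hk ⊢
        omega
      · funext y
        simp only [Function.comp_apply, Pi.smul_apply, smul_eq_mul]
        rw [← Finset.mul_prod_erase _ _ (Finset.mem_univ k),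
          ← Finset.mul_prod_erase _ (fun j => ((y j + 1).sign : ℝ)) (Finset.mem_univ k),
          ← mul_assoc]
        congr 1
        · rw [show reflectCoord k (-2) y k + 1 = -(y k + 1) by simp [reflectCoord]; ring,
            Int.sign_neg]
          simp
        · exact Finset.prod_congr rfl fun j hj => by
            simp [reflectCoord, Finset.ne_of_mem_erase hj]

end Walks

section Series

open MvPowerSeries

variable {d : ℕ}

/-- The exponent of the monomial `z^e t^m`. -/
def snocExponent (e : Fin d → ℕ) (m : ℕ) : Fin (d + 1) →₀ ℕ :=
  Finsupp.equivFunOnFinite.symm (Fin.snoc e m)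

@[simp]
lemma snocExponent_castSucc (e : Fin d → ℕ) (m : ℕ) (j : Fin d) :
    snocExponent e m (Fin.castSucc j) = e j := by
  simp [snocExponent]

@[simp]
lemma snocExponent_last (e : Fin d → ℕ) (m : ℕ) : snocExponent e m (Fin.last d) = m := by
  simp [snocExponent]

lemma finsupp_ext_castSucc_last {a b : Fin (d + 1) →₀ ℕ}
    (h : ∀ j : Fin d, a (Fin.castSucc j) = b (Fin.castSucc j))
    (hlast : a (Fin.last d) = b (Fin.last d)) : a = b :=
  Finsupp.ext fun j => Fin.lastCases hlast h j

lemma prod_X_pow_eq_monomial (e : Fin d → ℕ) :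
    ∏ j : Fin d, (X (Fin.castSucc j) : MvPowerSeries (Fin (d + 1)) ℝ) ^ e j =
      monomial (snocExponent e 0) 1 := by
  have h := MvPowerSeries.monomial_one_eq (R := ℝ) (snocExponent e 0)
  rw [h, Finsupp.prod_fintype _ _ (by simp), Fin.prod_univ_castSucc]
  simp

lemma X_last_mul_zProdS (S : Finset (Fin d → ℤ)) (w : (Fin d → ℤ) → ℝ) :
    X (Fin.last d) * zProdS d S w =
      ∑ i ∈ S, monomial (snocExponent (fun j => (i j + 1).toNat) 1) (w i) := by
  rw [zProdS, Finset.mul_sum]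
  refine Finset.sum_congr rfl fun i _ => ?_
  rw [prod_X_pow_eq_monomial, X, ← monomial_zero_eq_C_apply, monomial_mul_monomial,
    monomial_mul_monomial]
  congr 1
  · congr 1
    refine finsupp_ext_castSucc_last (fun j => ?_) ?_
    · simp
    · simp
  · ring

lemma coeff_prod_one_add_X (e : Fin d → ℕ) (m : ℕ) :
    coeff (R := ℝ) (snocExponent e m) (∏ j : Fin d, (1 + X (Fin.castSucc j))) =
      if m = 0 then ∏ j, (if e j ≤ 1 then 1 else 0) else 0 := by
  have hmon (A : Finset (Fin d)) :
      ∏ j ∈ A, (X (Fin.castSucc j) : MvPowerSeries (Fin (d + 1)) ℝ) =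
        monomial (snocExponent (fun j => if j ∈ A then 1 else 0) 0) 1 := by
    rw [← prod_X_pow_eq_monomial]
    simp [Finset.prod_ite_mem, pow_ite]
  rw [Finset.prod_one_add, map_sum]
  simp only [hmon, coeff_monomial]
  by_cases h : m = 0 ∧ ∀ j, e j ≤ 1
  · obtain ⟨rfl, he⟩ := h
    rw [Finset.sum_eq_single (Finset.univ.filter fun j => e j = 1)]
    · simp only [he, if_true, Finset.prod_const_one]
      refine if_pos (finsupp_ext_castSucc_last (fun j => ?_) (by simp))
      have := he j
      simp
      split_ifs <;> omega
    · intro A _ hA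
      refine if_neg fun h => hA ?_
      ext j
      have := DFunLike.congr_fun h (Fin.castSucc j)
      simp only [snocExponent_castSucc] at this
      simp [this]
    · simp
  · rw [Finset.sum_eq_zero]
    · split_ifs with hm
      · have : ∃ j, ¬ e j ≤ 1 := by
          by_contra! hcon
          exact h ⟨hm, hcon⟩
        obtain ⟨j, hj⟩ := this
        exact (Finset.prod_eq_zero (Finset.mem_univ j) (if_neg hj)).symm
      · rfl
    · intro A _
      refine if_neg fun hA => h ⟨?_, fun j => ?_⟩
      · simpa using DFunLike.congr_fun hA (Fin.last d)
      · have := DFunLike.congr_fun hA (Fin.castSucc j)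
        simp only [snocExponent_castSucc] at this
        rw [this]
        split_ifs <;> omega

/-- The coefficient of `z^x t^m`, for an integer exponent `x`. -/
def intCoeff (R : MvPowerSeries (Fin (d + 1)) ℝ) (m : ℕ) (x : Fin d → ℤ) : ℝ :=
  if ∀ j, 0 ≤ x j then coeff (snocExponent (fun j => (x j).toNat) m) R else 0

lemma intCoeff_add (P R : MvPowerSeries (Fin (d + 1)) ℝ) (m : ℕ) (x : Fin d → ℤ) :
    intCoeff (P + R) m x = intCoeff P m x + intCoeff R m x := by
  unfold intCoeff
  split_ifs <;> simp

lemma intCoeff_zero_X_last_mul (S : Finset (Fin d → ℤ)) (w : (Fin d → ℤ) → ℝ)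
    (R : MvPowerSeries (Fin (d + 1)) ℝ) (x : Fin d → ℤ) :
    intCoeff (X (Fin.last d) * zProdS d S w * R) 0 x = 0 := by
  unfold intCoeff
  split_ifs
  · rw [X_last_mul_zProdS, Finset.sum_mul, map_sum]
    refine Finset.sum_eq_zero fun i _ => ?_
    rw [coeff_monomial_mul, if_neg]
    intro h
    simpa using h (Fin.last d)
  · rfl

lemma intCoeff_succ_X_last_mul {S : Finset (Fin d → ℤ)} (hstep : ∀ i ∈ S, ∀ j, -1 ≤ i j)
    (w : (Fin d → ℤ) → ℝ) (R : MvPowerSeries (Fin (d + 1)) ℝ) (m : ℕ) (x : Fin d → ℤ) :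
    intCoeff (X (Fin.last d) * zProdS d S w * R) (m + 1) x =
      ∑ i ∈ S, w i * intCoeff R m (x - i - 1) := by
  by_cases hx : ∀ j, 0 ≤ x j
  · rw [intCoeff, if_pos hx, X_last_mul_zProdS, Finset.sum_mul, map_sum]
    refine Finset.sum_congr rfl fun i hi => ?_
    have hi' := hstep i hi
    rw [coeff_monomial_mul, intCoeff]
    by_cases h : ∀ j, 0 ≤ (x - i - 1) j
    · have h' : ∀ j, 0 ≤ x j - i j - 1 := h
      rw [if_pos h, if_pos]
      · congr 2
        congr 1
        refine finsupp_ext_castSucc_last (fun j => ?_) ?_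
        · have := h' j
          have := hi' j
          simp
          omega
        · simp
      · intro j
        refine Fin.lastCases ?_ (fun j => ?_) j
        · simp
        · have := h' j
          have := hi' j
          simp only [snocExponent_castSucc]
          omega
    · rw [if_neg h, if_neg, mul_zero]
      intro hle
      refine h fun j => ?_
      have h₁ := hle (Fin.castSucc j)
      have h₂ := hi' j
      have h₃ := hx j
      simp only [snocExponent_castSucc] at h₁
      simp only [Pi.sub_apply, Pi.one_apply]
      omega
  · rw [intCoeff, if_neg hx, eq_comm]
    refine Finset.sum_eq_zero fun i hi => ?_
    rw [intCoeff, if_neg, mul_zero]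
    refine fun h => hx fun j => ?_
    have h₁ := h j
    have h₂ := hstep i hi j
    simp only [Pi.sub_apply, Pi.one_apply] at h₁
    omega

lemma intCoeff_prod_one_add_X (m : ℕ) (x : Fin d → ℤ) :
    intCoeff (∏ j : Fin d, (1 + X (Fin.castSucc j))) m x =
      if m = 0 then ∏ j, (if x j = 0 ∨ x j = 1 then 1 else 0) else 0 := by
  rw [intCoeff, coeff_prod_one_add_X]
  split_ifs with hx hm hm
  · refine Finset.prod_congr rfl fun j _ => ?_
    have := hx j
    congr 1
    rw [eq_iff_iff]
    omega
  · rfl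
  · push Not at hx
    obtain ⟨j, hj⟩ := hx
    exact (Finset.prod_eq_zero (Finset.mem_univ j) (if_neg (by omega))).symm
  · rfl

/-- Coefficients of `(1 + z_1) ⋯ (1 + z_d) / (1 - t (z_1 ⋯ z_d) S(z))` as iterated transfers. -/
lemma intCoeff_diagonal_series {S : Finset (Fin d → ℤ)} (hstep : ∀ i ∈ S, ∀ j, -1 ≤ i j)
    (w : (Fin d → ℤ) → ℝ) (m : ℕ) (x : Fin d → ℤ) :
    intCoeff ((∏ j : Fin d, (1 + X (Fin.castSucc j))) *
        (1 - X (Fin.last d) * zProdS d S w)⁻¹) m x =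
      (transfer S w)^[m] (fun y => ∏ j, (if y j = 0 ∨ y j = -1 then 1 else 0))
        (fun j => m - x j) := by
  set P : MvPowerSeries (Fin (d + 1)) ℝ := ∏ j : Fin d, (1 + X (Fin.castSucc j)) with hP
  set T : MvPowerSeries (Fin (d + 1)) ℝ := X (Fin.last d) * zProdS d S w with hT
  have hunit : (1 - T) * (1 - T)⁻¹ = 1 :=
    MvPowerSeries.mul_inv_cancel _ (by simp [hT])
  have hrec : P * (1 - T)⁻¹ = P + T * (P * (1 - T)⁻¹) := by
    linear_combination P * hunit
  induction m generalizing x with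
  | zero =>
    rw [hrec, intCoeff_add, hT, intCoeff_zero_X_last_mul, hP, intCoeff_prod_one_add_X]
    simp only [if_true, add_zero, Function.iterate_zero, id]
    refine Finset.prod_congr rfl fun j _ => ?_
    congr 1
    rw [eq_iff_iff]
    omega
  | succ m ih =>
    rw [hrec, intCoeff_add, intCoeff_succ_X_last_mul hstep, hP, intCoeff_prod_one_add_X, ← hP,
      if_neg m.succ_ne_zero, zero_add, Function.iterate_succ_apply']
    refine Finset.sum_congr rfl fun i _ => ?_
    rw [ih]
    refine congrArg (w i * ·) (congrArg _ (funext fun j => ?_))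
    simp
    ring

end Series

/-- Diagonal representation for highly symmetric models: `s_n` is the coefficient of
`z_1^n ⋯ z_d^n t^n` in the power series expansion of
`(1+z_1)⋯(1+z_d) / (1 - t (z_1⋯z_d) S(z))`. -/
theorem highly_symmetric_diagonal
    (d : ℕ) (hd : 1 ≤ d) (S : Finset (Fin d → ℤ)) (w : (Fin d → ℤ) → ℝ)
    (hstep : ∀ i ∈ S, (∀ j, i j = -1 ∨ i j = 0 ∨ i j = 1) ∧ i ≠ 0)
    (hw : ∀ i ∈ S, 0 < w i)
    (hsym : ∀ k : Fin d, SymmetricAxis d S w k)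
    (hfwd : ∀ k : Fin d, ∃ i ∈ S, i k = 1)
    (hbwd : ∀ k : Fin d, ∃ i ∈ S, i k = -1)
    (n : ℕ) :
    walkWeight d S w n =
      MvPowerSeries.coeff (R := ℝ) (Finsupp.equivFunOnFinite.symm fun _ : Fin (d + 1) => n)
        ((∏ j : Fin d, (1 + MvPowerSeries.X (Fin.castSucc j))) *
          (1 - MvPowerSeries.X (Fin.last d) * zProdS d S w)⁻¹) := by
  have hge : ∀ i ∈ S, ∀ j, -1 ≤ i j := fun i hi j => by
    have := (hstep i hi).1 j
    omega
  have hexp : (Finsupp.equivFunOnFinite.symm fun _ : Fin (d + 1) => n) =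
      snocExponent (fun _ => n) n :=
    finsupp_ext_castSucc_last (fun j => by simp) (by simp)
  have hcoeff := intCoeff_diagonal_series hge w n (fun _ => (n : ℤ))
  rw [intCoeff, if_pos fun _ => Int.natCast_nonneg n] at hcoeff
  simp only [Int.toNat_natCast, sub_self] at hcoeff
  rw [hexp, hcoeff, ← walkWeightFrom_zero_right,
    walkWeightFrom_eq_iterate_transfer hge hsym n (x := 0) fun _ => le_rfl]
  refine iterate_transfer_prod_congr hsym (Φ := fun _ y => ((y + 1).sign : ℝ))
    (Ψ := fun _ y => if y = 0 ∨ y = -1 then 1 else 0) (fun _ y => ?_) n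
  obtain h | rfl | rfl | rfl | h : y ≤ -2 ∨ y = -1 ∨ y = 0 ∨ y = 1 ∨ 2 ≤ y := by omega
  · rw [Int.sign_eq_neg_one_of_neg (by omega), Int.sign_eq_one_of_pos (by omega),
      if_neg (by omega), if_neg (by omega)]
    simp
  · simp
  · norm_num
  · simp
  · rw [Int.sign_eq_one_of_pos (by omega), Int.sign_eq_neg_one_of_neg (by omega),
      if_neg (by omega), if_neg (by omega)]
    simp

end
end

section
/- Let S ⊆ {-1,0,1}^d \ {0} be a mostly symmetric step set (symmetric over all but the d-th axis) with positive weights, taking a step forwards and backwards in each coordinate. Then for every n ≥ 0, s_n equals the coefficient of z_1^n ··· z_d^n t^n in the power series expansion (around the origin) of G(z,t)/H(z,t), where G(z,t) = (1+z_1)···(1+z_{d-1}) · (1 - t z_1···z_d (Q(ẑ) + 2 z_d A(ẑ))) and H(z,t) = (1 - z_d) · (1 - t z_1···z_d S̄(z)) · (1 - t z_1···z_d (Q(ẑ) + z_d A(ẑ))), with S̄(z) = S(z_1,…,z_{d-1}, 1/z_d). -/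
open Finset Filter
open scoped Classical

noncomputable section

/-- The monomial `z_1^{i_1+1}⋯z_d^{i_{d-1}+1}·z_{last}^{1-i_{last}}` corresponding to a
step `i`, as a power series in the variables `z_1,…,z_{d+1},t` of `Fin (d+2)`
(`z_j = X (Fin.castSucc j)` and `t = X (Fin.last (d+1))`). -/
def stepMonomial (d : ℕ) (i : Fin (d + 1) → ℤ) : MvPowerSeries (Fin (d + 2)) ℝ :=
  ∏ j : Fin (d + 1), MvPowerSeries.X (Fin.castSucc j) ^
    (if j = Fin.last d then (1 - i j).toNat else (i j + 1).toNat)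

/-- The polynomial `(z_1⋯z_d)·S̄(z)` where `S̄(z) = S(z_1,…,z_{d-1},1/z_d)`. -/
def zProdSbar (d : ℕ) (S : Finset (Fin (d + 1) → ℤ)) (w : (Fin (d + 1) → ℤ) → ℝ) :
    MvPowerSeries (Fin (d + 2)) ℝ :=
  ∑ i ∈ S, MvPowerSeries.C (σ := Fin (d + 2)) (R := ℝ) (w i) * stepMonomial d i

/-- The polynomial `(z_1⋯z_d)·(Q(ẑ) + z_d A(ẑ))`. -/
def zProdQA (d : ℕ) (S : Finset (Fin (d + 1) → ℤ)) (w : (Fin (d + 1) → ℤ) → ℝ) :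
    MvPowerSeries (Fin (d + 2)) ℝ :=
  ∑ i ∈ S.filter fun i => i (Fin.last d) ≤ 0,
    MvPowerSeries.C (σ := Fin (d + 2)) (R := ℝ) (w i) * stepMonomial d i

/-- The polynomial `(z_1⋯z_d)·(Q(ẑ) + 2 z_d A(ẑ))`. -/
def zProdQ2A (d : ℕ) (S : Finset (Fin (d + 1) → ℤ)) (w : (Fin (d + 1) → ℤ) → ℝ) :
    MvPowerSeries (Fin (d + 2)) ℝ :=
  ∑ i ∈ S.filter fun i => i (Fin.last d) ≤ 0,
    MvPowerSeries.C (σ := Fin (d + 2)) (R := ℝ) ((if i (Fin.last d) = -1 then 2 else 1) * w i) *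
      stepMonomial d i

section LaurentPolynomials

variable {ι : Type*}

/-- The Laurent polynomial `∑ i ∈ T, w i • z ^ i` of a weighted step set `T`. -/
def stepPoly (T : Finset (ι → ℤ)) (w : (ι → ℤ) → ℝ) : AddMonoidAlgebra ℝ (ι → ℤ) :=
  ∑ i ∈ T, AddMonoidAlgebra.single i (w i)

lemma coeff_stepPoly_mul (T : Finset (ι → ℤ)) (w : (ι → ℤ) → ℝ)
    (f : AddMonoidAlgebra ℝ (ι → ℤ)) (x : ι → ℤ) :
    (stepPoly T w * f).coeff x = ∑ i ∈ T, w i * f.coeff (x - i) := by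
  simp [stepPoly, Finset.sum_mul, Finsupp.finsetSum_apply, neg_add_eq_sub]

lemma coeff_stepPoly_mul_congr {T : Finset (ι → ℤ)} {w : (ι → ℤ) → ℝ}
    {f g : AddMonoidAlgebra ℝ (ι → ℤ)} {x : ι → ℤ}
    (h : ∀ i ∈ T, f.coeff (x - i) = g.coeff (x - i)) :
    (stepPoly T w * f).coeff x = (stepPoly T w * g).coeff x := by
  rw [coeff_stepPoly_mul, coeff_stepPoly_mul]
  exact Finset.sum_congr rfl fun i hi => by rw [h i hi]

lemma coeff_stepPoly_mul_eq_zero {T : Finset (ι → ℤ)} {w : (ι → ℤ) → ℝ}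
    {f : AddMonoidAlgebra ℝ (ι → ℤ)} {x : ι → ℤ} (h : ∀ i ∈ T, f.coeff (x - i) = 0) :
    (stepPoly T w * f).coeff x = 0 := by
  rw [coeff_stepPoly_mul]
  exact Finset.sum_eq_zero fun i hi => by rw [h i hi, mul_zero]

lemma stepPoly_ne_zero {T : Finset (ι → ℤ)} {w : (ι → ℤ) → ℝ} {i : ι → ℤ} (hi : i ∈ T)
    (hw : w i ≠ 0) : stepPoly T w ≠ 0 := by
  intro h
  have := congrArg (fun f => f.coeff i) h
  simp [stepPoly, Finsupp.finsetSum_apply, Finsupp.single_apply, hi, hw] at this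

/-- Euler's identity for the powers of a step polynomial. -/
lemma mul_coeff_stepPoly_pow (T : Finset (ι → ℤ)) (w : (ι → ℤ) → ℝ) (l : ι) (n : ℕ)
    (x : ι → ℤ) :
    (x l : ℝ) * (stepPoly T w ^ (n + 1)).coeff x =
      (n + 1) * (stepPoly T (fun i => i l * w i) * stepPoly T w ^ n).coeff x := by
  have leibniz (f : AddMonoidAlgebra ℝ (ι → ℤ)) (x : ι → ℤ) :
      (x l : ℝ) * (stepPoly T w * f).coeff x =
        (stepPoly T (fun i => i l * w i) * f).coeff x +
          ∑ i ∈ T, w i * (((x - i) l : ℤ) * f.coeff (x - i)) := by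
    rw [coeff_stepPoly_mul, coeff_stepPoly_mul, Finset.mul_sum, ← Finset.sum_add_distrib]
    refine Finset.sum_congr rfl fun i _ => ?_
    push_cast [Pi.sub_apply]
    ring
  induction n generalizing x with
  | zero =>
    rw [zero_add, pow_one, ← mul_one (stepPoly T w), leibniz, mul_one, Finset.sum_eq_zero]
    · simp
    · intro i _
      rw [AddMonoidAlgebra.one_def, AddMonoidAlgebra.coeff_single, Finsupp.single_apply]
      split_ifs with h
      · simp [sub_eq_zero.1 h.symm]
      · simp
  | succ n ih =>
    rw [pow_succ', leibniz]
    simp_rw [ih]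
    have : ∑ i ∈ T, w i * (((n : ℝ) + 1) *
        (stepPoly T (fun i => i l * w i) * stepPoly T w ^ n).coeff (x - i)) =
        (n + 1) * (stepPoly T (fun i => i l * w i) * stepPoly T w ^ (n + 1)).coeff x := by
      rw [pow_succ', mul_left_comm, coeff_stepPoly_mul, Finset.mul_sum]
      exact Finset.sum_congr rfl fun i _ => by ring
    rw [this]
    push_cast
    ring

lemma coeff_stepPoly_pow_eq_zero {T : Finset (ι → ℤ)} (w : (ι → ℤ) → ℝ) {l : ι}
    (hT : ∀ i ∈ T, i l ≤ 0) (n : ℕ) {x : ι → ℤ} (hx : 0 < x l) :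
    (stepPoly T w ^ n).coeff x = 0 := by
  induction n generalizing x with
  | zero =>
    rw [pow_zero, AddMonoidAlgebra.one_def, AddMonoidAlgebra.coeff_single,
      Finsupp.single_eq_of_ne]
    rintro rfl
    simp at hx
  | succ n ih =>
    rw [pow_succ']
    refine coeff_stepPoly_mul_eq_zero fun i hi => ih ?_
    have := hT i hi
    simp only [Pi.sub_apply]
    omega

/-- The sequence solving `φ (n + 1) = s * φ n - a * m ^ n` with `φ 0 = 1`. -/
def kernelSeq {R : Type*} [CommRing R] (s a m : R) : ℕ → R
  | 0 => 1
  | n + 1 => s * kernelSeq s a m n - a * m ^ n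

lemma mul_kernelSeq {R : Type*} [CommRing R] (b a m : R) (n : ℕ) :
    b * kernelSeq (b + m) a m n = (b - a) * (b + m) ^ n + a * m ^ n := by
  induction n with
  | zero => simp [kernelSeq]
  | succ n ih =>
    rw [kernelSeq, mul_sub, mul_left_comm, ih]
    ring

lemma map_kernelSeq {R : Type*} [CommRing R] (g : R →+* R) {s a m : R} (hs : g s = s)
    (ha : g a = a) (hm : g m = m) (n : ℕ) :
    g (kernelSeq s a m n) = kernelSeq s a m n := by
  induction n with
  | zero => simp [kernelSeq]
  | succ n ih => simp [kernelSeq, hs, ha, hm, ih]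

/-- The Laurent polynomials `[t ^ n] (1 - t (Q + 2 A)) / ((1 - t S) (1 - t (Q + A)))`, where `Q`
and `A` collect the steps of `S` whose `l`-th coordinate is `0` and `-1`. -/
def halfSpacePoly (S : Finset (ι → ℤ)) (w : (ι → ℤ) → ℝ) (l : ι) (n : ℕ) :
    AddMonoidAlgebra ℝ (ι → ℤ) :=
  kernelSeq (stepPoly S w) (stepPoly (S.filter fun i => i l = -1) w)
    (stepPoly (S.filter fun i => i l ≤ 0) w) n

lemma coeff_halfSpacePoly_eq_zero {S : Finset (ι → ℤ)} {w : (ι → ℤ) → ℝ} {l : ι}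
    (hS : ∀ i ∈ S, i l = -1 ∨ i l = 0 ∨ i l = 1) (hw : ∀ i ∈ S, 0 < w i)
    (hup : ∃ i ∈ S, i l = 1) (n : ℕ) {x : ι → ℤ} (hx : x l = -1) :
    (halfSpacePoly S w l n).coeff x = 0 := by
  set a := stepPoly (S.filter fun i => i l = -1) w with ha
  set m := stepPoly (S.filter fun i => i l ≤ 0) w with hm
  set b := stepPoly (S.filter fun i => ¬ i l ≤ 0) w with hb
  have hs : stepPoly S w = b + m := by
    rw [hb, hm, add_comm]
    exact (Finset.sum_filter_add_sum_filter_not S (fun i => i l ≤ 0) _).symm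
  have hba : stepPoly S (fun i => i l * w i) = b - a := by
    rw [hb, ha, stepPoly, stepPoly, stepPoly, Finset.sum_filter, Finset.sum_filter,
      ← Finset.sum_sub_distrib]
    refine Finset.sum_congr rfl fun i hi => ?_
    rcases hS i hi with h | h | h <;> simp [h]
  have hb_ne : b ≠ 0 := by
    obtain ⟨i, hi, h⟩ := hup
    exact stepPoly_ne_zero (i := i) (by simp [hi, h]) (hw i hi).ne'
  have hvan (y : ι → ℤ) (hy : y l = 0) : (b * halfSpacePoly S w l n).coeff y = 0 := by
    rw [halfSpacePoly, hs, mul_kernelSeq, ← hba, ← hs, AddMonoidAlgebra.coeff_add,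
      Finsupp.add_apply]
    have h1 := mul_coeff_stepPoly_pow S w l n y
    rw [hy, Int.cast_zero, zero_mul, zero_eq_mul] at h1
    rw [h1.resolve_left (by positivity), zero_add]
    refine coeff_stepPoly_mul_eq_zero fun i hi => ?_
    refine coeff_stepPoly_pow_eq_zero w (l := l) (fun i hi => (Finset.mem_filter.1 hi).2) n ?_
    simp [hy, (Finset.mem_filter.1 hi).2]
  set g : AddMonoidAlgebra ℝ (ι → ℤ) :=
    .ofCoeff ((halfSpacePoly S w l n).coeff.filter fun y => y l = -1) with hg
  have hbg : b * g = 0 := by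
    ext y
    by_cases hy : y l = 0
    · rw [AddMonoidAlgebra.coeff_zero, Finsupp.zero_apply, ← hvan y hy]
      refine coeff_stepPoly_mul_congr fun i hi => ?_
      obtain ⟨hi, h⟩ := Finset.mem_filter.1 hi
      rw [hg, AddMonoidAlgebra.coeff_ofCoeff, Finsupp.filter_apply_pos]
      have := hS i hi
      simp only [Pi.sub_apply]
      omega
    · refine coeff_stepPoly_mul_eq_zero fun i hi => ?_
      obtain ⟨hi, h⟩ := Finset.mem_filter.1 hi
      rw [hg, AddMonoidAlgebra.coeff_ofCoeff, Finsupp.filter_apply_neg]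
      have := hS i hi
      simp only [Pi.sub_apply]
      omega
  have hg0 := (mul_eq_zero.1 hbg).resolve_left hb_ne
  have := congrArg (fun f => f.coeff x) hg0
  simpa [hg, hx] using this

/-- Negation of the `k`-th coordinate. -/
def flipCoord [DecidableEq ι] (k : ι) : (ι → ℤ) →+ (ι → ℤ) where
  toFun x := Function.update x k (-(x k))
  map_zero' := by ext j; by_cases h : j = k <;> simp [h]
  map_add' x y := by ext j; by_cases h : j = k <;> simp [h]; ring

variable [DecidableEq ι]

lemma flipCoord_apply (k : ι) (x : ι → ℤ) : flipCoord k x = Function.update x k (-(x k)) := rfl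

@[simp]
lemma flipCoord_flipCoord (k : ι) (x : ι → ℤ) : flipCoord k (flipCoord k x) = x := by
  simp [flipCoord_apply]

/-- The substitution of `1 / z_k` for `z_k`. -/
def invVar (k : ι) : AddMonoidAlgebra ℝ (ι → ℤ) →+* AddMonoidAlgebra ℝ (ι → ℤ) :=
  AddMonoidAlgebra.mapDomainRingHom ℝ (flipCoord k)

@[simp]
lemma invVar_single (k : ι) (x : ι → ℤ) (c : ℝ) :
    invVar k (AddMonoidAlgebra.single x c) = AddMonoidAlgebra.single (flipCoord k x) c := by
  simp [invVar]

lemma coeff_invVar (k : ι) (f : AddMonoidAlgebra ℝ (ι → ℤ)) (x : ι → ℤ) :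
    (invVar k f).coeff x = f.coeff (flipCoord k x) := by
  induction f using AddMonoidAlgebra.induction_linear with
  | zero => simp
  | add f g hf hg => simp [hf, hg]
  | single y c =>
    rw [invVar_single, AddMonoidAlgebra.coeff_single, AddMonoidAlgebra.coeff_single,
      Finsupp.single_apply, Finsupp.single_apply]
    refine if_congr ⟨?_, ?_⟩ rfl rfl
    · rintro rfl; simp
    · rintro rfl; simp

lemma invVar_stepPoly {T : Finset (ι → ℤ)} {w : (ι → ℤ) → ℝ} {k : ι}
    (h : ∀ i ∈ T, flipCoord k i ∈ T ∧ w (flipCoord k i) = w i) :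
    invVar k (stepPoly T w) = stepPoly T w := by
  rw [stepPoly, map_sum]
  refine Finset.sum_nbij' (flipCoord k) (flipCoord k) (fun i hi => (h i hi).1)
    (fun i hi => (h i hi).1) (by simp) (by simp) fun i hi => ?_
  rw [invVar_single, (h i hi).2]

lemma invVar_halfSpacePoly {S : Finset (ι → ℤ)} {w : (ι → ℤ) → ℝ} {k l : ι} (hkl : l ≠ k)
    (h : ∀ i ∈ S, flipCoord k i ∈ S ∧ w (flipCoord k i) = w i) (n : ℕ) :
    invVar k (halfSpacePoly S w l n) = halfSpacePoly S w l n := by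
  have hl (i : ι → ℤ) : flipCoord k i l = i l := by simp [flipCoord_apply, hkl]
  refine map_kernelSeq _ (invVar_stepPoly h) (invVar_stepPoly fun i hi => ?_)
    (invVar_stepPoly fun i hi => ?_) n
  all_goals
    rw [Finset.mem_filter] at hi ⊢
    exact ⟨⟨(h i hi.1).1, by rw [hl]; exact hi.2⟩, (h i hi.1).2⟩

/-- The Laurent monomial `z_k ^ c`. -/
def varPow (k : ι) (c : ℤ) : AddMonoidAlgebra ℝ (ι → ℤ) :=
  AddMonoidAlgebra.single (Pi.single k c) 1

lemma coeff_varPow_mul (k : ι) (c : ℤ) (f : AddMonoidAlgebra ℝ (ι → ℤ)) (x : ι → ℤ) :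
    (varPow k c * f).coeff x = f.coeff (x - Pi.single k c) := by
  simp [varPow, neg_add_eq_sub]

lemma varPow_mul_varPow (k : ι) (c c' : ℤ) : varPow k c * varPow k c' = varPow k (c + c') := by
  simp [varPow, AddMonoidAlgebra.single_mul_single, Pi.single_add]

@[simp]
lemma varPow_zero (k : ι) : varPow k 0 = 1 := by
  simp [varPow, AddMonoidAlgebra.one_def]

lemma invVar_varPow_self (k : ι) (c : ℤ) : invVar k (varPow k c) = varPow k (-c) := by
  rw [varPow, invVar_single, varPow, flipCoord_apply]
  congr 1
  ext j
  by_cases h : j = k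
  · subst h; simp
  · simp [h]

lemma invVar_varPow_of_ne {j k : ι} (h : j ≠ k) (c : ℤ) : invVar k (varPow j c) = varPow j c := by
  rw [varPow, invVar_single, flipCoord_apply]
  congr 1
  simp [h.symm]

end LaurentPolynomials

section OrthantSums

variable {ι : Type*}

/-- The sum of the coefficients of a Laurent polynomial over the points of the nonnegative orthant
whose coordinates in `s` vanish. -/
def orthantSum (s : Finset ι) : AddMonoidAlgebra ℝ (ι → ℤ) →+ ℝ :=
  (Finsupp.liftAddHom fun x : ι → ℤ =>
    if 0 ≤ x ∧ ∀ k ∈ s, x k = 0 then AddMonoidHom.id ℝ else 0).comp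
      AddMonoidAlgebra.coeffAddEquiv.toAddMonoidHom

lemma orthantSum_eq_sum (s : Finset ι) (f : AddMonoidAlgebra ℝ (ι → ℤ)) :
    orthantSum s f = f.coeff.sum fun x c => if 0 ≤ x ∧ ∀ k ∈ s, x k = 0 then c else 0 := by
  rw [orthantSum, AddMonoidHom.comp_apply, Finsupp.liftAddHom_apply]
  refine Finsupp.sum_congr fun x _ => ?_
  split_ifs <;> rfl

lemma orthantSum_single (s : Finset ι) (x : ι → ℤ) (c : ℝ) :
    orthantSum s (AddMonoidAlgebra.single x c) =
      if 0 ≤ x ∧ ∀ k ∈ s, x k = 0 then c else 0 := by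
  rw [orthantSum_eq_sum, AddMonoidAlgebra.coeff_single, Finsupp.sum_single_index (by simp)]

lemma orthantSum_congr {s : Finset ι} {f g : AddMonoidAlgebra ℝ (ι → ℤ)}
    (h : ∀ x : ι → ℤ, 0 ≤ x → f.coeff x = g.coeff x) : orthantSum s f = orthantSum s g := by
  rw [← sub_eq_zero, ← map_sub, orthantSum_eq_sum]
  refine Finset.sum_eq_zero fun x _ => ?_
  beta_reduce
  split_ifs with hx
  · simp [h x hx.1]
  · rfl

variable [DecidableEq ι]

lemma orthantSum_one_sub_varPow_mul {s : Finset ι} {k : ι} (hk : k ∉ s)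
    (f : AddMonoidAlgebra ℝ (ι → ℤ)) :
    orthantSum s ((1 - varPow k (-1)) * f) = orthantSum (insert k s) f := by
  induction f using AddMonoidAlgebra.induction_linear with
  | zero => simp
  | add f g hf hg => simp [mul_add, hf, hg]
  | single x c =>
    rw [sub_mul, one_mul, varPow, AddMonoidAlgebra.single_mul_single, one_mul, map_sub,
      orthantSum_single, orthantSum_single, orthantSum_single]
    set y := (Pi.single k (-1) : ι → ℤ) + x with hy
    have hyk : y k = x k - 1 := by simp [hy]; ring
    have hyj (j : ι) (hj : j ≠ k) : y j = x j := by simp [hy, hj]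
    have hs : (∀ j ∈ s, y j = 0) ↔ ∀ j ∈ s, x j = 0 :=
      forall₂_congr fun j hj => by rw [hyj j (ne_of_mem_of_not_mem hj hk)]
    have hnonneg : 0 ≤ y ↔ 0 ≤ x ∧ 1 ≤ x k := by
      constructor
      · intro h
        have hk' : 0 ≤ y k := h k
        refine ⟨fun j => ?_, by omega⟩
        by_cases hj : j = k
        · subst hj
          simp only [Pi.zero_apply]
          omega
        · rw [← hyj j hj]
          exact h j
      · rintro ⟨h, h1⟩ j
        by_cases hj : j = k
        · subst hj
          simp only [Pi.zero_apply]
          omega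
        · rw [hyj j hj]
          exact h j
    simp only [hs, hnonneg, Finset.forall_mem_insert]
    by_cases h0 : 0 ≤ x
    · have hxk : 0 ≤ x k := h0 k
      by_cases h1 : x k = 0
      · simp [h0, h1]
      · have : 1 ≤ x k := by omega
        simp [h0, h1, this]
    · simp [h0]

lemma orthantSum_prod_one_sub_varPow_mul (s : Finset ι) (f : AddMonoidAlgebra ℝ (ι → ℤ)) :
    orthantSum ∅ ((∏ k ∈ s, (1 - varPow k (-1))) * f) = orthantSum s f := by
  induction s using Finset.induction_on generalizing f with
  | empty => simp
  | insert k s hk ih =>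
    rw [Finset.prod_insert hk, mul_assoc, mul_left_comm, ih, orthantSum_one_sub_varPow_mul hk]

lemma orthantSum_invVar {s : Finset ι} {k : ι} (hk : k ∈ s) (f : AddMonoidAlgebra ℝ (ι → ℤ)) :
    orthantSum s (invVar k f) = orthantSum s f := by
  have key (x : ι → ℤ) (hx : 0 ≤ x ∧ ∀ j ∈ s, x j = 0) : flipCoord k x = x := by
    simp [flipCoord_apply, hx.2 k hk]
  induction f using AddMonoidAlgebra.induction_linear with
  | zero => simp
  | add f g hf hg => simp [hf, hg]
  | single x c =>
    rw [invVar_single, orthantSum_single, orthantSum_single]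
    refine if_congr ⟨fun h => ?_, fun h => ?_⟩ rfl rfl
    · have := key _ h
      rw [flipCoord_flipCoord] at this
      rwa [← this] at h
    · rwa [key x h]

lemma orthantSum_prod_one_add_varPow_mul {s r : Finset ι} (hr : r ⊆ s)
    {f : AddMonoidAlgebra ℝ (ι → ℤ)} (hf : ∀ k ∈ r, invVar k f = f) :
    orthantSum s ((∏ k ∈ r, (1 + varPow k (-1))) * f) =
      orthantSum s ((∏ k ∈ r, (1 + varPow k 1)) * f) := by
  induction r using Finset.induction_on generalizing f with
  | empty => simp
  | insert k r hk ih =>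
    rw [Finset.insert_subset_iff] at hr
    have hne (j : ι) (hj : j ∈ r) : j ≠ k := ne_of_mem_of_not_mem hj hk
    rw [Finset.prod_insert hk, Finset.prod_insert hk, mul_assoc, mul_left_comm, ih hr.2,
      ← orthantSum_invVar hr.1]
    · simp only [map_mul, map_add, map_one, map_prod, invVar_varPow_self, neg_neg,
        hf k (Finset.mem_insert_self k r)]
      rw [Finset.prod_congr rfl fun j hj => by rw [invVar_varPow_of_ne (hne j hj)]]
      congr 1
      ring
    · intro j hj
      rw [map_mul, hf j (Finset.mem_insert_of_mem hj), map_add, map_one,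
        invVar_varPow_of_ne (hne j hj).symm]

/-- The antisymmetrization of a Laurent polynomial in the variables `z_k`, `k ∈ s`. -/
def antisymmetrize (s : Finset ι) (f : AddMonoidAlgebra ℝ (ι → ℤ)) : AddMonoidAlgebra ℝ (ι → ℤ) :=
  (∏ k ∈ s, (1 - varPow k (-2))) * f

lemma coeff_antisymmetrize_eq_zero {s : Finset ι} {f : AddMonoidAlgebra ℝ (ι → ℤ)}
    {k : ι} (hk : k ∈ s) (hf : invVar k f = f) {x : ι → ℤ} (hx : x k = -1) : (antisymmetrize s f).coeff x = 0 := by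
  have hinv : invVar k (antisymmetrize s f) = - (varPow k 2 * antisymmetrize s f) := by
    have h2 : (1 : AddMonoidAlgebra ℝ (ι → ℤ)) - varPow k 2 =
        - (varPow k 2 * (1 - varPow k (-2))) := by
      rw [mul_sub, varPow_mul_varPow]
      simp
    rw [antisymmetrize, ← Finset.mul_prod_erase s _ hk]
    simp only [map_mul, map_sub, map_one, map_prod, invVar_varPow_self, hf, neg_neg]
    rw [h2, Finset.prod_congr rfl fun j hj => by
      rw [invVar_varPow_of_ne (Finset.ne_of_mem_erase hj)]]
    ring
  have h := congrArg (fun g => g.coeff (flipCoord k x)) hinv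
  have hx' : flipCoord k x - Pi.single k 2 = x := by
    ext j
    by_cases hj : j = k
    · subst hj
      simp [flipCoord_apply, hx]
    · simp [flipCoord_apply, hj]
  simp only [coeff_invVar, flipCoord_flipCoord, AddMonoidAlgebra.coeff_neg, Finsupp.neg_apply,
    coeff_varPow_mul, hx'] at h
  linarith

lemma coeff_antisymmetrize_congr (s : Finset ι) {l : ι} (hl : l ∉ s)
    {f g : AddMonoidAlgebra ℝ (ι → ℤ)} {c : ℤ}
    (h : ∀ x : ι → ℤ, x l = c → f.coeff x = g.coeff x) {x : ι → ℤ} (hx : x l = c) :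
    (antisymmetrize s f).coeff x = (antisymmetrize s g).coeff x := by
  unfold antisymmetrize
  induction s using Finset.induction_on generalizing x with
  | empty => simpa using h x hx
  | insert k s hk ih =>
    rw [Finset.mem_insert, not_or] at hl
    rw [Finset.prod_insert hk, mul_assoc, mul_assoc, sub_mul, sub_mul, one_mul, one_mul]
    simp only [AddMonoidAlgebra.coeff_sub, Finsupp.sub_apply, coeff_varPow_mul]
    rw [ih hl.2 hx, ih hl.2 (by simp [hl.1, hx])]

lemma coeff_antisymmetrize_one (s : Finset ι) {x : ι → ℤ} (hx : 0 ≤ x) :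
    (antisymmetrize s 1).coeff x = (1 : AddMonoidAlgebra ℝ (ι → ℤ)).coeff x := by
  unfold antisymmetrize
  rw [mul_one]
  induction s using Finset.induction_on generalizing x with
  | empty => simp
  | insert k s hk ih =>
    rw [Finset.prod_insert hk, sub_mul, one_mul]
    have hxk : 0 ≤ x k := hx k
    have hx' : 0 ≤ x - Pi.single k (-2) := by
      intro j
      by_cases hj : j = k
      · subst hj
        simp only [Pi.zero_apply, Pi.sub_apply, Pi.single_eq_same]
        omega
      · simpa [hj] using hx j
    simp only [AddMonoidAlgebra.coeff_sub, Finsupp.sub_apply, coeff_varPow_mul]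
    rw [ih hx, ih hx', AddMonoidAlgebra.one_def, AddMonoidAlgebra.coeff_single,
      Finsupp.single_eq_of_ne (a' := x - Pi.single k (-2)), sub_zero]
    intro h0
    have := congrFun h0 k
    simp only [Pi.zero_apply, Pi.sub_apply, Pi.single_eq_same] at this
    omega

lemma orthantSum_antisymmetrize (s : Finset ι) {f : AddMonoidAlgebra ℝ (ι → ℤ)}
    (hf : ∀ k ∈ s, invVar k f = f) :
    orthantSum ∅ (antisymmetrize s f) = orthantSum s ((∏ k ∈ s, (1 + varPow k 1)) * f) := by
  have hfactor (k : ι) : (1 : AddMonoidAlgebra ℝ (ι → ℤ)) - varPow k (-2) =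
      (1 - varPow k (-1)) * (1 + varPow k (-1)) := by
    have : varPow k (-2) = varPow k (-1) * varPow k (-1) := by
      rw [varPow_mul_varPow]
      rfl
    rw [this]
    ring
  rw [antisymmetrize, Finset.prod_congr rfl fun k _ => hfactor k, Finset.prod_mul_distrib,
    mul_assoc, orthantSum_prod_one_sub_varPow_mul, orthantSum_prod_one_add_varPow_mul subset_rfl hf]

end OrthantSums

section Walks

variable {d : ℕ}

/-- The walk with steps `f` stays in the nonnegative orthant. -/
def StaysInOrthant {n : ℕ} (f : Fin n → Fin d → ℤ) : Prop :=
  ∀ m : ℕ, m ≤ n → ∀ j : Fin d,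
    0 ≤ ∑ k ∈ Finset.univ.filter (fun k : Fin n => (k : ℕ) < m), f k j

lemma StaysInOrthant.sum_nonneg {n : ℕ} {f : Fin n → Fin d → ℤ} (h : StaysInOrthant f) :
    0 ≤ ∑ k, f k := by
  intro j
  have := h n le_rfl j
  rwa [Finset.filter_true_of_mem fun k _ => k.isLt, ← Finset.sum_apply] at this

lemma staysInOrthant_snoc {n : ℕ} (f : Fin n → Fin d → ℤ) (i : Fin d → ℤ) :
    StaysInOrthant (Fin.snoc f i : Fin (n + 1) → Fin d → ℤ) ↔
      StaysInOrthant f ∧ 0 ≤ ∑ k, f k + i := by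
  have hle (m : ℕ) (hm : m ≤ n) (j : Fin d) :
      ∑ k ∈ Finset.univ.filter (fun k : Fin (n + 1) => (k : ℕ) < m),
        (Fin.snoc f i : Fin (n + 1) → Fin d → ℤ) k j =
      ∑ k ∈ Finset.univ.filter (fun k : Fin n => (k : ℕ) < m), f k j := by
    rw [Finset.sum_filter, Finset.sum_filter, Fin.sum_univ_castSucc]
    simp [hm]
  have hlast : ∑ k, (Fin.snoc f i : Fin (n + 1) → Fin d → ℤ) k = ∑ k, f k + i := by
    rw [Fin.sum_univ_castSucc]
    simp
  constructor
  · intro h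
    refine ⟨fun m hm j => ?_, hlast ▸ h.sum_nonneg⟩
    rw [← hle m hm j]
    exact h m (by omega) j
  · rintro ⟨h, h'⟩ m hm j
    rcases Nat.lt_or_ge n m with hmn | hmn
    · rw [Finset.filter_true_of_mem fun k _ => by omega, ← Finset.sum_apply, hlast]
      exact h' j
    · rw [hle m hmn j]
      exact h m hmn j

/-- The generating polynomial, by end point, of the walks of length `n` in the orthant. -/
def walkPoly (S : Finset (Fin d → ℤ)) (w : (Fin d → ℤ) → ℝ) (n : ℕ) :
    AddMonoidAlgebra ℝ (Fin d → ℤ) :=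
  ∑ f : Fin n → {i // i ∈ S}, if StaysInOrthant fun k => (f k : Fin d → ℤ) then
    AddMonoidAlgebra.single (∑ k, (f k : Fin d → ℤ)) (∏ k, w (f k)) else 0

lemma walkWeight_eq_orthantSum (S : Finset (Fin d → ℤ)) (w : (Fin d → ℤ) → ℝ) (n : ℕ) :
    walkWeight d S w n = orthantSum ∅ (walkPoly S w n) := by
  rw [walkWeight, walkPoly, map_sum]
  refine Finset.sum_congr rfl fun f _ => ?_
  by_cases h : StaysInOrthant fun k => (f k : Fin d → ℤ)
  · refine (if_pos h).trans ?_
    rw [if_pos h, orthantSum_single, if_pos ⟨h.sum_nonneg, by simp⟩]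
  · refine (if_neg h).trans ?_
    rw [if_neg h, map_zero]

lemma walkPoly_zero (S : Finset (Fin d → ℤ)) (w : (Fin d → ℤ) → ℝ) : walkPoly S w 0 = 1 := by
  have h (f : Fin 0 → {i // i ∈ S}) : StaysInOrthant fun k => (f k : Fin d → ℤ) := by
    intro m _ j
    simp
  simp [walkPoly, h, AddMonoidAlgebra.one_def]

lemma coeff_walkPoly_eq_zero (S : Finset (Fin d → ℤ)) (w : (Fin d → ℤ) → ℝ) (n : ℕ)
    {x : Fin d → ℤ} (hx : ¬ 0 ≤ x) : (walkPoly S w n).coeff x = 0 := by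
  rw [walkPoly, AddMonoidAlgebra.coeff_sum, Finsupp.finsetSum_apply]
  refine Finset.sum_eq_zero fun f _ => ?_
  split_ifs with h
  · rw [AddMonoidAlgebra.coeff_single, Finsupp.single_eq_of_ne]
    rintro rfl
    exact hx h.sum_nonneg
  · rfl

lemma coeff_walkPoly_succ (S : Finset (Fin d → ℤ)) (w : (Fin d → ℤ) → ℝ) (n : ℕ)
    {x : Fin d → ℤ} (hx : 0 ≤ x) :
    (walkPoly S w (n + 1)).coeff x = (stepPoly S w * walkPoly S w n).coeff x := by
  rw [walkPoly, ← (Fin.snocEquiv fun _ => {i // i ∈ S}).sum_comp, Fintype.sum_prod_type,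
    stepPoly, ← Finset.sum_coe_sort S, walkPoly, Finset.sum_mul_sum]
  simp only [AddMonoidAlgebra.coeff_sum, Finsupp.finsetSum_apply]
  refine Finset.sum_congr rfl fun i _ => Finset.sum_congr rfl fun f _ => ?_
  have hsnoc : (fun k => (Fin.snocEquiv (fun _ => {i // i ∈ S}) (i, f) k : Fin d → ℤ)) =
      Fin.snoc (fun k => (f k : Fin d → ℤ)) (i : Fin d → ℤ) := by
    ext k : 1
    refine Fin.lastCases ?_ (fun k => ?_) k <;> simp [Fin.snocEquiv]
  have hsum : ∑ k, (Fin.snocEquiv (fun _ => {i // i ∈ S}) (i, f) k : Fin d → ℤ) =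
      i + ∑ k, (f k : Fin d → ℤ) := by
    rw [Fin.sum_univ_castSucc, add_comm]
    simp [Fin.snocEquiv]
  have hprod : ∏ k, w (Fin.snocEquiv (fun _ => {i // i ∈ S}) (i, f) k) =
      w i * ∏ k, w (f k) := by
    rw [Fin.prod_univ_castSucc, mul_comm]
    simp [Fin.snocEquiv]
  rw [hsum, hprod, hsnoc, staysInOrthant_snoc]
  by_cases hf : StaysInOrthant fun k => (f k : Fin d → ℤ)
  · rw [if_pos hf, AddMonoidAlgebra.single_mul_single, add_comm (∑ k, _)]
    split_ifs with h
    · rfl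
    · rw [AddMonoidAlgebra.coeff_single, Finsupp.single_eq_of_ne]
      · rfl
      · rintro rfl
        exact h ⟨hf, hx⟩
  · simp [hf]

/-- The reflection principle: in the orthant, the walk polynomials are the antisymmetrizations of
the half space polynomials. -/
lemma coeff_walkPoly {S : Finset (Fin d → ℤ)} {w : (Fin d → ℤ) → ℝ} {s : Finset (Fin d)}
    {l : Fin d} (hl : ∀ k, k ∈ s ↔ k ≠ l)
    (hS : ∀ i ∈ S, ∀ j, i j = -1 ∨ i j = 0 ∨ i j = 1) (hw : ∀ i ∈ S, 0 < w i)
    (hsym : ∀ k ∈ s, ∀ i ∈ S, flipCoord k i ∈ S ∧ w (flipCoord k i) = w i)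
    (hup : ∃ i ∈ S, i l = 1) (n : ℕ) {x : Fin d → ℤ} (hx : 0 ≤ x) :
    (walkPoly S w n).coeff x = (antisymmetrize s (halfSpacePoly S w l n)).coeff x := by
  have hls : l ∉ s := by simp [hl]
  induction n generalizing x with
  | zero =>
    rw [walkPoly_zero, halfSpacePoly, kernelSeq, coeff_antisymmetrize_one s hx]
  | succ n ih =>
    have hrec : (antisymmetrize s (halfSpacePoly S w l (n + 1))).coeff x =
        (stepPoly S w * antisymmetrize s (halfSpacePoly S w l n)).coeff x := by
      rw [antisymmetrize, antisymmetrize, mul_left_comm]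
      refine coeff_antisymmetrize_congr s hls (c := x l) (fun y hy => ?_) rfl
      have hyl : 0 ≤ y l := hy ▸ hx l
      rw [halfSpacePoly, kernelSeq, AddMonoidAlgebra.coeff_sub, Finsupp.sub_apply,
        coeff_stepPoly_mul_eq_zero (T := S.filter fun i => i l = -1), sub_zero]
      · rfl
      · intro i hi
        refine coeff_stepPoly_pow_eq_zero w (l := l) (fun i hi => (Finset.mem_filter.1 hi).2) n ?_
        rw [Pi.sub_apply, (Finset.mem_filter.1 hi).2]
        omega
    rw [hrec, coeff_walkPoly_succ S w n hx]
    refine coeff_stepPoly_mul_congr fun i hi => ?_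
    by_cases hxi : 0 ≤ x - i
    · exact ih hxi
    · rw [coeff_walkPoly_eq_zero S w n hxi]
      obtain ⟨j, hj⟩ : ∃ j, ¬ 0 ≤ (x - i) j := by
        simpa [Pi.le_def] using hxi
      have hj' : (x - i) j = -1 := by
        have h1 := hS i hi j
        have h2 : 0 ≤ x j := hx j
        rw [Pi.sub_apply] at hj ⊢
        omega
      by_cases hjl : j = l
      · subst hjl
        rw [coeff_antisymmetrize_congr s hls (g := 0) (c := -1) (fun y hy => ?_) hj']
        · simp [antisymmetrize]
        · exact coeff_halfSpacePoly_eq_zero (fun i hi => hS i hi j) hw hup n hy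
      · have hjs := (hl j).2 hjl
        exact (coeff_antisymmetrize_eq_zero hjs
          (invVar_halfSpacePoly (Ne.symm hjl) (hsym j hjs) n) hj').symm

lemma walkWeight_eq_orthantSum_halfSpacePoly {S : Finset (Fin d → ℤ)} {w : (Fin d → ℤ) → ℝ}
    {s : Finset (Fin d)} {l : Fin d} (hl : ∀ k, k ∈ s ↔ k ≠ l)
    (hS : ∀ i ∈ S, ∀ j, i j = -1 ∨ i j = 0 ∨ i j = 1) (hw : ∀ i ∈ S, 0 < w i)
    (hsym : ∀ k ∈ s, ∀ i ∈ S, flipCoord k i ∈ S ∧ w (flipCoord k i) = w i)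
    (hup : ∃ i ∈ S, i l = 1) (n : ℕ) :
    walkWeight d S w n =
      orthantSum s ((∏ k ∈ s, (1 + varPow k 1)) * halfSpacePoly S w l n) := by
  rw [walkWeight_eq_orthantSum, ← orthantSum_antisymmetrize s fun k hk =>
    invVar_halfSpacePoly (Ne.symm ((hl k).1 hk)) (hsym k hk) n]
  exact orthantSum_congr fun x hx => coeff_walkPoly hl hS hw hsym hup n hx

end Walks

section DiagonalSlices

variable {d : ℕ}

/-- The exponents of `z_1, …, z_{d+1}` in the monomials of degree `n` in `t` that correspond to
the lattice point `x`. -/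
def latticeExponent (n : ℕ) (x : Fin (d + 1) → ℤ) (j : Fin (d + 1)) : ℤ :=
  if j = Fin.last d then n - x j else x j + n

/-- The coefficients of `t ^ n` in a power series, read as a function on the lattice. -/
def latticeCoeff (n : ℕ) (F : MvPowerSeries (Fin (d + 2)) ℝ) (x : Fin (d + 1) → ℤ) : ℝ :=
  if ∀ j, 0 ≤ latticeExponent n x j then
    MvPowerSeries.coeff (Finsupp.equivFunOnFinite.symm
      (Fin.snoc (fun j => (latticeExponent n x j).toNat) n : Fin (d + 2) → ℕ)) F
  else 0

lemma latticeCoeff_add (n : ℕ) (F G : MvPowerSeries (Fin (d + 2)) ℝ) (x : Fin (d + 1) → ℤ) :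
    latticeCoeff n (F + G) x = latticeCoeff n F x + latticeCoeff n G x := by
  unfold latticeCoeff
  split_ifs <;> simp

lemma latticeCoeff_sub (n : ℕ) (F G : MvPowerSeries (Fin (d + 2)) ℝ) (x : Fin (d + 1) → ℤ) :
    latticeCoeff n (F - G) x = latticeCoeff n F x - latticeCoeff n G x := by
  unfold latticeCoeff
  split_ifs <;> simp

lemma latticeCoeff_sum {α : Type*} (T : Finset α) (n : ℕ)
    (F : α → MvPowerSeries (Fin (d + 2)) ℝ) (x : Fin (d + 1) → ℤ) :
    latticeCoeff n (∑ a ∈ T, F a) x = ∑ a ∈ T, latticeCoeff n (F a) x := by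
  unfold latticeCoeff
  split_ifs <;> simp

lemma latticeCoeff_diag (n : ℕ) (F : MvPowerSeries (Fin (d + 2)) ℝ) :
    latticeCoeff n F 0 =
      MvPowerSeries.coeff (Finsupp.equivFunOnFinite.symm fun _ : Fin (d + 2) => n) F := by
  have h (j : Fin (d + 1)) : latticeExponent n 0 j = n := by simp [latticeExponent]
  have hsnoc : (Fin.snoc (fun _ => n) n : Fin (d + 2) → ℕ) = fun _ => n := by
    ext j
    refine Fin.lastCases ?_ (fun j => ?_) j <;> simp
  simp [latticeCoeff, h, hsnoc]

lemma latticeCoeff_eq_zero {n : ℕ} (F : MvPowerSeries (Fin (d + 2)) ℝ) {x : Fin (d + 1) → ℤ}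
    (hx : (n : ℤ) < x (Fin.last d)) : latticeCoeff n F x = 0 := by
  rw [latticeCoeff, if_neg]
  intro h
  have := h (Fin.last d)
  rw [latticeExponent, if_pos rfl] at this
  omega

lemma latticeCoeff_monomial_mul {n n' : ℕ} {x x' : Fin (d + 1) → ℤ} (e : Fin (d + 2) →₀ ℕ) (c : ℝ)
    (F : MvPowerSeries (Fin (d + 2)) ℝ) (hn : n' = e (Fin.last (d + 1)) + n)
    (hx : ∀ j, latticeExponent n' x' j = e j.castSucc + latticeExponent n x j) :
    latticeCoeff n' (MvPowerSeries.monomial e c * F) x' = c * latticeCoeff n F x := by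
  unfold latticeCoeff
  by_cases h : ∀ j, 0 ≤ latticeExponent n x j
  · rw [if_pos h, if_pos fun j => by rw [hx]; have := h j; positivity,
      ← MvPowerSeries.coeff_add_monomial_mul e]
    congr 2
    ext j
    refine Fin.lastCases ?_ (fun j => ?_) j
    · simp [hn]
    · have h1 := h j
      have h2 := hx j
      simp only [Finsupp.equivFunOnFinite_symm_apply_apply, Fin.snoc_castSucc,
        Finsupp.add_apply]
      omega
  · rw [if_neg h, mul_zero]
    split_ifs with h'
    · rw [MvPowerSeries.coeff_monomial_mul, if_neg]
      intro hle
      refine h fun j => ?_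
      have h1 := hle j.castSucc
      have h2 := hx j
      have h3 := h' j
      simp only [Finsupp.equivFunOnFinite_symm_apply_apply, Fin.snoc_castSucc] at h1
      omega
    · rfl

lemma latticeCoeff_zero_X_mul (F : MvPowerSeries (Fin (d + 2)) ℝ) (x : Fin (d + 1) → ℤ) :
    latticeCoeff 0 (MvPowerSeries.X (Fin.last (d + 1)) * F) x = 0 := by
  unfold latticeCoeff
  split_ifs
  · rw [MvPowerSeries.X, MvPowerSeries.coeff_monomial_mul, if_neg]
    intro hle
    have := hle (Fin.last (d + 1))
    simp at this
  · rfl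

lemma latticeCoeff_zero_one (x : Fin (d + 1) → ℤ) :
    latticeCoeff 0 (1 : MvPowerSeries (Fin (d + 2)) ℝ) x =
      (1 : AddMonoidAlgebra ℝ (Fin (d + 1) → ℤ)).coeff x := by
  rw [AddMonoidAlgebra.one_def, AddMonoidAlgebra.coeff_single, Finsupp.single_apply]
  split_ifs with h
  · subst h
    rw [latticeCoeff_diag, MvPowerSeries.coeff_one, if_pos]
    ext
    simp
  · unfold latticeCoeff
    split_ifs with h'
    · rw [MvPowerSeries.coeff_one, if_neg]
      intro h0
      refine h (funext fun j => ?_)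
      have h1 := DFunLike.congr_fun h0 j.castSucc
      have h2 := h' j
      simp only [Finsupp.equivFunOnFinite_symm_apply_apply, Fin.snoc_castSucc,
        Finsupp.zero_apply] at h1
      rw [Pi.zero_apply]
      simp only [latticeExponent] at h1 h2
      split_ifs at h1 h2 <;> omega
    · rfl

lemma latticeCoeff_succ_one (n : ℕ) (x : Fin (d + 1) → ℤ) :
    latticeCoeff (n + 1) (1 : MvPowerSeries (Fin (d + 2)) ℝ) x = 0 := by
  unfold latticeCoeff
  split_ifs
  · rw [MvPowerSeries.coeff_one, if_neg]
    intro h0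
    have := DFunLike.congr_fun h0 (Fin.last (d + 1))
    simp at this
  · rfl

lemma latticeCoeff_X_mul_castSucc (n : ℕ) (k : Fin d) (F : MvPowerSeries (Fin (d + 2)) ℝ)
    (x : Fin (d + 1) → ℤ) :
    latticeCoeff n (MvPowerSeries.X k.castSucc.castSucc * F) x =
      latticeCoeff n F (x - Pi.single k.castSucc 1) := by
  rw [MvPowerSeries.X, latticeCoeff_monomial_mul (n := n) (x := x - Pi.single k.castSucc 1),
    one_mul]
  · simp [Fin.castSucc_ne_last]
  · intro j
    by_cases hj : j = k.castSucc
    · subst hj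
      simp [latticeExponent, Fin.castSucc_ne_last]
      ring
    · simp [latticeExponent, hj]

lemma latticeCoeff_X_mul_last (n : ℕ) (F : MvPowerSeries (Fin (d + 2)) ℝ)
    (x : Fin (d + 1) → ℤ) :
    latticeCoeff n (MvPowerSeries.X (Fin.last d).castSucc * F) x =
      latticeCoeff n F (x + Pi.single (Fin.last d) 1) := by
  rw [MvPowerSeries.X, latticeCoeff_monomial_mul (n := n) (x := x + Pi.single (Fin.last d) 1),
    one_mul]
  · simp [Fin.castSucc_ne_last]
  · intro j
    by_cases hj : j = Fin.last d
    · subst hj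
      simp [latticeExponent]
      ring
    · simp [latticeExponent, hj]

lemma stepMonomial_eq_monomial (i : Fin (d + 1) → ℤ) :
    stepMonomial d i = MvPowerSeries.monomial (∑ j : Fin (d + 1), Finsupp.single j.castSucc
      (if j = Fin.last d then (1 - i j).toNat else (i j + 1).toNat)) 1 := by
  have (T : Finset (Fin (d + 1))) (p : Fin (d + 1) → ℕ) :
      ∏ j ∈ T, (MvPowerSeries.X j.castSucc : MvPowerSeries (Fin (d + 2)) ℝ) ^ p j =
        MvPowerSeries.monomial (∑ j ∈ T, Finsupp.single j.castSucc (p j)) 1 := by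
    induction T using Finset.induction_on with
    | empty => simp
    | insert j T hj ih =>
      rw [Finset.prod_insert hj, Finset.sum_insert hj, ih, MvPowerSeries.X_pow_eq,
        MvPowerSeries.monomial_mul_monomial, one_mul]
  exact this _ _

/-- The power series `z_1 ⋯ z_{d+1} ∑ i ∈ T, w i • z̄ ^ i`, where `z̄` inverts the last variable. -/
def stepSeries (d : ℕ) (T : Finset (Fin (d + 1) → ℤ)) (w : (Fin (d + 1) → ℤ) → ℝ) :
    MvPowerSeries (Fin (d + 2)) ℝ :=
  ∑ i ∈ T, MvPowerSeries.C (w i) * stepMonomial d i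

lemma latticeCoeff_X_mul_stepMonomial_mul (n : ℕ) {i : Fin (d + 1) → ℤ}
    (hi : ∀ j, i j = -1 ∨ i j = 0 ∨ i j = 1) (c : ℝ) (F : MvPowerSeries (Fin (d + 2)) ℝ)
    (x : Fin (d + 1) → ℤ) :
    latticeCoeff (n + 1)
      (MvPowerSeries.X (Fin.last (d + 1)) * (MvPowerSeries.C c * stepMonomial d i) * F) x =
        c * latticeCoeff n F (x - i) := by
  rw [stepMonomial_eq_monomial, ← MvPowerSeries.monomial_zero_eq_C_apply, MvPowerSeries.X,
    MvPowerSeries.monomial_mul_monomial, MvPowerSeries.monomial_mul_monomial,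
    latticeCoeff_monomial_mul (n := n) (x := x - i), mul_one, one_mul]
  · simp [Fin.castSucc_ne_last, add_comm]
  · intro j
    have h := hi j
    have hsum : (∑ j' : Fin (d + 1), Finsupp.single j'.castSucc
        (if j' = Fin.last d then (1 - i j').toNat else (i j' + 1).toNat)) j.castSucc =
        if j = Fin.last d then (1 - i j).toNat else (i j + 1).toNat := by
      simp [Finsupp.finsetSum_apply, Finsupp.single_apply, Fin.castSucc_inj]
    rw [zero_add, Finsupp.add_apply, hsum, Finsupp.single_eq_of_ne (Fin.castSucc_ne_last j)]
    simp only [latticeExponent, Pi.sub_apply]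
    split_ifs <;> omega

lemma latticeCoeff_X_mul_stepSeries_mul (n : ℕ) {T : Finset (Fin (d + 1) → ℤ)}
    (hT : ∀ i ∈ T, ∀ j, i j = -1 ∨ i j = 0 ∨ i j = 1) (w : (Fin (d + 1) → ℤ) → ℝ)
    {F : MvPowerSeries (Fin (d + 2)) ℝ} {f : AddMonoidAlgebra ℝ (Fin (d + 1) → ℤ)}
    (hF : ∀ x, latticeCoeff n F x = f.coeff x) (x : Fin (d + 1) → ℤ) :
    latticeCoeff (n + 1) (MvPowerSeries.X (Fin.last (d + 1)) * stepSeries d T w * F) x =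
      (stepPoly T w * f).coeff x := by
  rw [stepSeries, Finset.mul_sum, Finset.sum_mul, latticeCoeff_sum, coeff_stepPoly_mul]
  refine Finset.sum_congr rfl fun i hi => ?_
  rw [latticeCoeff_X_mul_stepMonomial_mul n (hT i hi), hF]

lemma latticeCoeff_prod_one_add_X_mul (n : ℕ) (s : Finset (Fin d))
    {F : MvPowerSeries (Fin (d + 2)) ℝ} {f : AddMonoidAlgebra ℝ (Fin (d + 1) → ℤ)}
    (hF : ∀ x, latticeCoeff n F x = f.coeff x) (x : Fin (d + 1) → ℤ) :
    latticeCoeff n ((∏ k ∈ s, (1 + MvPowerSeries.X k.castSucc.castSucc)) * F) x =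
      ((∏ k ∈ s, (1 + varPow k.castSucc 1)) * f).coeff x := by
  induction s using Finset.induction_on generalizing x with
  | empty => simpa using hF x
  | insert k s hk ih =>
    rw [Finset.prod_insert hk, Finset.prod_insert hk, mul_assoc, mul_assoc, add_mul, add_mul,
      one_mul, one_mul, latticeCoeff_add, latticeCoeff_X_mul_castSucc, ih, ih,
      AddMonoidAlgebra.coeff_add, Finsupp.add_apply, coeff_varPow_mul]

/-- Dividing by `1 - z_{d+1}` sums the coefficients over the last nonnegative coordinate axis. -/
lemma latticeCoeff_zero_eq_orthantSum (n : ℕ) {s : Finset (Fin (d + 1))}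
    (hs : ∀ k, k ∈ s ↔ k ≠ Fin.last d) {Y F : MvPowerSeries (Fin (d + 2)) ℝ}
    {f : AddMonoidAlgebra ℝ (Fin (d + 1) → ℤ)} (hF : ∀ x, latticeCoeff n F x = f.coeff x)
    (hY : (1 - MvPowerSeries.X (Fin.last d).castSucc) * Y = F) :
    latticeCoeff n Y 0 = orthantSum s f := by
  have hstep (x : Fin (d + 1) → ℤ) :
      latticeCoeff n Y x - latticeCoeff n Y (x + Pi.single (Fin.last d) 1) = f.coeff x := by
    rw [← hF, ← hY, sub_mul, one_mul, latticeCoeff_sub, latticeCoeff_X_mul_last]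
  have htele (m : ℕ) : latticeCoeff n Y 0 - latticeCoeff n Y (Pi.single (Fin.last d) (m : ℤ)) =
      ∑ y ∈ Finset.range m, f.coeff (Pi.single (Fin.last d) (y : ℤ)) := by
    induction m with
    | zero => simp
    | succ m ih =>
      rw [Finset.sum_range_succ, ← ih, ← hstep, Nat.cast_succ, Pi.single_add]
      ring
  have htop : latticeCoeff n Y (Pi.single (Fin.last d) ((n + 1 : ℕ) : ℤ)) = 0 :=
    latticeCoeff_eq_zero Y (by simp)
  rw [← sub_zero (latticeCoeff n Y 0), ← htop, htele, orthantSum_eq_sum, Finsupp.sum]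
  refine Finset.sum_bij_ne_zero (fun y _ _ => Pi.single (Fin.last d) (y : ℤ))
    (fun y _ hy => Finsupp.mem_support_iff.2 hy) (fun y _ _ y' _ _ h => ?_) (fun x hx' hx => ?_)
    fun y _ _ => ?_
  · exact_mod_cast Pi.single_injective _ h
  · have hne : f.coeff x ≠ 0 := Finsupp.mem_support_iff.1 hx'
    obtain ⟨h0, h1⟩ : 0 ≤ x ∧ ∀ k ∈ s, x k = 0 := by
      by_contra h
      exact hx (if_neg h)
    have hl : 0 ≤ x (Fin.last d) := h0 _
    have hxl : x = Pi.single (Fin.last d) ((x (Fin.last d)).toNat : ℤ) := by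
      ext k
      by_cases hk : k = Fin.last d
      · subst hk
        simp [hl]
      · simp [hk, h1 k ((hs k).2 hk)]
    have hle : x (Fin.last d) ≤ n := by
      by_contra! h
      exact hne ((hF x).symm.trans (latticeCoeff_eq_zero F h))
    exact ⟨(x (Fin.last d)).toNat, Finset.mem_range.2 (by omega), hxl ▸ hne, hxl.symm⟩
  · rw [if_pos]
    refine ⟨Pi.single_nonneg.2 (by positivity), fun k hk => ?_⟩
    simp [(hs k).1 hk]

lemma latticeCoeff_of_eq_one_add {T : Finset (Fin (d + 1) → ℤ)}
    (hT : ∀ i ∈ T, ∀ j, i j = -1 ∨ i j = 0 ∨ i j = 1) (w : (Fin (d + 1) → ℤ) → ℝ)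
    {M : MvPowerSeries (Fin (d + 2)) ℝ}
    (hM : M = 1 + MvPowerSeries.X (Fin.last (d + 1)) * stepSeries d T w * M)
    (n : ℕ) (x : Fin (d + 1) → ℤ) :
    latticeCoeff n M x = (stepPoly T w ^ n).coeff x := by
  induction n generalizing x with
  | zero =>
    rw [hM, latticeCoeff_add, mul_assoc, latticeCoeff_zero_X_mul, add_zero,
      latticeCoeff_zero_one, pow_zero]
  | succ n ih =>
    rw [hM, latticeCoeff_add, latticeCoeff_succ_one, zero_add,
      latticeCoeff_X_mul_stepSeries_mul n hT w ih, pow_succ']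

lemma latticeCoeff_eq_halfSpacePoly {S : Finset (Fin (d + 1) → ℤ)}
    (hS : ∀ i ∈ S, ∀ j, i j = -1 ∨ i j = 0 ∨ i j = 1) (w : (Fin (d + 1) → ℤ) → ℝ)
    {M Φ : MvPowerSeries (Fin (d + 2)) ℝ}
    (hM : M = 1 + MvPowerSeries.X (Fin.last (d + 1)) *
      stepSeries d (S.filter fun i => i (Fin.last d) ≤ 0) w * M)
    (hΦ : Φ = 1 + MvPowerSeries.X (Fin.last (d + 1)) * stepSeries d S w * Φ -
      MvPowerSeries.X (Fin.last (d + 1)) *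
        stepSeries d (S.filter fun i => i (Fin.last d) = -1) w * M)
    (n : ℕ) (x : Fin (d + 1) → ℤ) :
    latticeCoeff n Φ x = (halfSpacePoly S w (Fin.last d) n).coeff x := by
  have hMn := latticeCoeff_of_eq_one_add (fun i hi => hS i (Finset.mem_filter.1 hi).1) w hM
  induction n generalizing x with
  | zero =>
    rw [hΦ, latticeCoeff_sub, latticeCoeff_add, mul_assoc, mul_assoc, latticeCoeff_zero_X_mul,
      latticeCoeff_zero_X_mul, add_zero, sub_zero, latticeCoeff_zero_one]
    rfl
  | succ n ih =>
    rw [hΦ, latticeCoeff_sub, latticeCoeff_add, latticeCoeff_succ_one, zero_add,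
      latticeCoeff_X_mul_stepSeries_mul n hS w ih,
      latticeCoeff_X_mul_stepSeries_mul n (fun i hi => hS i (Finset.mem_filter.1 hi).1) w
        (hMn n), ← Finsupp.sub_apply, ← AddMonoidAlgebra.coeff_sub]
    rfl

lemma zProdQ2A_eq (S : Finset (Fin (d + 1) → ℤ)) (w : (Fin (d + 1) → ℤ) → ℝ) :
    zProdQ2A d S w = stepSeries d (S.filter fun i => i (Fin.last d) ≤ 0) w +
      stepSeries d (S.filter fun i => i (Fin.last d) = -1) w := by
  simp only [zProdQ2A, stepSeries, Finset.sum_filter]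
  rw [← Finset.sum_add_distrib]
  refine Finset.sum_congr rfl fun i _ => ?_
  split_ifs
  · rw [two_mul, map_add, add_mul]
  · rw [one_mul, add_zero]
  · omega
  · rw [add_zero]

end DiagonalSlices

/-- Diagonal representation for mostly symmetric models in dimension `d+1`
(symmetric over the first `d` axes): `s_n` is the coefficient of
`z_1^n ⋯ z_{d+1}^n t^n` in the power series expansion of `G(z,t)/H(z,t)`, where
`G = (1+z_1)⋯(1+z_{d-1})(1 - t z_1⋯z_d (Q(ẑ) + 2 z_d A(ẑ)))` and
`H = (1-z_d)(1 - t z_1⋯z_d S̄(z))(1 - t z_1⋯z_d (Q(ẑ) + z_d A(ẑ)))`. -/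
theorem mostly_symmetric_diagonal
    (d : ℕ) (S : Finset (Fin (d + 1) → ℤ)) (w : (Fin (d + 1) → ℤ) → ℝ)
    (hstep : ∀ i ∈ S, (∀ j, i j = -1 ∨ i j = 0 ∨ i j = 1) ∧ i ≠ 0)
    (hw : ∀ i ∈ S, 0 < w i)
    (hsym : ∀ k : Fin d, SymmetricAxis (d + 1) S w (Fin.castSucc k))
    (hfwd : ∀ k : Fin (d + 1), ∃ i ∈ S, i k = 1)
    (hbwd : ∀ k : Fin (d + 1), ∃ i ∈ S, i k = -1)
    (n : ℕ) :
    walkWeight (d + 1) S w n =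
      MvPowerSeries.coeff (R := ℝ) (Finsupp.equivFunOnFinite.symm fun _ : Fin (d + 2) => n)
        (((∏ j : Fin d, (1 + MvPowerSeries.X (Fin.castSucc (Fin.castSucc j)))) *
            (1 - MvPowerSeries.X (Fin.last (d + 1)) * zProdQ2A d S w)) *
          ((1 - MvPowerSeries.X (Fin.castSucc (Fin.last d))) *
            (1 - MvPowerSeries.X (Fin.last (d + 1)) * zProdSbar d S w) *
            (1 - MvPowerSeries.X (Fin.last (d + 1)) * zProdQA d S w))⁻¹) := by
  have hS : ∀ i ∈ S, ∀ j, i j = -1 ∨ i j = 0 ∨ i j = 1 := fun i hi => (hstep i hi).1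
  set s : Finset (Fin (d + 1)) := Finset.univ.map Fin.castSuccEmb with hs_def
  have hs (k : Fin (d + 1)) : k ∈ s ↔ k ≠ Fin.last d := by
    simp [hs_def, Fin.exists_castSucc_eq]
  have hsym' : ∀ k ∈ s, ∀ i ∈ S, flipCoord k i ∈ S ∧ w (flipCoord k i) = w i := by
    intro k hk
    obtain ⟨k, rfl⟩ := Fin.exists_castSucc_eq.2 ((hs k).1 hk)
    exact hsym k
  rw [walkWeight_eq_orthantSum_halfSpacePoly hs hS hw hsym' (hfwd _) n, hs_def,
    Finset.prod_map, ← hs_def, ← latticeCoeff_diag, zProdQ2A_eq,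
    show zProdSbar d S w = stepSeries d S w from rfl,
    show zProdQA d S w = stepSeries d (S.filter fun i => i (Fin.last d) ≤ 0) w from rfl,
    MvPowerSeries.mul_inv_rev, MvPowerSeries.mul_inv_rev]
  set t : MvPowerSeries (Fin (d + 2)) ℝ := MvPowerSeries.X (Fin.last (d + 1)) with ht
  set z : MvPowerSeries (Fin (d + 2)) ℝ := MvPowerSeries.X (Fin.last d).castSucc with hz
  set σ := stepSeries d S w
  set μ := stepSeries d (S.filter fun i => i (Fin.last d) ≤ 0) w with hμ
  set α := stepSeries d (S.filter fun i => i (Fin.last d) = -1) w with hα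
  have hM : (1 - t * μ) * (1 - t * μ)⁻¹ = 1 := MvPowerSeries.mul_inv_cancel _ (by simp [ht])
  have hW : (1 - t * σ) * (1 - t * σ)⁻¹ = 1 := MvPowerSeries.mul_inv_cancel _ (by simp [ht])
  have hZ : (1 - z) * (1 - z)⁻¹ = 1 := MvPowerSeries.mul_inv_cancel _ (by simp [hz])
  set M := (1 - t * μ)⁻¹
  set W := (1 - t * σ)⁻¹
  have hΦ := latticeCoeff_eq_halfSpacePoly hS w (M := M) (Φ := (1 - t * (μ + α)) * W * M)
    (by linear_combination hM)
    (by linear_combination (1 - t * (μ + α)) * M * hW + hM) n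
  refine (latticeCoeff_zero_eq_orthantSum n hs
    (latticeCoeff_prod_one_add_X_mul n Finset.univ hΦ) ?_).symm
  linear_combination (∏ j : Fin d, (1 + MvPowerSeries.X j.castSucc.castSucc)) *
    (1 - t * (μ + α)) * W * M * hZ

end
end

section
/- (Lemma 1, localization) With the zero-drift mostly symmetric setup and running assumptions ε = n^{-α}, δ = n^{-β} where 1/2 < α < 2β, α + β > 1, and 1/3 < β < 1/2, for any fixed 0 < γ < 1 one has s_n = (2πi)^{-(d+1)} ∫_{N × C^in} [G(z,t)/H(z,t)] · dz dt / (z_1···z_d t)^{n+1} + O(S(1)^n e_n), where e_n → 0 faster than any fixed power of n (i.e., n^m e_n → 0 for every m). -/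
open Finset Filter MeasureTheory
open scoped Classical Real

noncomputable section

namespace ZeroDrift

variable (d : ℕ) (S : Finset (Fin (d + 1) → ℤ)) (w : (Fin (d + 1) → ℤ) → ℝ)

/-- `S(1)`, the total weight of the step set. -/
def S1 : ℝ := ∑ i ∈ S, w i

/-- `A(ẑ)`: the Laurent polynomial collecting steps with last coordinate `-1`. -/
def AC (z : Fin (d + 1) → ℂ) : ℂ :=
  ∑ i ∈ S.filter fun i => i (Fin.last d) = -1,
    (w i : ℂ) * ∏ j : Fin d, z (Fin.castSucc j) ^ (i (Fin.castSucc j))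

/-- `B(ẑ)`: the Laurent polynomial collecting steps with last coordinate `1`. -/
def BC (z : Fin (d + 1) → ℂ) : ℂ :=
  ∑ i ∈ S.filter fun i => i (Fin.last d) = 1,
    (w i : ℂ) * ∏ j : Fin d, z (Fin.castSucc j) ^ (i (Fin.castSucc j))

/-- `Q(ẑ)`: the Laurent polynomial collecting steps with last coordinate `0`. -/
def QC (z : Fin (d + 1) → ℂ) : ℂ :=
  ∑ i ∈ S.filter fun i => i (Fin.last d) = 0,
    (w i : ℂ) * ∏ j : Fin d, z (Fin.castSucc j) ^ (i (Fin.castSucc j))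

/-- The characteristic Laurent polynomial `S(z)` evaluated at `z : ℂ^{d+1}`. -/
def SC (z : Fin (d + 1) → ℂ) : ℂ :=
  ∑ i ∈ S, (w i : ℂ) * ∏ j : Fin (d + 1), z j ^ (i j)

/-- `S̄(z) = S(z_1,…,z_{d},1/z_{d+1})` evaluated at `z : ℂ^{d+1}`. -/
def SbarC (z : Fin (d + 1) → ℂ) : ℂ :=
  ∑ i ∈ S, (w i : ℂ) *
    (∏ j : Fin d, z (Fin.castSucc j) ^ (i (Fin.castSucc j))) *
    z (Fin.last d) ^ (-(i (Fin.last d)))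

/-- The numerator `G(z,t)` of the diagonal representation. -/
def GC (z : Fin (d + 1) → ℂ) (t : ℂ) : ℂ :=
  (∏ j : Fin d, (1 + z (Fin.castSucc j))) *
    (1 - t * (∏ j, z j) * (QC d S w z + 2 * z (Fin.last d) * AC d S w z))

/-- The denominator `H(z,t) = H_1 H_2 H_3` of the diagonal representation. -/
def HC (z : Fin (d + 1) → ℂ) (t : ℂ) : ℂ :=
  (1 - z (Fin.last d)) * (1 - t * (∏ j, z j) * SbarC d S w z) *
    (1 - t * (∏ j, z j) * (QC d S w z + z (Fin.last d) * AC d S w z))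

/-- The point of `ℂ^{d+1}` with coordinates `i^{m_j}` encoded by `m : Fin (d+1) → Fin 4`. -/
def wOf (m : Fin (d + 1) → Fin 4) : Fin (d + 1) → ℂ :=
  fun j => Complex.I ^ (m j : ℕ)

/-- The (indices of the) finite set `Γ` of possible contributing points: `w_j ∈ {±1}` for
`j ≤ d`, `w_{d+1} ∈ {±1,±i}`, and `|1/(w_1⋯w_{d+1} S(w))| = 1/S(1)`. -/
def GammaIdx : Finset (Fin (d + 1) → Fin 4) :=
  Finset.univ.filter fun m =>
    (∀ j : Fin d, m (Fin.castSucc j) = 0 ∨ m (Fin.castSucc j) = 2) ∧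
    ‖(1 / ((∏ j, wOf d m j) * SC d S w (wOf d m)) : ℂ)‖ = 1 / S1 d S w

/-- The argument (angle) of the point encoded by `m` in coordinate `j`. -/
def argOf (m : Fin (d + 1) → Fin 4) (j : Fin (d + 1)) : ℝ := (m j : ℕ) * π / 2

/-- The box of angles parametrizing the product of arcs `N_w` for `w = wOf m`. -/
def box (m : Fin (d + 1) → Fin 4) (δ : ℝ) : Set (Fin (d + 1) → ℝ) :=
  Set.univ.pi fun j => Set.Ioo (argOf d m j - δ) (argOf d m j + δ)

/-- The parametrization of the torus `|z_j| = 1` (`j ≤ d`), `|z_{d+1}| = 1 - ε`. -/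
def zOf (ε : ℝ) (θ : Fin (d + 1) → ℝ) : Fin (d + 1) → ℂ :=
  fun j => (if j = Fin.last d then (1 - ε : ℂ) else 1) * Complex.exp (Complex.I * θ j)

/-- Angles parametrizing `N = ⋃_{w ∈ Γ} N_w`. -/
def Nparam (δ : ℝ) : Set (Fin (d + 1) → ℝ) := ⋃ m ∈ GammaIdx d S w, box d m δ

/-- The contour integral `(2πi)^{-(d+2)} ∫_{N × C} G/H · dz dt/(z_1⋯z_{d+1}t)^{n+1}`,
parametrized by angles, where `C` is the circle `|t| = r`. -/
def fullIntegral (n : ℕ) (ε δ r : ℝ) : ℂ :=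
  (((2 * π) ^ (d + 2) : ℝ))⁻¹ •
    ∫ θ in Nparam d S w δ,
      ∫ φ in Set.Ioo 0 (2 * π),
        GC d S w (zOf d ε θ) ((r : ℂ) * Complex.exp (Complex.I * φ)) /
            HC d S w (zOf d ε θ) ((r : ℂ) * Complex.exp (Complex.I * φ)) *
          (((∏ j, zOf d ε θ j) * ((r : ℂ) * Complex.exp (Complex.I * φ))) ^ n)⁻¹

/-- The residue integrand
`[(1+z_1)⋯(1+z_d)/(B(ẑ) z_1⋯z_{d+1})]·[(B(ẑ) - z_{d+1}^2 A(ẑ))/(1-z_{d+1})]·S̄(z)^n`,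
parametrized by angles, including the Jacobian factors `i z_j` of `dz_j`. -/
def resIntegrand (n : ℕ) (ε : ℝ) (θ : Fin (d + 1) → ℝ) : ℂ :=
  ((∏ j : Fin d, (1 + zOf d ε θ (Fin.castSucc j))) /
      (BC d S w (zOf d ε θ) * ∏ j, zOf d ε θ j)) *
    ((BC d S w (zOf d ε θ) - zOf d ε θ (Fin.last d) ^ 2 * AC d S w (zOf d ε θ)) /
      (1 - zOf d ε θ (Fin.last d))) *
    SbarC d S w (zOf d ε θ) ^ n *
    ∏ j, Complex.I * zOf d ε θ j

/-- The contour integral `∫_{N_w} (residue integrand) dz` over the product of arcs `N_w`,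
`w = wOf m`, parametrized by angles. -/
def resIntegral (n : ℕ) (ε δ : ℝ) (m : Fin (d + 1) → Fin 4) : ℂ :=
  ∫ θ in box d m δ, resIntegrand d S w n ε θ

end ZeroDrift

namespace ZeroDrift

theorem one_sub_mul_ne_zero {r : ℝ} {c p t : ℂ} (hp : r * ‖c * p‖ < 1) (ht : ‖t‖ ≤ r) :
    1 - c * t * p ≠ 0 := by
  intro h
  have h1 : c * t * p = 1 := (sub_eq_zero.mp h).symm
  have h2 : ‖t‖ * ‖c * p‖ = 1 := by
    rw [← norm_mul, show t * (c * p) = c * t * p by ring, h1, norm_one]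
  have := mul_le_mul_of_nonneg_right ht (norm_nonneg (c * p))
  linarith

theorem circleAverage_inv_pow_succ {r : ℝ} (hr : 0 < r) (c : ℂ) (n : ℕ) :
    Real.circleAverage (fun t => ((c * t) ^ (n + 1))⁻¹) 0 r = 0 := by
  rw [Real.circleAverage_eq_circleIntegral hr.ne']
  have h : (fun z : ℂ => (z - 0)⁻¹ • ((c * z) ^ (n + 1))⁻¹)
      = fun z : ℂ => (c ^ (n + 1))⁻¹ • (z - 0) ^ (-(n + 2 : ℕ) : ℤ) := by
    funext z
    simp only [sub_zero, smul_eq_mul, zpow_neg, zpow_natCast, mul_pow, mul_inv]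
    ring
  rw [h, circleIntegral.integral_smul, circleIntegral.integral_sub_zpow_of_ne]
  · simp
  · push_cast
    omega

/-- Coefficient extraction for the geometric series by averaging over a circle. -/
theorem circleAverage_inv_pow_mul_inv_one_sub {r : ℝ} (hr : 0 < r) {c p : ℂ} (hc : c ≠ 0)
    (hp : r * ‖c * p‖ < 1) (n : ℕ) :
    Real.circleAverage (fun t => ((c * t) ^ n)⁻¹ * (1 - c * t * p)⁻¹) 0 r = p ^ n := by
  have hne : ∀ t ∈ Metric.sphere (0 : ℂ) r, c * t ≠ 0 ∧ 1 - c * t * p ≠ 0 := by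
    intro t ht
    rw [mem_sphere_zero_iff_norm] at ht
    refine ⟨mul_ne_zero hc (norm_pos_iff.mp (ht ▸ hr)), one_sub_mul_ne_zero hp ht.le⟩
  induction n with
  | zero =>
    have hd : DifferentiableOn ℂ (fun t => (1 - c * t * p)⁻¹) (Metric.closedBall 0 r) := by
      intro t ht
      rw [mem_closedBall_zero_iff] at ht
      have := one_sub_mul_ne_zero hp ht
      refine DifferentiableAt.differentiableWithinAt ?_
      fun_prop (disch := assumption)
    have := DiffContOnCl.circleAverage (f := fun t => (1 - c * t * p)⁻¹) (c := 0) (R := r)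
      (by
        rw [abs_of_pos hr]
        apply DifferentiableOn.diffContOnCl
        rwa [closure_ball _ hr.ne'])
    simpa using this
  | succ n ih =>
    have h : Real.circleAverage (fun t => ((c * t) ^ (n + 1))⁻¹ * (1 - c * t * p)⁻¹) 0 r
        = Real.circleAverage (fun t => ((c * t) ^ (n + 1))⁻¹
          + p • (((c * t) ^ n)⁻¹ * (1 - c * t * p)⁻¹)) 0 r := by
      apply Real.circleAverage_congr_sphere
      intro t ht
      rw [abs_of_pos hr] at ht
      obtain ⟨h1, h2⟩ := hne t ht
      simp only [smul_eq_mul]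
      field_simp
      ring
    rw [h, Real.circleAverage_fun_add, Real.circleAverage_fun_smul, ih,
      circleAverage_inv_pow_succ hr]
    · simp [pow_succ']
    · refine ContinuousOn.circleIntegrable hr.le fun t ht => ContinuousAt.continuousWithinAt ?_
      obtain ⟨h1, h2⟩ := hne t ht
      fun_prop (disch := first | assumption | exact pow_ne_zero _ ‹_›)
    · refine ContinuousOn.circleIntegrable hr.le fun t ht => ContinuousAt.continuousWithinAt ?_
      obtain ⟨h1, h2⟩ := hne t ht
      fun_prop (disch := first | assumption | exact pow_ne_zero _ ‹_›)

/-- The sums `∑ k ≥ m, (n.choose k) R ^ (k - m) U ^ (n - k)`, defined through their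
Pascal-type recursion. -/
def binomTail (U R : ℂ) : ℕ → ℕ → ℂ
  | 0, 0 => 1
  | 0, _ + 1 => 0
  | n + 1, 0 => (U + R) * binomTail U R n 0
  | n + 1, m + 1 => U * binomTail U R n (m + 1) + binomTail U R n m

theorem binomTail_zero_right (U R : ℂ) (n : ℕ) : binomTail U R n 0 = (U + R) ^ n := by
  induction n with
  | zero => simp [binomTail]
  | succ n ih => rw [binomTail, ih, pow_succ']

theorem binomTail_eq (U R : ℂ) (n m : ℕ) :
    binomTail U R n m = R * binomTail U R n (m + 1) + binomTail U 0 n m := by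
  induction n generalizing m with
  | zero => cases m <;> simp [binomTail]
  | succ n ih =>
    cases m with
    | zero =>
      simp only [binomTail]
      linear_combination U * ih 0
    | succ m =>
      simp only [binomTail]
      linear_combination U * ih (m + 1) + ih m

theorem norm_binomTail_one_le {U R : ℂ} {M : ℝ} (hU : ‖U‖ ≤ M) (hV : ‖U + R‖ ≤ M) (n : ℕ) :
    ‖binomTail U R (n + 1) 1‖ ≤ (n + 1) * M ^ n := by
  have hM : 0 ≤ M := (norm_nonneg U).trans hU
  induction n with
  | zero => simp [binomTail]
  | succ n ih =>
    rw [binomTail, binomTail_zero_right]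
    calc _ ≤ ‖U‖ * ‖binomTail U R (n + 1) 1‖ + ‖U + R‖ ^ (n + 1) := by
          refine (norm_add_le _ _).trans ?_
          rw [norm_mul, norm_pow]
      _ ≤ M * ((n + 1) * M ^ n) + M ^ (n + 1) := by gcongr
      _ = _ := by push_cast; ring

theorem circleAverage_inv_pow_mul_inv_mul_inv {r : ℝ} (hr : 0 < r) {c U R : ℂ} (hc : c ≠ 0)
    (hU : r * ‖c * U‖ < 1) (hV : r * ‖c * (U + R)‖ < 1) (n : ℕ) :
    Real.circleAverage
      (fun t => ((c * t) ^ n)⁻¹ * ((1 - c * t * (U + R))⁻¹ * (1 - c * t * U)⁻¹)) 0 r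
      = binomTail U R (n + 1) 1 := by
  have hne : ∀ t ∈ Metric.sphere (0 : ℂ) r,
      c * t ≠ 0 ∧ 1 - c * t * (U + R) ≠ 0 ∧ 1 - c * t * U ≠ 0 := by
    intro t ht
    rw [mem_sphere_zero_iff_norm] at ht
    exact ⟨mul_ne_zero hc (norm_pos_iff.mp (ht ▸ hr)), one_sub_mul_ne_zero hV ht.le,
      one_sub_mul_ne_zero hU ht.le⟩
  induction n with
  | zero =>
    have hd : DifferentiableOn ℂ (fun t => (1 - c * t * (U + R))⁻¹ * (1 - c * t * U)⁻¹)
        (Metric.closedBall 0 r) := by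
      intro t ht
      rw [mem_closedBall_zero_iff] at ht
      have h1 := one_sub_mul_ne_zero hV ht
      have h2 := one_sub_mul_ne_zero hU ht
      refine DifferentiableAt.differentiableWithinAt ?_
      fun_prop (disch := assumption)
    have := DiffContOnCl.circleAverage
      (f := fun t => (1 - c * t * (U + R))⁻¹ * (1 - c * t * U)⁻¹) (c := 0) (R := r)
      (by
        rw [abs_of_pos hr]
        apply DifferentiableOn.diffContOnCl
        rwa [closure_ball _ hr.ne'])
    simpa [binomTail] using this
  | succ n ih =>
    have h : Real.circleAverage (fun t => ((c * t) ^ (n + 1))⁻¹ *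
          ((1 - c * t * (U + R))⁻¹ * (1 - c * t * U)⁻¹)) 0 r
        = Real.circleAverage (fun t => ((c * t) ^ (n + 1))⁻¹ * (1 - c * t * (U + R))⁻¹
          + U • (((c * t) ^ n)⁻¹ * ((1 - c * t * (U + R))⁻¹ * (1 - c * t * U)⁻¹))) 0 r := by
      apply Real.circleAverage_congr_sphere
      intro t ht
      rw [abs_of_pos hr] at ht
      obtain ⟨h1, h2, h3⟩ := hne t ht
      simp only [smul_eq_mul]
      field_simp
      ring
    rw [h, Real.circleAverage_fun_add, Real.circleAverage_fun_smul, ih,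
      circleAverage_inv_pow_mul_inv_one_sub hr hc hV, smul_eq_mul, add_comm,
      ← binomTail_zero_right]
    · rfl
    · refine ContinuousOn.circleIntegrable hr.le fun t ht => ContinuousAt.continuousWithinAt ?_
      obtain ⟨h1, h2, h3⟩ := hne t ht
      fun_prop (disch := first | assumption | exact pow_ne_zero _ ‹_›)
    · refine ContinuousOn.circleIntegrable hr.le fun t ht => ContinuousAt.continuousWithinAt ?_
      obtain ⟨h1, h2, h3⟩ := hne t ht
      fun_prop (disch := first | assumption | exact pow_ne_zero _ ‹_›)

/-- The `n`-th coefficient of `(1 - t(U + a)) / ((1 - t(U + R))(1 - tU))`. -/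
theorem circleAverage_diagonal {r : ℝ} (hr : 0 < r) {c U R : ℂ} (hc : c ≠ 0)
    (hU : r * ‖c * U‖ < 1) (hV : r * ‖c * (U + R)‖ < 1) (K a : ℂ) (n : ℕ) :
    Real.circleAverage
      (fun t => K * ((1 - c * t * (U + a)) / ((1 - c * t * (U + R)) * (1 - c * t * U)))
        * ((c * t) ^ (n + 1))⁻¹) 0 r
      = K * ((U + R) ^ (n + 1) - a * binomTail U R (n + 1) 1) := by
  have hne : ∀ t ∈ Metric.sphere (0 : ℂ) r,
      c * t ≠ 0 ∧ 1 - c * t * (U + R) ≠ 0 ∧ 1 - c * t * U ≠ 0 := by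
    intro t ht
    rw [mem_sphere_zero_iff_norm] at ht
    exact ⟨mul_ne_zero hc (norm_pos_iff.mp (ht ▸ hr)), one_sub_mul_ne_zero hV ht.le,
      one_sub_mul_ne_zero hU ht.le⟩
  have h : Real.circleAverage
      (fun t => K * ((1 - c * t * (U + a)) / ((1 - c * t * (U + R)) * (1 - c * t * U)))
        * ((c * t) ^ (n + 1))⁻¹) 0 r
      = Real.circleAverage (fun t => K • (((c * t) ^ (n + 1))⁻¹ * (1 - c * t * (U + R))⁻¹)
        - (K * a) • (((c * t) ^ n)⁻¹ * ((1 - c * t * (U + R))⁻¹ * (1 - c * t * U)⁻¹))) 0 r := by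
    apply Real.circleAverage_congr_sphere
    intro t ht
    rw [abs_of_pos hr] at ht
    obtain ⟨h1, h2, h3⟩ := hne t ht
    simp only [smul_eq_mul]
    field_simp
    ring
  rw [h, Real.circleAverage_fun_sub, Real.circleAverage_fun_smul, Real.circleAverage_fun_smul,
    circleAverage_inv_pow_mul_inv_one_sub hr hc hV,
    circleAverage_inv_pow_mul_inv_mul_inv hr hc hU hV]
  · simp only [smul_eq_mul]
    ring
  · refine ContinuousOn.circleIntegrable hr.le fun t ht => ContinuousAt.continuousWithinAt ?_
    obtain ⟨h1, h2, h3⟩ := hne t ht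
    fun_prop (disch := first | assumption | exact pow_ne_zero _ ‹_›)
  · refine ContinuousOn.circleIntegrable hr.le fun t ht => ContinuousAt.continuousWithinAt ?_
    obtain ⟨h1, h2, h3⟩ := hne t ht
    fun_prop (disch := first | assumption | exact pow_ne_zero _ ‹_›)

/-- A fundamental domain of the torus of angles containing all boxes `box d m δ` with small `δ`. -/
def cell (d : ℕ) : Set (Fin (d + 1) → ℝ) :=
  Set.univ.pi fun _ => Set.Ioc (-(π / 4)) (-(π / 4) + 2 * π)

theorem setIntegral_Ioc_circle (F : ℂ → ℂ) (ρ : ℝ) :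
    ∫ s in Set.Ioc (-(π / 4)) (-(π / 4) + 2 * π), F (ρ * Complex.exp (Complex.I * s))
      = (2 * π) • Real.circleAverage F 0 ρ := by
  have h0 : (2 * π) ≠ 0 := by positivity
  rw [Real.circleAverage_eq_integral_add (-(π / 4)), smul_smul, mul_inv_cancel₀ h0, one_smul,
    intervalIntegral.integral_comp_add_right (fun s => F (circleMap 0 ρ s)) (-(π / 4)),
    intervalIntegral.integral_of_le (by linarith [Real.pi_pos])]
  simp [circleMap, mul_comm, add_comm]

theorem setIntegral_Ioo_circle (F : ℂ → ℂ) (r : ℝ) :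
    ∫ s in Set.Ioo 0 (2 * π), F (r * Complex.exp (Complex.I * s))
      = (2 * π) • Real.circleAverage F 0 r := by
  have h0 : (2 * π) ≠ 0 := by positivity
  rw [Real.circleAverage_def, smul_smul, mul_inv_cancel₀ h0, one_smul,
    intervalIntegral.integral_of_le (by positivity), integral_Ioc_eq_integral_Ioo]
  simp [circleMap, mul_comm]

theorem restrict_cell (d : ℕ) : (volume : Measure (Fin (d + 1) → ℝ)).restrict (cell d)
    = Measure.pi fun _ => volume.restrict (Set.Ioc (-(π / 4)) (-(π / 4) + 2 * π)) := by
  rw [cell, volume_pi, Measure.restrict_pi_pi]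

theorem integrableOn_cell {d : ℕ} {f : (Fin (d + 1) → ℝ) → ℂ} (hf : Continuous f) :
    IntegrableOn f (cell d) := by
  have hK : IsCompact (Set.univ.pi fun _ : Fin (d + 1) =>
      Set.Icc (-(π / 4)) (-(π / 4) + 2 * π)) := isCompact_univ_pi fun _ => isCompact_Icc
  exact (hf.continuousOn.integrableOn_compact hK).mono_set
    (Set.pi_mono fun _ _ => Set.Ioc_subset_Icc_self)

theorem volume_real_cell (d : ℕ) : volume.real (cell d) = (2 * π) ^ (d + 1) := by
  rw [Measure.real, cell, Real.volume_pi_Ioc, ENNReal.toReal_prod]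
  simp [Real.pi_pos.le]

theorem setIntegral_cell_prod (d : ℕ) (f : Fin (d + 1) → ℝ → ℂ) :
    ∫ θ in cell d, ∏ j, f j (θ j)
      = ∏ j, ∫ s in Set.Ioc (-(π / 4)) (-(π / 4) + 2 * π), f j s := by
  rw [restrict_cell]
  exact integral_fintype_prod_eq_prod f

/-- The torus integral of a function which extends to a function of the last variable that is
analytic on a disc and vanishes at its centre is zero. -/
theorem setIntegral_cell_eq_zero {d : ℕ} {f : (Fin (d + 1) → ℝ) → ℂ} (hf : Continuous f) {ρ : ℝ}
    (hρ : 0 < ρ)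
    (h : ∀ θ, ∃ F : ℂ → ℂ, DifferentiableOn ℂ F (Metric.closedBall 0 ρ) ∧ F 0 = 0 ∧
      ∀ s, f (Function.update θ (Fin.last d) s) = F (ρ * Complex.exp (Complex.I * s))) :
    ∫ θ in cell d, f θ = 0 := by
  have hi : Integrable f (Measure.pi fun _ : Fin (d + 1) =>
      volume.restrict (Set.Ioc (-(π / 4)) (-(π / 4) + 2 * π))) := by
    rw [← restrict_cell]
    exact integrableOn_cell hf
  have hp := (measurePreserving_piFinSuccAbove (fun _ : Fin (d + 1) =>
      (volume : Measure ℝ).restrict (Set.Ioc (-(π / 4)) (-(π / 4) + 2 * π))) (Fin.last d)).symm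
  rw [restrict_cell, ← hp.integral_comp', integral_prod_symm]
  · refine integral_eq_zero_of_ae (Eventually.of_forall fun y => ?_)
    obtain ⟨F, hF, hF0, hFf⟩ := h (Fin.insertNth (Fin.last d) 0 y)
    have h1 : ∀ s : ℝ, f ((MeasurableEquiv.piFinSuccAbove (fun _ : Fin (d + 1) => ℝ)
        (Fin.last d)).symm (s, y)) = F (ρ * Complex.exp (Complex.I * s)) := by
      intro s
      rw [← hFf s, Fin.update_insertNth]
      rfl
    simp only [h1, Pi.zero_apply]
    rw [setIntegral_Ioc_circle, DiffContOnCl.circleAverage, hF0, smul_zero]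
    rw [abs_of_pos hρ]
    apply DifferentiableOn.diffContOnCl
    rwa [closure_ball _ hρ.ne']
  · exact hp.integrable_comp_of_integrable hi

/-- `1 + z + ⋯ + z ^ m + z⁻¹ + ⋯ + z ^ (-(m - 1))`, that is
`(z ^ (1 - m) - z ^ (m + 1)) / (1 - z)`. -/
def reflSum (z : ℂ) (m : ℕ) : ℂ := ∑ k ∈ range m, (z ^ (k + 1) + z⁻¹ ^ k)

theorem reflSum_add {z : ℂ} (hz : z ≠ 0) (m : ℕ) :
    reflSum z (m + 2) + reflSum z m = (z + z⁻¹) * reflSum z (m + 1) := by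
  induction m with
  | zero =>
    simp only [reflSum, sum_range_succ, range_zero, sum_empty]
    field_simp
    ring
  | succ m ih =>
    have h1 : reflSum z (m + 3) = reflSum z (m + 2) + (z ^ (m + 3) + z⁻¹ ^ (m + 2)) :=
      sum_range_succ _ _
    have h2 : reflSum z (m + 2) = reflSum z (m + 1) + (z ^ (m + 2) + z⁻¹ ^ (m + 1)) :=
      sum_range_succ _ _
    have h3 : reflSum z (m + 1) = reflSum z m + (z ^ (m + 1) + z⁻¹ ^ m) :=
      sum_range_succ _ _
    have h4 : z ^ (m + 3) + z⁻¹ ^ (m + 2) + (z ^ (m + 1) + z⁻¹ ^ m)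
        = (z + z⁻¹) * (z ^ (m + 2) + z⁻¹ ^ (m + 1)) := by
      linear_combination (-z⁻¹ ^ m - z ^ (m + 1)) * mul_inv_cancel₀ hz
    linear_combination h1 + h3 + ih + h4 - (z + z⁻¹) * h2

theorem zpow_add_zpow_neg_mul_reflSum {z : ℂ} (hz : z ≠ 0) {y e : ℤ} (hy : 1 ≤ y)
    (he : e = -1 ∨ e = 0 ∨ e = 1) :
    (z ^ e + z ^ (-e)) * reflSum z y.toNat
      = reflSum z (y + e).toNat + reflSum z (y + -e).toNat := by
  obtain ⟨m, rfl⟩ : ∃ m : ℕ, y = m + 1 := ⟨(y - 1).toNat, by omega⟩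
  have h := reflSum_add hz m
  have e0 : ((m : ℤ) + 1).toNat = m + 1 := by omega
  have e1 : ((m : ℤ) + 1 + 1).toNat = m + 2 := by omega
  have e2 : ((m : ℤ) + 1 + -1).toNat = m := by omega
  rcases he with rfl | rfl | rfl
  · simp only [neg_neg, e0, e1, e2, zpow_neg, zpow_one]
    linear_combination -h
  · simp only [neg_zero, add_zero, e0, zpow_zero]
    ring
  · simp only [e0, e1, e2, zpow_neg, zpow_one]
    linear_combination -h

theorem circleAverage_reflSum (m : ℕ) :
    Real.circleAverage (fun z => reflSum z (m + 1)) 0 1 = 1 := by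
  have hpow : ∀ k : ℕ, Real.circleAverage (fun z : ℂ => z ^ (k + 1)) 0 1 = 0 := by
    intro k
    have := DiffContOnCl.circleAverage (f := fun z : ℂ => z ^ (k + 1)) (c := 0) (R := 1)
      (Differentiable.diffContOnCl (by fun_prop))
    simpa using this
  have hne : ∀ z ∈ Metric.sphere (0 : ℂ) 1, z ≠ 0 := by
    intro z hz h
    simp [h] at hz
  have hpos : ∀ k : ℕ, CircleIntegrable (fun z : ℂ => z ^ (k + 1)) 0 1 := fun k =>
    ContinuousOn.circleIntegrable zero_le_one (by fun_prop)
  have hpos' : ∀ k : ℕ, CircleIntegrable (fun z : ℂ => z⁻¹ ^ k) 0 1 := fun k => by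
    refine ContinuousOn.circleIntegrable zero_le_one fun z hz =>
      ContinuousAt.continuousWithinAt ?_
    have := hne z hz
    fun_prop (disch := assumption)
  simp only [reflSum]
  rw [Real.circleAverage_fun_sum (f := fun k z => z ^ (k + 1) + z⁻¹ ^ k)
    fun k _ => (hpos k).add (hpos' k), sum_range_succ',
    sum_eq_zero]
  · rw [Real.circleAverage_fun_add (hpos 0) (hpos' 0), hpow]
    simp [Real.circleAverage_const]
  · intro k _
    rw [Real.circleAverage_fun_add (hpos _) (hpos' _), hpow]
    simpa using circleAverage_inv_pow_succ one_pos 1 k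

section Walks

variable {d : ℕ} {S : Finset (Fin (d + 1) → ℤ)} {w : (Fin (d + 1) → ℤ) → ℝ}

/-- Splitting a sum over the steps according to the last coordinate. -/
theorem sum_mul_last (hstep : ∀ i ∈ S, (∀ j, i j = -1 ∨ i j = 0 ∨ i j = 1) ∧ i ≠ 0)
    (z : Fin (d + 1) → ℂ) (g : ℤ → ℂ) :
    ∑ i ∈ S, (w i : ℂ) * (∏ j : Fin d, z (Fin.castSucc j) ^ (i (Fin.castSucc j)))
        * g (i (Fin.last d))
      = AC d S w z * g (-1) + QC d S w z * g 0 + BC d S w z * g 1 := by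
  simp only [AC, QC, BC, sum_filter, sum_mul, ← sum_add_distrib]
  refine sum_congr rfl fun i hi => ?_
  rcases (hstep i hi).1 (Fin.last d) with h | h | h <;> simp [h]

theorem SbarC_eq (hstep : ∀ i ∈ S, (∀ j, i j = -1 ∨ i j = 0 ∨ i j = 1) ∧ i ≠ 0)
    (z : Fin (d + 1) → ℂ) :
    SbarC d S w z = QC d S w z + z (Fin.last d) * AC d S w z
      + BC d S w z / z (Fin.last d) := by
  rw [SbarC, sum_mul_last hstep z fun e => z (Fin.last d) ^ (-e)]
  simp only [neg_neg, zpow_one, neg_zero, zpow_zero, zpow_neg]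
  ring

/-- Reflecting the steps in the `k`-th axis does not change weighted sums. -/
theorem sum_update_neg {k : Fin (d + 1)} (hk : SymmetricAxis (d + 1) S w k)
    (f : (Fin (d + 1) → ℤ) → ℂ) :
    ∑ i ∈ S, (w i : ℂ) * f (Function.update i k (-(i k))) = ∑ i ∈ S, (w i : ℂ) * f i := by
  refine sum_nbij' (fun i => Function.update i k (-(i k)))
    (fun i => Function.update i k (-(i k))) ?_ ?_ ?_ ?_ ?_
  · exact fun i hi => (hk i hi).1
  · exact fun i hi => (hk i hi).1
  · intro i _
    simp
  · intro i _
    simp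
  · intro i hi
    rw [(hk i hi).2]

theorem sum_step_reflSum (hstep : ∀ i ∈ S, (∀ j, i j = -1 ∨ i j = 0 ∨ i j = 1) ∧ i ≠ 0)
    (hsym : ∀ k : Fin d, SymmetricAxis (d + 1) S w (Fin.castSucc k))
    {z : Fin (d + 1) → ℂ} (hz : ∀ j, z j ≠ 0) {y : Fin (d + 1) → ℤ} (hy : ∀ j, 1 ≤ y j)
    (g : ℤ → ℂ) :
    ∑ i ∈ S, (w i : ℂ) * ((∏ j : Fin d,
        reflSum (z (Fin.castSucc j)) (y (Fin.castSucc j) + i (Fin.castSucc j)).toNat)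
          * g (i (Fin.last d)))
      = (∏ j : Fin d, reflSum (z (Fin.castSucc j)) (y (Fin.castSucc j)).toNat)
        * ∑ i ∈ S, (w i : ℂ) * (∏ j : Fin d, z (Fin.castSucc j) ^ (i (Fin.castSucc j)))
          * g (i (Fin.last d)) := by
  have key : ∀ T : Finset (Fin d),
      ∑ i ∈ S, (w i : ℂ) * ((∏ j ∈ T,
        reflSum (z (Fin.castSucc j)) (y (Fin.castSucc j) + i (Fin.castSucc j)).toNat) *
        (∏ j ∈ Tᶜ, z (Fin.castSucc j) ^ (i (Fin.castSucc j))
          * reflSum (z (Fin.castSucc j)) (y (Fin.castSucc j)).toNat) * g (i (Fin.last d)))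
      = ∑ i ∈ S, (w i : ℂ) * ((∏ j : Fin d, z (Fin.castSucc j) ^ (i (Fin.castSucc j))
          * reflSum (z (Fin.castSucc j)) (y (Fin.castSucc j)).toNat) * g (i (Fin.last d))) := by
    intro T
    induction T using Finset.induction_on with
    | empty => simp
    | insert k T hkT ih =>
      rw [← ih]
      have hc : Tᶜ = insert k (insert k T)ᶜ := by
        ext a
        by_cases h : a = k <;> simp [h, hkT]
      have hk' : k ∉ (insert k T)ᶜ := by simp
      set r : (Fin (d + 1) → ℤ) → ℂ := fun i =>
        (∏ j ∈ T, reflSum (z (Fin.castSucc j))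
          (y (Fin.castSucc j) + i (Fin.castSucc j)).toNat) *
        (∏ j ∈ (insert k T)ᶜ, z (Fin.castSucc j) ^ (i (Fin.castSucc j))
          * reflSum (z (Fin.castSucc j)) (y (Fin.castSucc j)).toNat) * g (i (Fin.last d)) with hr
      have hrk : ∀ i e, r (Function.update i (Fin.castSucc k) e) = r i := by
        intro i e
        have hne : ∀ j : Fin d, j ≠ k → Fin.castSucc j ≠ Fin.castSucc k := fun j hj h =>
          hj (Fin.castSucc_injective _ h)
        have hl : Fin.last d ≠ Fin.castSucc k := (Fin.castSucc_lt_last k).ne'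
        simp only [hr, Function.update_of_ne hl]
        congr 2
        · refine prod_congr rfl fun j hj => ?_
          rw [Function.update_of_ne (hne j fun h => hkT (h ▸ hj))]
        · refine prod_congr rfl fun j hj => ?_
          rw [Function.update_of_ne (hne j fun h => hk' (h ▸ hj))]
      set f1 : (Fin (d + 1) → ℤ) → ℂ := fun i => r i *
        reflSum (z (Fin.castSucc k)) (y (Fin.castSucc k) + i (Fin.castSucc k)).toNat with hf1
      set f2 : (Fin (d + 1) → ℤ) → ℂ := fun i => r i * (z (Fin.castSucc k) ^ (i (Fin.castSucc k))
          * reflSum (z (Fin.castSucc k)) (y (Fin.castSucc k)).toNat) with hf2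
      have h1 := sum_update_neg (hsym k) f1
      have h2 := sum_update_neg (hsym k) f2
      have h3 : ∑ i ∈ S, (w i : ℂ) * (f1 i
            + f1 (Function.update i (Fin.castSucc k) (-(i (Fin.castSucc k)))))
          = ∑ i ∈ S, (w i : ℂ) * (f2 i
            + f2 (Function.update i (Fin.castSucc k) (-(i (Fin.castSucc k))))) := by
        refine sum_congr rfl fun i hi => ?_
        have := zpow_add_zpow_neg_mul_reflSum (hz (Fin.castSucc k)) (hy (Fin.castSucc k))
          ((hstep i hi).1 (Fin.castSucc k))
        simp only [hf1, hf2, hrk, Function.update_self]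
        linear_combination -(w i : ℂ) * r i * this
      simp only [mul_add, sum_add_distrib] at h3
      rw [h1, h2] at h3
      have h4 : ∑ i ∈ S, (w i : ℂ) * f1 i = ∑ i ∈ S, (w i : ℂ) * f2 i := by
        linear_combination h3 / 2
      calc _ = ∑ i ∈ S, (w i : ℂ) * f1 i := by
            refine sum_congr rfl fun i _ => ?_
            rw [prod_insert hkT]
            simp only [hf1, hr]
            ring
        _ = ∑ i ∈ S, (w i : ℂ) * f2 i := h4
        _ = _ := by
            refine sum_congr rfl fun i _ => ?_
            rw [hc, prod_insert hk']
            simp only [hf2, hr]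
            ring
  have h := key univ
  simp only [compl_univ, prod_empty, mul_one] at h
  rw [h, mul_sum]
  refine sum_congr rfl fun i _ => ?_
  rw [prod_mul_distrib]
  ring

/-- Total weight of the walks of length `n` with steps in `S` which start at `y - (1, …, 1)` and
never leave the orthant. -/
def shiftedWalkWeight (S : Finset (Fin (d + 1) → ℤ)) (w : (Fin (d + 1) → ℤ) → ℝ) :
    ℕ → (Fin (d + 1) → ℤ) → ℝ
  | 0, y => if ∀ j, 1 ≤ y j then 1 else 0
  | n + 1, y => if ∀ j, 1 ≤ y j then ∑ i ∈ S, w i * shiftedWalkWeight S w n (y + i) else 0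

theorem sum_walks_eq (n : ℕ) (y : Fin (d + 1) → ℤ) :
    (∑ f : Fin n → {i // i ∈ S},
      if ∀ m : ℕ, m ≤ n → ∀ j : Fin (d + 1), 1 ≤ y j +
          ∑ k ∈ Finset.univ.filter (fun k : Fin n => (k : ℕ) < m), ((f k : Fin (d + 1) → ℤ) j)
      then ∏ k : Fin n, w (f k) else 0) = shiftedWalkWeight S w n y := by
  induction n generalizing y with
  | zero => simp [shiftedWalkWeight]
  | succ n ih =>
    rw [← (Fin.consEquiv fun _ : Fin (n + 1) => {i // i ∈ S}).sum_comp, Fintype.sum_prod_type,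
      shiftedWalkWeight]
    have hiff : ∀ (i : {i // i ∈ S}) (f : Fin n → {i // i ∈ S}),
        (∀ m : ℕ, m ≤ n + 1 → ∀ j : Fin (d + 1), 1 ≤ y j +
          ∑ k ∈ Finset.univ.filter (fun k : Fin (n + 1) => (k : ℕ) < m),
            ((Fin.consEquiv (fun _ : Fin (n + 1) => {i // i ∈ S}) (i, f) k : Fin (d + 1) → ℤ) j))
        ↔ (∀ j, 1 ≤ y j) ∧ ∀ m : ℕ, m ≤ n → ∀ j : Fin (d + 1), 1 ≤ (y + i) j +
          ∑ k ∈ Finset.univ.filter (fun k : Fin n => (k : ℕ) < m),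
            ((f k : Fin (d + 1) → ℤ) j) := by
      intro i f
      have hs : ∀ m j, ∑ k ∈ Finset.univ.filter (fun k : Fin (n + 1) => (k : ℕ) < m + 1),
            ((Fin.consEquiv (fun _ : Fin (n + 1) => {i // i ∈ S}) (i, f) k : Fin (d + 1) → ℤ) j)
          = (i : Fin (d + 1) → ℤ) j + ∑ k ∈ Finset.univ.filter (fun k : Fin n => (k : ℕ) < m),
            ((f k : Fin (d + 1) → ℤ) j) := by
        intro m j
        rw [sum_filter, Fin.sum_univ_succ, sum_filter]
        simp [Fin.consEquiv]
      constructor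
      · intro h
        refine ⟨fun j => by simpa using h 0 (Nat.zero_le _) j, fun m hm j => ?_⟩
        have := h (m + 1) (by omega) j
        rw [hs] at this
        simp only [Pi.add_apply]
        linarith
      · rintro ⟨h0, h⟩ m hm j
        cases m with
        | zero => simpa using h0 j
        | succ m =>
          have := h m (by omega) j
          rw [hs]
          simp only [Pi.add_apply] at this
          linarith
    simp only [hiff]
    by_cases hy : ∀ j, 1 ≤ y j
    · rw [if_pos hy, ← sum_coe_sort S]
      refine sum_congr rfl fun i _ => ?_
      rw [← ih, mul_sum]
      refine sum_congr rfl fun f _ => ?_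
      simp [hy, Fin.consEquiv, Fin.prod_univ_succ]
    · simp [hy]

theorem walkWeight_eq (n : ℕ) : walkWeight (d + 1) S w n = shiftedWalkWeight S w n 1 := by
  rw [← sum_walks_eq, walkWeight]
  simp

end Walks

section Exact

variable {d : ℕ} {S : Finset (Fin (d + 1) → ℤ)} {w : (Fin (d + 1) → ℤ) → ℝ}

theorem zOf_castSucc (ε : ℝ) (θ : Fin (d + 1) → ℝ) (j : Fin d) :
    zOf d ε θ (Fin.castSucc j) = Complex.exp (Complex.I * θ (Fin.castSucc j)) := by
  simp [zOf, (Fin.castSucc_lt_last j).ne]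

theorem zOf_last (ε : ℝ) (θ : Fin (d + 1) → ℝ) :
    zOf d ε θ (Fin.last d) = (1 - ε : ℝ) * Complex.exp (Complex.I * θ (Fin.last d)) := by
  simp [zOf]

theorem norm_zOf_castSucc (ε : ℝ) (θ : Fin (d + 1) → ℝ) (j : Fin d) :
    ‖zOf d ε θ (Fin.castSucc j)‖ = 1 := by
  rw [zOf_castSucc, mul_comm, Complex.norm_exp_ofReal_mul_I]

theorem norm_zOf_last {ε : ℝ} (hε1 : ε < 1) (θ : Fin (d + 1) → ℝ) :
    ‖zOf d ε θ (Fin.last d)‖ = 1 - ε := by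
  rw [zOf_last, norm_mul, mul_comm Complex.I, Complex.norm_exp_ofReal_mul_I, mul_one,
    Complex.norm_real, Real.norm_of_nonneg (by linarith)]

theorem zOf_ne_zero {ε : ℝ} (hε1 : ε < 1) (θ : Fin (d + 1) → ℝ) (j : Fin (d + 1)) :
    zOf d ε θ j ≠ 0 := by
  rw [← norm_pos_iff]
  induction j using Fin.lastCases with
  | last => rw [norm_zOf_last hε1]; linarith
  | cast j => rw [norm_zOf_castSucc]; exact one_pos

theorem one_sub_zOf_last_ne_zero {ε : ℝ} (hε0 : 0 < ε) (hε1 : ε < 1) (θ : Fin (d + 1) → ℝ) :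
    1 - zOf d ε θ (Fin.last d) ≠ 0 := by
  intro h
  have := norm_zOf_last hε1 θ
  rw [← sub_eq_zero.mp h, norm_one] at this
  linarith

theorem continuous_zOf (ε : ℝ) (j : Fin (d + 1)) : Continuous fun θ => zOf d ε θ j := by
  unfold zOf
  fun_prop

theorem continuous_step_sum {ε : ℝ} (hε1 : ε < 1) (T : Finset (Fin (d + 1) → ℤ)) :
    Continuous fun θ => ∑ i ∈ T, (w i : ℂ) *
      ∏ j : Fin d, zOf d ε θ (Fin.castSucc j) ^ (i (Fin.castSucc j)) :=
  continuous_finsetSum _ fun _ _ => continuous_const.mul <| continuous_finsetProd _ fun _ _ =>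
    (continuous_zOf ε _).zpow₀ _ fun θ => Or.inl (zOf_ne_zero hε1 θ _)

theorem continuous_binomTail {X : Type*} [TopologicalSpace X] {U R : X → ℂ} (hU : Continuous U)
    (hR : Continuous R) (n m : ℕ) : Continuous fun x => binomTail (U x) (R x) n m := by
  induction n generalizing m with
  | zero => cases m <;> simp only [binomTail] <;> fun_prop
  | succ n ih =>
    cases m with
    | zero => exact (hU.add hR).mul (ih 0)
    | succ m => exact (hU.mul (ih (m + 1))).add (ih m)

theorem differentiable_binomTail_zero {U : ℂ → ℂ} (hU : Differentiable ℂ U) (n m : ℕ) :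
    Differentiable ℂ fun x => binomTail (U x) 0 n m := by
  induction n generalizing m with
  | zero => cases m <;> simp only [binomTail] <;> fun_prop
  | succ n ih =>
    cases m with
    | zero =>
      simp only [binomTail, add_zero]
      exact hU.mul (ih 0)
    | succ m => exact (hU.mul (ih (m + 1))).add (ih m)

/-- The factor of the orbit-sum integrand belonging to the last coordinate. -/
def lastFactor (d : ℕ) (S : Finset (Fin (d + 1) → ℤ)) (w : (Fin (d + 1) → ℤ) → ℝ) (n m : ℕ)
    (z : Fin (d + 1) → ℂ) : ℂ :=
  z (Fin.last d) * ((z (Fin.last d) ^ m)⁻¹ *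
      (QC d S w z + z (Fin.last d) * AC d S w z + BC d S w z / z (Fin.last d)) ^ n
    - AC d S w z ^ m * binomTail (QC d S w z + z (Fin.last d) * AC d S w z)
      (BC d S w z / z (Fin.last d)) n m) * (1 - z (Fin.last d))⁻¹

theorem lastFactor_zero (n : ℕ) (z : Fin (d + 1) → ℂ) : lastFactor d S w n 0 z = 0 := by
  simp [lastFactor, binomTail_zero_right]

theorem lastFactor_step {z : Fin (d + 1) → ℂ} (hz : z (Fin.last d) ≠ 0) (n m : ℕ) :
    AC d S w z * lastFactor d S w n m z + QC d S w z * lastFactor d S w n (m + 1) z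
        + BC d S w z * lastFactor d S w n (m + 2) z
      = lastFactor d S w (n + 1) (m + 1) z + z (Fin.last d) * (z (Fin.last d) *
        AC d S w z ^ (m + 2) * binomTail (QC d S w z + z (Fin.last d) * AC d S w z) 0 n (m + 1))
        * (1 - z (Fin.last d))⁻¹ := by
  simp only [lastFactor]
  generalize z (Fin.last d) = x at *
  generalize (1 - x)⁻¹ = c
  generalize QC d S w z = q
  generalize AC d S w z = a
  generalize BC d S w z = b
  have h := binomTail_eq (q + x * a) (b / x) n (m + 1)
  have h' : b * binomTail (q + x * a) (b / x) n (m + 2)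
      = x * (binomTail (q + x * a) (b / x) n (m + 1) - binomTail (q + x * a) 0 n (m + 1)) := by
    rw [h]
    field_simp
    ring
  rw [binomTail.eq_4]
  have hp : a * (x ^ m)⁻¹ + q * (x ^ (m + 1))⁻¹ + b * (x ^ (m + 2))⁻¹
      = (x ^ (m + 1))⁻¹ * (q + x * a + b / x) := by
    field_simp
    ring
  linear_combination x * c * (q + x * a + b / x) ^ n * hp - x * c * a ^ (m + 2) * h'

theorem continuous_reflSum_zOf {ε : ℝ} (hε1 : ε < 1) (j : Fin (d + 1)) (m : ℕ) :
    Continuous fun θ => reflSum (zOf d ε θ j) m :=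
  continuous_finsetSum _ fun _ _ => ((continuous_zOf ε j).pow _).add
    (((continuous_zOf ε j).inv₀ fun θ => zOf_ne_zero hε1 θ j).pow _)

theorem continuous_lastFactor {ε : ℝ} (hε0 : 0 < ε) (hε1 : ε < 1) (n m : ℕ) :
    Continuous fun θ => lastFactor d S w n m (zOf d ε θ) := by
  have hA : Continuous fun θ => AC d S w (zOf d ε θ) := continuous_step_sum hε1 _
  have hB : Continuous fun θ => BC d S w (zOf d ε θ) := continuous_step_sum hε1 _
  have hQ : Continuous fun θ => QC d S w (zOf d ε θ) := continuous_step_sum hε1 _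
  have hl : Continuous fun θ => zOf d ε θ (Fin.last d) := continuous_zOf ε _
  have hU := hQ.add (hl.mul hA)
  have hR := hB.div hl fun θ => zOf_ne_zero hε1 θ _
  refine (hl.mul (Continuous.sub (Continuous.mul ?_ ?_) (Continuous.mul ?_ ?_))).mul ?_
  · exact (hl.pow m).inv₀ fun θ => pow_ne_zero _ (zOf_ne_zero hε1 θ _)
  · exact (hU.add hR).pow n
  · exact hA.pow m
  · exact continuous_binomTail hU hR n m
  · exact (continuous_const.sub hl).inv₀ fun θ => one_sub_zOf_last_ne_zero hε0 hε1 θ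

theorem setIntegral_analytic_last {ε : ℝ} (hε0 : 0 < ε) (hε1 : ε < 1) (y : Fin (d + 1) → ℕ)
    (n m k : ℕ) :
    ∫ θ in cell d, (∏ j : Fin d, reflSum (zOf d ε θ (Fin.castSucc j)) (y (Fin.castSucc j))) *
      (zOf d ε θ (Fin.last d) * (zOf d ε θ (Fin.last d) * AC d S w (zOf d ε θ) ^ k *
        binomTail (QC d S w (zOf d ε θ) + zOf d ε θ (Fin.last d) * AC d S w (zOf d ε θ)) 0 n m)
        * (1 - zOf d ε θ (Fin.last d))⁻¹) = 0 := by
  have hA : Continuous fun θ => AC d S w (zOf d ε θ) := continuous_step_sum hε1 _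
  have hQ : Continuous fun θ => QC d S w (zOf d ε θ) := continuous_step_sum hε1 _
  have hl : Continuous fun θ => zOf d ε θ (Fin.last d) := continuous_zOf ε _
  refine setIntegral_cell_eq_zero (ρ := 1 - ε) ?_ (by linarith) ?_
  · refine (continuous_finsetProd _ fun _ _ => continuous_reflSum_zOf hε1 _ _).mul
      ((hl.mul ((hl.mul (hA.pow k)).mul
        (continuous_binomTail (hQ.add (hl.mul hA)) continuous_const n m))).mul
        ((continuous_const.sub hl).inv₀ fun θ => one_sub_zOf_last_ne_zero hε0 hε1 θ))
  · intro θ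
    have hz : ∀ s (j : Fin d), zOf d ε (Function.update θ (Fin.last d) s) (Fin.castSucc j)
        = zOf d ε θ (Fin.castSucc j) := by
      intro s j
      rw [zOf_castSucc, zOf_castSucc, Function.update_of_ne (Fin.castSucc_lt_last j).ne]
    refine ⟨fun x => (∏ j : Fin d, reflSum (zOf d ε θ (Fin.castSucc j)) (y (Fin.castSucc j))) *
      (x * (x * AC d S w (zOf d ε θ) ^ k *
        binomTail (QC d S w (zOf d ε θ) + x * AC d S w (zOf d ε θ)) 0 n m)
        * (1 - x)⁻¹), ?_, by simp, ?_⟩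
    · intro x hx
      have hx1 : 1 - x ≠ 0 := by
        intro h
        rw [← sub_eq_zero.mp h, mem_closedBall_zero_iff, norm_one] at hx
        linarith
      have hb := differentiable_binomTail_zero
        (U := fun x => QC d S w (zOf d ε θ) + x * AC d S w (zOf d ε θ)) (by fun_prop) n m
      refine DifferentiableAt.differentiableWithinAt ?_
      fun_prop (disch := assumption)
    · intro s
      have hA' : AC d S w (zOf d ε (Function.update θ (Fin.last d) s))
          = AC d S w (zOf d ε θ) := by
        simp only [AC, hz]
      have hQ' : QC d S w (zOf d ε (Function.update θ (Fin.last d) s))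
          = QC d S w (zOf d ε θ) := by
        simp only [QC, hz]
      simp only [hz, hA', hQ', zOf_last, Function.update_self]

theorem setIntegral_walk_zero {ε : ℝ} (hε0 : 0 < ε) (hε1 : ε < 1) (y : Fin (d + 1) → ℕ) :
    ∫ θ in cell d, (∏ j : Fin d, reflSum (zOf d ε θ (Fin.castSucc j)) (y (Fin.castSucc j) + 1)) *
      lastFactor d S w 0 (y (Fin.last d) + 1) (zOf d ε θ) = (2 * π) ^ (d + 1) := by
  set f : Fin (d + 1) → ℝ → ℂ := fun j => if j = Fin.last d then
      fun s => (fun x => ((1 * x) ^ (y j))⁻¹ * (1 - 1 * x * 1)⁻¹)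
        ((1 - ε : ℝ) * Complex.exp (Complex.I * s))
    else fun s => reflSum ((1 : ℝ) * Complex.exp (Complex.I * s)) (y j + 1) with hf
  have h1 : ∀ θ, (∏ j : Fin d, reflSum (zOf d ε θ (Fin.castSucc j)) (y (Fin.castSucc j) + 1)) *
      lastFactor d S w 0 (y (Fin.last d) + 1) (zOf d ε θ) = ∏ j, f j (θ j) := by
    intro θ
    rw [Fin.prod_univ_castSucc]
    congr 1
    · refine prod_congr rfl fun j _ => ?_
      simp only [hf, if_neg (Fin.castSucc_lt_last j).ne, zOf_castSucc, Complex.ofReal_one,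
        one_mul]
    · have hz := zOf_ne_zero hε1 θ (Fin.last d)
      simp only [hf, if_true, ← zOf_last, lastFactor, binomTail, pow_zero, mul_one, mul_zero,
        sub_zero, one_mul]
      congr 1
      field_simp
      ring
  simp only [h1]
  rw [setIntegral_cell_prod, Fin.prod_univ_castSucc]
  have h2 : ∀ j : Fin d, ∫ s in Set.Ioc (-(π / 4)) (-(π / 4) + 2 * π), f (Fin.castSucc j) s
      = 2 * π := by
    intro j
    simp only [hf, if_neg (Fin.castSucc_lt_last j).ne]
    rw [setIntegral_Ioc_circle (fun x => reflSum x (y (Fin.castSucc j) + 1)) 1,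
      circleAverage_reflSum]
    simp
  have h3 : ∫ s in Set.Ioc (-(π / 4)) (-(π / 4) + 2 * π), f (Fin.last d) s = 2 * π := by
    simp only [hf, if_true]
    rw [setIntegral_Ioc_circle (fun x => ((1 * x) ^ (y (Fin.last d)))⁻¹ * (1 - 1 * x * 1)⁻¹)
      (1 - ε), circleAverage_inv_pow_mul_inv_one_sub (by linarith) one_ne_zero (by simpa)]
    simp
  simp only [h2, h3, prod_const, card_univ, Fintype.card_fin]
  ring

theorem setIntegral_walk (hstep : ∀ i ∈ S, (∀ j, i j = -1 ∨ i j = 0 ∨ i j = 1) ∧ i ≠ 0)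
    (hsym : ∀ k : Fin d, SymmetricAxis (d + 1) S w (Fin.castSucc k))
    {ε : ℝ} (hε0 : 0 < ε) (hε1 : ε < 1) (n : ℕ) (y : Fin (d + 1) → ℤ) (hy : ∀ j, 0 ≤ y j) :
    ∫ θ in cell d,
      (∏ j : Fin d, reflSum (zOf d ε θ (Fin.castSucc j)) (y (Fin.castSucc j)).toNat) *
      lastFactor d S w n (y (Fin.last d)).toNat (zOf d ε θ)
      = (2 * π) ^ (d + 1) * shiftedWalkWeight S w n y := by
  have hint : ∀ (n : ℕ) (y : Fin (d + 1) → ℤ), IntegrableOn (fun θ =>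
      (∏ j : Fin d, reflSum (zOf d ε θ (Fin.castSucc j)) (y (Fin.castSucc j)).toNat) *
      lastFactor d S w n (y (Fin.last d)).toNat (zOf d ε θ)) (cell d) := fun n y =>
    integrableOn_cell ((continuous_finsetProd _ fun _ _ => continuous_reflSum_zOf hε1 _ _).mul
      (continuous_lastFactor hε0 hε1 _ _))
  have hbdry : ∀ (n : ℕ) (y : Fin (d + 1) → ℤ), (∀ j, 0 ≤ y j) → (¬ ∀ j, 1 ≤ y j) →
      ∫ θ in cell d,
        (∏ j : Fin d, reflSum (zOf d ε θ (Fin.castSucc j)) (y (Fin.castSucc j)).toNat) *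
        lastFactor d S w n (y (Fin.last d)).toNat (zOf d ε θ)
        = (2 * π) ^ (d + 1) * shiftedWalkWeight S w n y := by
    intro n y hy hy1
    have hw0 : shiftedWalkWeight S w n y = 0 := by
      cases n <;> simp only [shiftedWalkWeight, if_neg hy1]
    rw [hw0, Complex.ofReal_zero, mul_zero]
    push Not at hy1
    obtain ⟨j, hj⟩ := hy1
    have hj0 : (y j).toNat = 0 := by omega
    refine integral_eq_zero_of_ae (Eventually.of_forall fun θ => ?_)
    induction j using Fin.lastCases with
    | last => simp only [hj0, lastFactor_zero, mul_zero, Pi.zero_apply]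
    | cast j =>
      simp only [Pi.zero_apply]
      rw [prod_eq_zero (mem_univ j), zero_mul]
      rw [hj0]
      rfl
  induction n generalizing y with
  | zero =>
    by_cases hy1 : ∀ j, 1 ≤ y j
    · have := setIntegral_walk_zero (S := S) (w := w) hε0 hε1 fun j => (y j).toNat - 1
      have h : ∀ j, (y j).toNat - 1 + 1 = (y j).toNat := fun j => by
        have := hy1 j
        omega
      simp only [h] at this
      rw [this, shiftedWalkWeight, if_pos hy1]
      simp
    · exact hbdry 0 y hy hy1
  | succ n ih =>
    by_cases hy1 : ∀ j, 1 ≤ y j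
    · rw [shiftedWalkWeight, if_pos hy1]
      have hyi : ∀ i ∈ S, ∀ j, 0 ≤ (y + i) j := by
        intro i hi j
        have h1 := hy1 j
        simp only [Pi.add_apply]
        rcases (hstep i hi).1 j with h | h | h <;> omega
      have hsum : ((2 * π) ^ (d + 1) * ((∑ i ∈ S, w i * shiftedWalkWeight S w n (y + i) : ℝ) : ℂ))
          = ∑ i ∈ S, (w i : ℂ) * ∫ θ in cell d, (∏ j : Fin d,
              reflSum (zOf d ε θ (Fin.castSucc j)) ((y + i) (Fin.castSucc j)).toNat) *
              lastFactor d S w n ((y + i) (Fin.last d)).toNat (zOf d ε θ) := by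
        push_cast
        rw [mul_sum]
        refine sum_congr rfl fun i hi => ?_
        rw [ih (y + i) (hyi i hi)]
        ring
      obtain ⟨m, hm⟩ : ∃ m : ℕ, y (Fin.last d) = m + 1 :=
        ⟨(y (Fin.last d) - 1).toNat, by have := hy1 (Fin.last d); omega⟩
      have hm0 : ((m : ℤ) + 1).toNat = m + 1 := by omega
      have hm1 : ((m : ℤ) + 1 + -1).toNat = m := by omega
      have hm2 : ((m : ℤ) + 1 + 1).toNat = m + 2 := by omega
      simp only [← integral_const_mul] at hsum
      rw [hsum, ← integral_finsetSum _ fun i _ => (hint n (y + i)).const_mul _]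
      have hpt : ∀ θ, ∑ i ∈ S, (w i : ℂ) * ((∏ j : Fin d,
              reflSum (zOf d ε θ (Fin.castSucc j)) ((y + i) (Fin.castSucc j)).toNat) *
              lastFactor d S w n ((y + i) (Fin.last d)).toNat (zOf d ε θ))
          = (∏ j : Fin d, reflSum (zOf d ε θ (Fin.castSucc j)) (y (Fin.castSucc j)).toNat) *
              lastFactor d S w (n + 1) (y (Fin.last d)).toNat (zOf d ε θ)
            + (∏ j : Fin d, reflSum (zOf d ε θ (Fin.castSucc j)) (y (Fin.castSucc j)).toNat) *
              (zOf d ε θ (Fin.last d) * (zOf d ε θ (Fin.last d) *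
                AC d S w (zOf d ε θ) ^ (m + 2) *
                binomTail (QC d S w (zOf d ε θ) + zOf d ε θ (Fin.last d)
                  * AC d S w (zOf d ε θ)) 0 n (m + 1)) * (1 - zOf d ε θ (Fin.last d))⁻¹) := by
        intro θ
        simp only [Pi.add_apply]
        rw [sum_step_reflSum hstep hsym (zOf_ne_zero hε1 θ) hy1
          (fun e => lastFactor d S w n (y (Fin.last d) + e).toNat (zOf d ε θ)),
          sum_mul_last hstep _
          (fun e => lastFactor d S w n (y (Fin.last d) + e).toNat (zOf d ε θ)), ← mul_add, hm]
        simp only [add_zero, hm0, hm1, hm2]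
        rw [lastFactor_step (zOf_ne_zero hε1 θ _)]
      simp only [hpt]
      rw [integral_add (hint (n + 1) y),
        setIntegral_analytic_last hε0 hε1 (fun j => (y j).toNat) n (m + 1) (m + 2), add_zero]
      have hi := ((integrable_finsetSum S fun i _ =>
        (hint n (y + i)).const_mul (w i : ℂ)).sub (hint (n + 1) y))
      refine hi.congr (Eventually.of_forall fun θ => ?_)
      simp only [Pi.sub_apply, hpt, add_sub_cancel_left]
    · exact hbdry (n + 1) y hy hy1

/-- The integrand obtained by extracting the coefficient of `t ^ n`. -/
def residueKernel (d : ℕ) (S : Finset (Fin (d + 1) → ℤ)) (w : (Fin (d + 1) → ℤ) → ℝ) (n : ℕ)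
    (z : Fin (d + 1) → ℂ) : ℂ :=
  (∏ j : Fin d, (1 + z (Fin.castSucc j))) / (1 - z (Fin.last d)) *
    (SbarC d S w z ^ n - z (Fin.last d) * AC d S w z *
      binomTail (QC d S w z + z (Fin.last d) * AC d S w z) (BC d S w z / z (Fin.last d)) n 1)

theorem reflSum_one_mul_lastFactor
    (hstep : ∀ i ∈ S, (∀ j, i j = -1 ∨ i j = 0 ∨ i j = 1) ∧ i ≠ 0)
    {z : Fin (d + 1) → ℂ} (hz : z (Fin.last d) ≠ 0) (n : ℕ) :
    (∏ j : Fin d, reflSum (z (Fin.castSucc j)) 1) * lastFactor d S w n 1 z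
      = residueKernel d S w n z := by
  have h : ∀ j : Fin d, reflSum (z (Fin.castSucc j)) 1 = 1 + z (Fin.castSucc j) := fun j => by
    simp [reflSum, add_comm]
  simp only [h, residueKernel, SbarC_eq hstep, lastFactor, pow_one]
  field_simp

theorem continuous_residueKernel
    (hstep : ∀ i ∈ S, (∀ j, i j = -1 ∨ i j = 0 ∨ i j = 1) ∧ i ≠ 0)
    {ε : ℝ} (hε0 : 0 < ε) (hε1 : ε < 1) (n : ℕ) :
    Continuous fun θ => residueKernel d S w n (zOf d ε θ) := by
  simp only [← reflSum_one_mul_lastFactor hstep (zOf_ne_zero hε1 _ _)]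
  exact (continuous_finsetProd _ fun _ _ => continuous_reflSum_zOf hε1 _ _).mul
    (continuous_lastFactor hε0 hε1 _ _)

theorem setIntegral_residueKernel
    (hstep : ∀ i ∈ S, (∀ j, i j = -1 ∨ i j = 0 ∨ i j = 1) ∧ i ≠ 0)
    (hsym : ∀ k : Fin d, SymmetricAxis (d + 1) S w (Fin.castSucc k))
    {ε : ℝ} (hε0 : 0 < ε) (hε1 : ε < 1) (n : ℕ) :
    ∫ θ in cell d, residueKernel d S w n (zOf d ε θ)
      = (2 * π) ^ (d + 1) * walkWeight (d + 1) S w n := by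
  rw [walkWeight_eq, ← setIntegral_walk hstep hsym hε0 hε1 n 1 fun _ => zero_le_one]
  simp only [← reflSum_one_mul_lastFactor hstep (zOf_ne_zero hε1 _ _), Pi.one_apply,
    Int.toNat_one]

end Exact

section Bounds

variable {d : ℕ} {S : Finset (Fin (d + 1) → ℤ)} {w : (Fin (d + 1) → ℤ) → ℝ}

/-- Total weight of the steps with last coordinate `e`. -/
def layerWeight (S : Finset (Fin (d + 1) → ℤ)) (w : (Fin (d + 1) → ℤ) → ℝ) (e : ℤ) : ℝ :=
  ∑ i ∈ S.filter fun i => i (Fin.last d) = e, w i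

theorem layerWeight_nonneg (hw : ∀ i ∈ S, 0 < w i) (e : ℤ) : 0 ≤ layerWeight S w e :=
  sum_nonneg fun i hi => (hw i (mem_filter.mp hi).1).le

theorem layerWeight_pos (hw : ∀ i ∈ S, 0 < w i) {e : ℤ} (he : ∃ i ∈ S, i (Fin.last d) = e) :
    0 < layerWeight S w e := by
  obtain ⟨i, hi, hie⟩ := he
  exact sum_pos (fun i hi => hw i (mem_filter.mp hi).1) ⟨i, mem_filter.mpr ⟨hi, hie⟩⟩

theorem sum_mul_last_real (hstep : ∀ i ∈ S, (∀ j, i j = -1 ∨ i j = 0 ∨ i j = 1) ∧ i ≠ 0)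
    (g : ℤ → ℝ) :
    ∑ i ∈ S, w i * g (i (Fin.last d))
      = layerWeight S w (-1) * g (-1) + layerWeight S w 0 * g 0 + layerWeight S w 1 * g 1 := by
  simp only [layerWeight, sum_filter, sum_mul, ← sum_add_distrib]
  refine sum_congr rfl fun i hi => ?_
  rcases (hstep i hi).1 (Fin.last d) with h | h | h <;> simp [h]

theorem S1_eq (hstep : ∀ i ∈ S, (∀ j, i j = -1 ∨ i j = 0 ∨ i j = 1) ∧ i ≠ 0) :
    S1 d S w = layerWeight S w (-1) + layerWeight S w 0 + layerWeight S w 1 := by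
  simpa [S1] using sum_mul_last_real (w := w) hstep fun _ => 1

theorem norm_step_sum_le (hw : ∀ i ∈ S, 0 < w i) {z : Fin (d + 1) → ℂ}
    (hz : ∀ j : Fin d, ‖z (Fin.castSucc j)‖ = 1) (e : ℤ) :
    ‖∑ i ∈ S.filter fun i => i (Fin.last d) = e,
      (w i : ℂ) * ∏ j : Fin d, z (Fin.castSucc j) ^ (i (Fin.castSucc j))‖
      ≤ layerWeight S w e := by
  refine norm_sum_le_of_le _ fun i hi => ?_
  rw [norm_mul, norm_prod, Complex.norm_real,
    Real.norm_of_nonneg (hw i (mem_filter.mp hi).1).le]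
  simp [norm_zpow, hz]

theorem norm_AC_le (hw : ∀ i ∈ S, 0 < w i) (ε : ℝ) (θ : Fin (d + 1) → ℝ) :
    ‖AC d S w (zOf d ε θ)‖ ≤ layerWeight S w (-1) :=
  norm_step_sum_le hw (norm_zOf_castSucc ε θ) _

theorem norm_QC_add_le (hw : ∀ i ∈ S, 0 < w i) {ε : ℝ} (hε0 : 0 < ε) (hε1 : ε < 1)
    (θ : Fin (d + 1) → ℝ) :
    ‖QC d S w (zOf d ε θ) + zOf d ε θ (Fin.last d) * AC d S w (zOf d ε θ)‖
      ≤ layerWeight S w 0 + layerWeight S w (-1) := by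
  refine (norm_add_le _ _).trans ?_
  rw [norm_mul, norm_zOf_last hε1]
  have h1 := norm_AC_le hw ε θ
  have h2 : ‖QC d S w (zOf d ε θ)‖ ≤ layerWeight S w 0 :=
    norm_step_sum_le hw (norm_zOf_castSucc ε θ) _
  nlinarith [norm_nonneg (AC d S w (zOf d ε θ))]

theorem norm_prod_zOf {ε : ℝ} (hε1 : ε < 1) (θ : Fin (d + 1) → ℝ) :
    ‖∏ j, zOf d ε θ j‖ = 1 - ε := by
  rw [Fin.prod_univ_castSucc, norm_mul, norm_prod, norm_zOf_last hε1]
  simp [norm_zOf_castSucc]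

theorem S1_pos (hstep : ∀ i ∈ S, (∀ j, i j = -1 ∨ i j = 0 ∨ i j = 1) ∧ i ≠ 0)
    (hw : ∀ i ∈ S, 0 < w i) (h1 : ∃ i ∈ S, i (Fin.last d) = 1) : 0 < S1 d S w := by
  rw [S1_eq hstep]
  linarith [layerWeight_nonneg hw 0, layerWeight_nonneg hw (-1), layerWeight_pos hw h1]

/-- The inner integral over `t` extracts a coefficient. -/
theorem setIntegral_GC_div_HC (hstep : ∀ i ∈ S, (∀ j, i j = -1 ∨ i j = 0 ∨ i j = 1) ∧ i ≠ 0)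
    (hw : ∀ i ∈ S, 0 < w i) (h1 : ∃ i ∈ S, i (Fin.last d) = 1)
    {γ : ℝ} (hγ0 : 0 < γ) (hγ1 : γ < 1)
    {ε : ℝ} (hε0 : 0 < ε) (hε1 : ε < 1) (n : ℕ) (θ : Fin (d + 1) → ℝ) :
    ∫ φ in Set.Ioo 0 (2 * π),
      GC d S w (zOf d ε θ) ((((1 - γ) / S1 d S w : ℝ) : ℂ) * Complex.exp (Complex.I * φ)) /
        HC d S w (zOf d ε θ) ((((1 - γ) / S1 d S w : ℝ) : ℂ) * Complex.exp (Complex.I * φ)) *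
        (((∏ j, zOf d ε θ j) *
          ((((1 - γ) / S1 d S w : ℝ) : ℂ) * Complex.exp (Complex.I * φ))) ^ (n + 1))⁻¹
      = (2 * π) • residueKernel d S w (n + 1) (zOf d ε θ) := by
  have hS := S1_pos hstep hw h1
  rw [setIntegral_Ioo_circle (fun t => GC d S w (zOf d ε θ) t / HC d S w (zOf d ε θ) t *
    (((∏ j, zOf d ε θ j) * t) ^ (n + 1))⁻¹)]
  congr 1
  set z := zOf d ε θ with hz
  set c := ∏ j, z j with hc
  set U := QC d S w z + z (Fin.last d) * AC d S w z with hU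
  set R := BC d S w z / z (Fin.last d) with hR
  have hcn : ‖c‖ = 1 - ε := norm_prod_zOf hε1 θ
  have hc0 : c ≠ 0 := norm_pos_iff.mp (by rw [hcn]; linarith)
  have hUn : ‖U‖ ≤ layerWeight S w 0 + layerWeight S w (-1) := norm_QC_add_le hw hε0 hε1 θ
  have hBn : ‖BC d S w z‖ ≤ layerWeight S w 1 :=
    norm_step_sum_le hw (norm_zOf_castSucc ε θ) _
  have hρ : 0 < 1 - ε := by linarith
  have hcU : ‖c * U‖ ≤ layerWeight S w 0 + layerWeight S w (-1) := by
    rw [norm_mul, hcn]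
    nlinarith [norm_nonneg U]
  have hcR : ‖c * R‖ ≤ layerWeight S w 1 := by
    rw [norm_mul, hcn, hR, norm_div, norm_zOf_last hε1, mul_div_cancel₀ _ hρ.ne']
    exact hBn
  have hlt : ∀ x ≤ S1 d S w, (1 - γ) / S1 d S w * x < 1 := by
    intro x hx
    have : (1 - γ) / S1 d S w * x ≤ (1 - γ) / S1 d S w * S1 d S w :=
      mul_le_mul_of_nonneg_left hx (div_nonneg (by linarith) hS.le)
    rw [div_mul_cancel₀ _ hS.ne'] at this
    linarith
  have hSe := S1_eq (w := w) hstep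
  have hb := layerWeight_nonneg hw 1
  have hVn : ‖c * (U + R)‖ ≤ S1 d S w := by
    rw [mul_add]
    exact (norm_add_le _ _).trans (by linarith)
  have key := circleAverage_diagonal (r := (1 - γ) / S1 d S w)
    (div_pos (by linarith) hS) hc0 (hlt _ (by linarith)) (hlt _ hVn)
    ((∏ j : Fin d, (1 + z (Fin.castSucc j))) / (1 - z (Fin.last d)))
    (z (Fin.last d) * AC d S w z) n
  rw [residueKernel, SbarC_eq hstep, ← hU, ← hR, ← key]
  congr 1
  funext t
  rw [GC, HC, SbarC_eq hstep, ← hU, ← hR, ← hc]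
  have e1 : t * c * (QC d S w z + 2 * z (Fin.last d) * AC d S w z)
      = c * t * (U + z (Fin.last d) * AC d S w z) := by
    rw [hU]
    ring
  rw [e1, mul_comm t c]
  congr 1
  rw [mul_assoc (1 - z (Fin.last d)), mul_div_mul_comm]

theorem measurableSet_Nparam (δ : ℝ) : MeasurableSet (Nparam d S w δ) :=
  Finset.measurableSet_biUnion _ fun _ _ => MeasurableSet.univ_pi fun _ => measurableSet_Ioo

theorem fullIntegral_eq (hstep : ∀ i ∈ S, (∀ j, i j = -1 ∨ i j = 0 ∨ i j = 1) ∧ i ≠ 0)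
    (hw : ∀ i ∈ S, 0 < w i) (h1 : ∃ i ∈ S, i (Fin.last d) = 1)
    {γ : ℝ} (hγ0 : 0 < γ) (hγ1 : γ < 1)
    {ε : ℝ} (hε0 : 0 < ε) (hε1 : ε < 1) (n : ℕ) (δ : ℝ) :
    fullIntegral d S w (n + 1) ε δ ((1 - γ) / S1 d S w)
      = ((2 * π) ^ (d + 1) : ℝ)⁻¹ •
        ∫ θ in Nparam d S w δ, residueKernel d S w (n + 1) (zOf d ε θ) := by
  rw [fullIntegral]
  simp only [setIntegral_GC_div_HC hstep hw h1 hγ0 hγ1 hε0 hε1]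
  rw [integral_smul, smul_smul]
  congr 1
  have : (2 * π) ≠ 0 := by positivity
  field_simp
  ring

theorem Nparam_subset_cell {δ : ℝ} (hδ : δ ≤ 1 / 4) : Nparam d S w δ ⊆ cell d := by
  intro θ hθ
  simp only [Nparam, Set.mem_iUnion, box, Set.mem_univ_pi, Set.mem_Ioo, argOf] at hθ
  obtain ⟨m, -, hm⟩ := hθ
  rw [cell, Set.mem_univ_pi]
  intro j
  obtain ⟨h1, h2⟩ := hm j
  have h3 : ((m j : ℕ) : ℝ) ≤ 3 := by exact_mod_cast Nat.le_of_lt_succ (m j).isLt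
  have h4 : (0 : ℝ) ≤ ((m j : ℕ) : ℝ) := Nat.cast_nonneg _
  have hπ := Real.pi_gt_three
  constructor <;> nlinarith

/-- Localization error in terms of a bound for the integrand off `N`. -/
theorem norm_walkWeight_sub_fullIntegral_le
    (hstep : ∀ i ∈ S, (∀ j, i j = -1 ∨ i j = 0 ∨ i j = 1) ∧ i ≠ 0)
    (hw : ∀ i ∈ S, 0 < w i) (h1 : ∃ i ∈ S, i (Fin.last d) = 1)
    (hsym : ∀ k : Fin d, SymmetricAxis (d + 1) S w (Fin.castSucc k))
    {γ : ℝ} (hγ0 : 0 < γ) (hγ1 : γ < 1)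
    {ε δ C : ℝ} (hε0 : 0 < ε) (hε1 : ε < 1) (hδ : δ ≤ 1 / 4) (n : ℕ)
    (hC : ∀ θ ∈ cell d \ Nparam d S w δ, ‖residueKernel d S w (n + 1) (zOf d ε θ)‖ ≤ C)
    (hC0 : 0 ≤ C) :
    ‖(walkWeight (d + 1) S w (n + 1) : ℂ)
      - fullIntegral d S w (n + 1) ε δ ((1 - γ) / S1 d S w)‖ ≤ C := by
  have hπ : (0 : ℝ) < (2 * π) ^ (d + 1) := by positivity
  have hwalk : (walkWeight (d + 1) S w (n + 1) : ℂ) = ((2 * π) ^ (d + 1) : ℝ)⁻¹ •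
      ∫ θ in cell d, residueKernel d S w (n + 1) (zOf d ε θ) := by
    rw [setIntegral_residueKernel hstep hsym hε0 hε1, Complex.real_smul]
    have : ((π : ℝ) : ℂ) ≠ 0 := by exact_mod_cast Real.pi_ne_zero
    push_cast
    field_simp
  have hvol : volume (cell d) < ⊤ := by
    rw [cell, Real.volume_pi_Ioc]
    exact ENNReal.prod_lt_top fun _ _ => ENNReal.ofReal_lt_top
  rw [hwalk, fullIntegral_eq hstep hw h1 hγ0 hγ1 hε0 hε1, ← smul_sub,
    ← setIntegral_sdiff (measurableSet_Nparam δ)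
      (integrableOn_cell (continuous_residueKernel hstep hε0 hε1 _)) (Nparam_subset_cell hδ),
    norm_smul, norm_inv, Real.norm_of_nonneg hπ.le, inv_mul_le_iff₀ hπ, mul_comm]
  refine (norm_setIntegral_le_of_norm_le_const
    ((measure_mono Set.sdiff_subset).trans_lt hvol) hC).trans ?_
  rw [← volume_real_cell]
  exact mul_le_mul_of_nonneg_left (measureReal_mono Set.sdiff_subset hvol.ne) hC0

end Bounds

section Decay

variable {d : ℕ} {S : Finset (Fin (d + 1) → ℤ)} {w : (Fin (d + 1) → ℤ) → ℝ}

/-- The argument of the monomial of the step `i` in `S̄`, at the point with angles `θ`. -/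
def phase (i : Fin (d + 1) → ℤ) (θ : Fin (d + 1) → ℝ) : ℝ :=
  ∑ j : Fin d, (i (Fin.castSucc j) : ℝ) * θ (Fin.castSucc j) - i (Fin.last d) * θ (Fin.last d)

theorem SbarC_zOf (ε : ℝ) (θ : Fin (d + 1) → ℝ) :
    SbarC d S w (zOf d ε θ) = ∑ i ∈ S, ((w i * (1 - ε) ^ (-(i (Fin.last d))) : ℝ) : ℂ) *
      Complex.exp (phase i θ * Complex.I) := by
  refine sum_congr rfl fun i _ => ?_
  simp only [zOf_castSucc, zOf_last, mul_zpow, ← Complex.exp_int_mul, ← Complex.exp_sum]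
  have : (phase i θ : ℂ) * Complex.I
      = ∑ j : Fin d, (i (Fin.castSucc j) : ℂ) * (Complex.I * θ (Fin.castSucc j))
        + ((-(i (Fin.last d)) : ℤ) : ℂ) * (Complex.I * θ (Fin.last d)) := by
    simp only [phase]
    push_cast
    rw [sub_mul, sum_mul, sub_eq_add_neg]
    congr 1
    · exact sum_congr rfl fun j _ => by ring
    · ring
  rw [this, Complex.exp_add]
  push_cast
  ring

theorem norm_sum_mul_exp_sq {ι : Type*} (s : Finset ι) (c ψ : ι → ℝ) :
    ‖∑ i ∈ s, (c i : ℂ) * Complex.exp (ψ i * Complex.I)‖ ^ 2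
      = (∑ i ∈ s, c i) ^ 2 - ∑ i ∈ s, ∑ k ∈ s, c i * c k * (1 - Real.cos (ψ i - ψ k)) := by
  rw [← Complex.normSq_eq_norm_sq, Complex.normSq_apply]
  simp only [Complex.re_sum, Complex.im_sum, Complex.re_ofReal_mul, Complex.im_ofReal_mul,
    Complex.exp_ofReal_mul_I_re, Complex.exp_ofReal_mul_I_im, pow_two, sum_mul_sum,
    ← sum_add_distrib, ← sum_sub_distrib]
  refine sum_congr rfl fun i _ => sum_congr rfl fun k _ => ?_
  rw [Real.cos_sub]
  ring

theorem exists_int_sq_le_one_sub_cos (x : ℝ) :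
    ∃ p : ℤ, 2 / π ^ 2 * (x - 2 * π * p) ^ 2 ≤ 1 - Real.cos x := by
  refine ⟨round (x / (2 * π)), ?_⟩
  have hπ := Real.pi_pos
  have h := abs_sub_round (x / (2 * π))
  have h1 : |x - 2 * π * round (x / (2 * π))| ≤ π := by
    have : x - 2 * π * round (x / (2 * π)) = 2 * π * (x / (2 * π) - round (x / (2 * π))) := by
      field_simp
    rw [this, abs_mul, abs_of_pos (by positivity)]
    nlinarith
  have h2 := Real.cos_le_one_sub_mul_cos_sq h1
  rw [show x - 2 * π * round (x / (2 * π)) = x - round (x / (2 * π)) * (2 * π) by ring,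
    Real.cos_sub_int_mul_two_pi] at h2
  rw [show x - 2 * π * round (x / (2 * π)) = x - round (x / (2 * π)) * (2 * π) by ring]
  linarith

theorem phase_update (i : Fin (d + 1) → ℤ) (k : Fin d) (v : ℤ) (θ : Fin (d + 1) → ℝ) :
    phase (Function.update i (Fin.castSucc k) v) θ
      = phase i θ + (v - i (Fin.castSucc k)) * θ (Fin.castSucc k) := by
  have h : ∀ j : Fin d, (Function.update i (Fin.castSucc k) v (Fin.castSucc j) : ℝ)
      * θ (Fin.castSucc j) = i (Fin.castSucc j) * θ (Fin.castSucc j)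
        + if j = k then (v - i (Fin.castSucc k)) * θ (Fin.castSucc k) else 0 := by
    intro j
    by_cases hjk : j = k
    · subst hjk
      simp
      ring
    · simp [hjk]
  simp only [phase, h, sum_add_distrib, sum_ite_eq', mem_univ, if_true]
  rw [Function.update_of_ne (Fin.castSucc_lt_last k).ne']
  ring

theorem abs_cast_step_le (hstep : ∀ i ∈ S, (∀ j, i j = -1 ∨ i j = 0 ∨ i j = 1) ∧ i ≠ 0)
    {i : Fin (d + 1) → ℤ} (hi : i ∈ S) (j : Fin (d + 1)) : |(i j : ℝ)| ≤ 1 := by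
  rcases (hstep i hi).1 j with h | h | h <;> simp [h]

theorem abs_phase_sub_le (hstep : ∀ i ∈ S, (∀ j, i j = -1 ∨ i j = 0 ∨ i j = 1) ∧ i ≠ 0)
    {i : Fin (d + 1) → ℤ} (hi : i ∈ S) {θ θ' : Fin (d + 1) → ℝ} {b : ℝ}
    (hb : ∀ j, |θ j - θ' j| ≤ b) : |phase i θ - phase i θ'| ≤ (d + 1) * b := by
  have hm : ∀ j, |(i j : ℝ) * (θ j - θ' j)| ≤ b := by
    intro j
    rw [abs_mul]
    nlinarith [abs_cast_step_le hstep hi j, hb j, abs_nonneg (θ j - θ' j), abs_nonneg (i j : ℝ)]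
  have e : phase i θ - phase i θ'
      = ∑ j : Fin d, (i (Fin.castSucc j) : ℝ) * (θ (Fin.castSucc j) - θ' (Fin.castSucc j))
        - i (Fin.last d) * (θ (Fin.last d) - θ' (Fin.last d)) := by
    simp only [phase, mul_sub, sum_sub_distrib]
    ring
  rw [e]
  refine (abs_sub _ _).trans ?_
  have h1 : |∑ j : Fin d, (i (Fin.castSucc j) : ℝ) *
      (θ (Fin.castSucc j) - θ' (Fin.castSucc j))| ≤ d * b := by
    refine (abs_sum_le_sum_abs _ _).trans ((sum_le_sum fun j _ => hm (Fin.castSucc j)).trans ?_)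
    simp
  linarith [hm (Fin.last d)]

theorem I_zpow_eq_of_dvd {a b : ℤ} (h : (4 : ℤ) ∣ a - b) : Complex.I ^ a = Complex.I ^ b := by
  obtain ⟨c, hc⟩ := h
  rw [show a = b + 4 * c by omega, zpow_add₀ Complex.I_ne_zero, zpow_mul]
  have : Complex.I ^ (4 : ℤ) = 1 := by exact_mod_cast Complex.I_pow_four
  rw [this, one_zpow, mul_one]

theorem mem_GammaIdx_of_dvd (hw : ∀ i ∈ S, 0 < w i) (hne : S.Nonempty)
    {m : Fin (d + 1) → Fin 4}
    (hm : ∀ j : Fin d, m (Fin.castSucc j) = 0 ∨ m (Fin.castSucc j) = 2)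
    (hq : ∀ i ∈ S, ∀ k ∈ S, (4 : ℤ) ∣
      (∑ j : Fin d, i (Fin.castSucc j) * ((m (Fin.castSucc j) : ℕ) : ℤ)
          - i (Fin.last d) * ((m (Fin.last d) : ℕ) : ℤ))
        - (∑ j : Fin d, k (Fin.castSucc j) * ((m (Fin.castSucc j) : ℕ) : ℤ)
          - k (Fin.last d) * ((m (Fin.last d) : ℕ) : ℤ))) :
    m ∈ GammaIdx d S w := by
  obtain ⟨k, hk⟩ := hne
  rw [GammaIdx, mem_filter]
  refine ⟨mem_univ _, hm, ?_⟩
  have hmon : ∀ i : Fin (d + 1) → ℤ, ∏ j, wOf d m j ^ i j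
      = Complex.I ^ (∑ j : Fin d, i (Fin.castSucc j) * ((m (Fin.castSucc j) : ℕ) : ℤ)
          + i (Fin.last d) * ((m (Fin.last d) : ℕ) : ℤ)) := by
    intro i
    rw [← Fin.sum_univ_castSucc (fun j => i j * ((m j : ℕ) : ℤ))]
    have : ∀ s : Finset (Fin (d + 1)), ∏ j ∈ s, wOf d m j ^ i j
        = Complex.I ^ (∑ j ∈ s, i j * ((m j : ℕ) : ℤ)) := by
      intro s
      induction s using Finset.induction_on with
      | empty => simp
      | insert a s ha ih =>
        rw [prod_insert ha, sum_insert ha, ih, zpow_add₀ Complex.I_ne_zero, wOf,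
          ← zpow_natCast, ← zpow_mul, mul_comm (i a)]
    exact this univ
  have heven : ∀ i : Fin (d + 1) → ℤ, (4 : ℤ) ∣
      2 * ∑ j : Fin d, i (Fin.castSucc j) * ((m (Fin.castSucc j) : ℕ) : ℤ) := by
    intro i
    rw [mul_sum]
    refine dvd_sum fun j _ => ?_
    rcases hm j with h | h
    · simp [h]
    · rw [h]
      exact ⟨i (Fin.castSucc j), by
        rw [show (((2 : Fin 4) : ℕ) : ℤ) = 2 from rfl]
        ring⟩
  have hSC : SC d S w (wOf d m) = (S1 d S w : ℂ) * Complex.I ^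
      (∑ j : Fin d, k (Fin.castSucc j) * ((m (Fin.castSucc j) : ℕ) : ℤ)
          + k (Fin.last d) * ((m (Fin.last d) : ℕ) : ℤ)) := by
    rw [SC, S1, Complex.ofReal_sum, sum_mul]
    refine sum_congr rfl fun i hi => ?_
    rw [hmon, I_zpow_eq_of_dvd]
    have h1 := hq i hi k hk
    have h2 := heven i
    have h3 := heven k
    omega
  have hS : 0 ≤ S1 d S w := sum_nonneg fun i hi => (hw i hi).le
  rw [hSC, norm_div, norm_mul, norm_mul, norm_prod, norm_zpow, Complex.norm_I,
    Complex.norm_real, Real.norm_of_nonneg hS]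
  simp [wOf]

/-- If all the monomials of `S̄` are nearly aligned, then the point lies in `N`. -/
theorem mem_Nparam_of_phases_close
    (hstep : ∀ i ∈ S, (∀ j, i j = -1 ∨ i j = 0 ∨ i j = 1) ∧ i ≠ 0)
    (hw : ∀ i ∈ S, 0 < w i)
    (hsym : ∀ k : Fin d, SymmetricAxis (d + 1) S w (Fin.castSucc k))
    (hfwd : ∀ k : Fin (d + 1), ∃ i ∈ S, i k = 1)
    (hbwd : ∃ i ∈ S, i (Fin.last d) = -1)
    {δ : ℝ} (hδ0 : 0 < δ) (hδ : (d + 2) * δ ≤ 1 / 4) {θ : Fin (d + 1) → ℝ} (hθ : θ ∈ cell d)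
    (hclose : ∀ i ∈ S, ∀ k ∈ S, ∃ p : ℤ,
      |phase i θ - phase k θ - 2 * π * p| ≤ δ / (d + 1)) :
    θ ∈ Nparam d S w δ := by
  have hd : (0 : ℝ) ≤ d := Nat.cast_nonneg d
  have hη : δ / (d + 1) ≤ δ := div_le_self hδ0.le (by linarith)
  have hη0 : 0 < δ / (d + 1) := by positivity
  have hηd : (d + 1) * (δ / (d + 1)) = δ := by field_simp
  set η := δ / (d + 1) with hηdef
  have hδ' : δ ≤ 1 / 8 := by nlinarith
  have hπ := Real.pi_gt_three
  rw [cell, Set.mem_univ_pi] at hθ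
  have hhat : ∀ k : Fin d, ∃ r : ℤ, (r = 0 ∨ r = 1) ∧ |θ (Fin.castSucc k) - π * r| ≤ η / 2 := by
    intro k
    obtain ⟨i, hi, hik⟩ := hfwd (Fin.castSucc k)
    obtain ⟨r, hr⟩ := hclose i hi _ (hsym k i hi).1
    rw [phase_update, hik, abs_le] at hr
    obtain ⟨h1, h2⟩ := hθ (Fin.castSucc k)
    push_cast at hr
    refine ⟨r, ?_, by rw [abs_le]; constructor <;> linarith⟩
    have hr0 : (-1 : ℝ) < r := by nlinarith
    have hr1 : (r : ℝ) < 2 := by nlinarith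
    have hr0' : -1 < r := by exact_mod_cast hr0
    have hr1' : r < 2 := by exact_mod_cast hr1
    omega
  choose r hr01 hr using hhat
  have hlast : ∃ M : Fin 4, |θ (Fin.last d) - (M : ℕ) * π / 2| ≤ δ / 2 := by
    obtain ⟨a, ha, hal⟩ := hfwd (Fin.last d)
    obtain ⟨b, hb, hbl⟩ := hbwd
    obtain ⟨p, hp⟩ := hclose b hb a ha
    set P : ℤ := 2 * p - ∑ j : Fin d, (b (Fin.castSucc j) - a (Fin.castSucc j)) * r j with hP
    have hsum : |∑ j : Fin d, ((b (Fin.castSucc j) : ℝ) - a (Fin.castSucc j)) *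
        (θ (Fin.castSucc j) - π * r j)| ≤ d * η := by
      have hj : ∀ j : Fin d, |((b (Fin.castSucc j) : ℝ) - a (Fin.castSucc j)) *
          (θ (Fin.castSucc j) - π * r j)| ≤ η := by
        intro j
        rw [abs_mul]
        have h1 := abs_sub (b (Fin.castSucc j) : ℝ) (a (Fin.castSucc j))
        have h2 := abs_cast_step_le hstep ha (Fin.castSucc j)
        have h3 := abs_cast_step_le hstep hb (Fin.castSucc j)
        nlinarith [hr j, abs_nonneg (θ (Fin.castSucc j) - π * r j)]
      refine (abs_sum_le_sum_abs _ _).trans ((sum_le_sum fun j _ => hj j).trans ?_)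
      simp
    have e : phase b θ - phase a θ - 2 * π * p
        = ∑ j : Fin d, ((b (Fin.castSucc j) : ℝ) - a (Fin.castSucc j)) *
            (θ (Fin.castSucc j) - π * r j) + (2 * θ (Fin.last d) - π * P) := by
      have e1 : ∑ j : Fin d, ((b (Fin.castSucc j) : ℝ) - a (Fin.castSucc j)) *
            (θ (Fin.castSucc j) - π * r j)
          = ∑ j : Fin d, (b (Fin.castSucc j) : ℝ) * θ (Fin.castSucc j)
            - ∑ j : Fin d, (a (Fin.castSucc j) : ℝ) * θ (Fin.castSucc j)
            - π * ∑ j : Fin d, ((b (Fin.castSucc j) : ℝ) - a (Fin.castSucc j)) * r j := by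
        rw [mul_sum, ← sum_sub_distrib, ← sum_sub_distrib]
        exact sum_congr rfl fun j _ => by ring
      rw [e1, hP, phase, phase, hal, hbl]
      push_cast
      ring
    rw [e, abs_le] at hp
    rw [abs_le] at hsum
    obtain ⟨h1, h2⟩ := hθ (Fin.last d)
    have hP0 : (-1 : ℝ) < P := by nlinarith
    have hP1 : (P : ℝ) < 4 := by nlinarith
    have hP0' : -1 < P := by exact_mod_cast hP0
    have hP1' : P < 4 := by exact_mod_cast hP1
    refine ⟨⟨P.toNat, by omega⟩, ?_⟩
    have hPn : ((P.toNat : ℕ) : ℝ) = P := by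
      have : ((P.toNat : ℕ) : ℤ) = P := Int.toNat_of_nonneg (by omega)
      exact_mod_cast this
    simp only [hPn]
    rw [abs_le]
    constructor <;> nlinarith
  obtain ⟨M, hM⟩ := hlast
  set m : Fin (d + 1) → Fin 4 := Fin.snoc (fun j => if r j = 0 then 0 else 2) M with hm
  have hmc : ∀ j : Fin d, m (Fin.castSucc j) = if r j = 0 then 0 else 2 := fun j => by simp [hm]
  have hdist : ∀ j, |θ j - argOf d m j| ≤ δ / 2 := by
    intro j
    refine Fin.lastCases ?_ (fun j => ?_) j
    · simpa [argOf, hm] using hM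
    · have e : argOf d m (Fin.castSucc j) = π * r j := by
        rw [argOf, hmc]
        rcases hr01 j with h | h
        · simp [h]
        · simp [h]
      rw [e]
      linarith [hr j]
  simp only [Nparam, Set.mem_iUnion]
  refine ⟨m, mem_GammaIdx_of_dvd hw ⟨_, (hfwd (Fin.last d)).choose_spec.1⟩ ?_ ?_, ?_⟩
  · intro j
    rw [hmc]
    by_cases h : r j = 0 <;> simp [h]
  · intro i hi k hk
    obtain ⟨p, hp⟩ := hclose i hi k hk
    have hph : ∀ i : Fin (d + 1) → ℤ, phase i (argOf d m) = π / 2 *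
        ((∑ j : Fin d, i (Fin.castSucc j) * ((m (Fin.castSucc j) : ℕ) : ℤ)
          - i (Fin.last d) * ((m (Fin.last d) : ℕ) : ℤ) : ℤ) : ℝ) := by
      intro i
      simp only [phase, argOf]
      push_cast
      rw [mul_sub, mul_sum]
      congr 1
      · exact sum_congr rfl fun j _ => by ring
      · ring
    have h1 := abs_le.mp (abs_phase_sub_le hstep hi hdist)
    have h2 := abs_le.mp (abs_phase_sub_le hstep hk hdist)
    have h3 := abs_le.mp hp
    rw [hph] at h1 h2
    generalize (∑ j : Fin d, i (Fin.castSucc j) * ((m (Fin.castSucc j) : ℕ) : ℤ)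
      - i (Fin.last d) * ((m (Fin.last d) : ℕ) : ℤ)) = u at h1 ⊢
    generalize (∑ j : Fin d, k (Fin.castSucc j) * ((m (Fin.castSucc j) : ℕ) : ℤ)
      - k (Fin.last d) * ((m (Fin.last d) : ℕ) : ℤ)) = v at h2 ⊢
    refine ⟨p, ?_⟩
    have hl : (-1 : ℝ) < u - v - 4 * p := by nlinarith
    have hu : (u : ℝ) - v - 4 * p < 1 := by nlinarith
    have hl' : -1 < u - v - 4 * p := by exact_mod_cast hl
    have hu' : u - v - 4 * p < 1 := by exact_mod_cast hu
    omega
  · rw [box, Set.mem_univ_pi]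
    intro j
    have := abs_le.mp (hdist j)
    constructor <;> linarith

end Decay

section Localization

variable {d : ℕ} {S : Finset (Fin (d + 1) → ℤ)} {w : (Fin (d + 1) → ℤ) → ℝ}

theorem half_le_zpow_neg_step {ε : ℝ} (hε0 : 0 < ε) (hε : ε ≤ 1 / 2) {e : ℤ}
    (he : e = -1 ∨ e = 0 ∨ e = 1) : 1 / 2 ≤ (1 - ε) ^ (-e) := by
  rcases he with rfl | rfl | rfl
  · norm_num
    linarith
  · norm_num
  · rw [zpow_neg_one]
    exact le_trans (by norm_num) ((one_le_inv₀ (by linarith)).mpr (by linarith))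

theorem norm_SbarC_sq_le (hstep : ∀ i ∈ S, (∀ j, i j = -1 ∨ i j = 0 ∨ i j = 1) ∧ i ≠ 0)
    (hw : ∀ i ∈ S, 0 < w i)
    (hsym : ∀ k : Fin d, SymmetricAxis (d + 1) S w (Fin.castSucc k))
    (hfwd : ∀ k : Fin (d + 1), ∃ i ∈ S, i k = 1)
    (hbwd : ∃ i ∈ S, i (Fin.last d) = -1)
    (hzero : layerWeight S w (-1) = layerWeight S w 1)
    {μ : ℝ} (hμ0 : 0 < μ) (hμ : ∀ i ∈ S, μ ≤ w i)
    {ε δ : ℝ} (hε0 : 0 < ε) (hε : ε ≤ 1 / 2) (hδ0 : 0 < δ) (hδ : (d + 2) * δ ≤ 1 / 4)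
    {θ : Fin (d + 1) → ℝ} (hθ : θ ∈ cell d \ Nparam d S w δ) :
    ‖SbarC d S w (zOf d ε θ)‖ ^ 2
      ≤ (S1 d S w * (1 + 2 * ε ^ 2)) ^ 2 - (μ / 2) ^ 2 * (2 / π ^ 2 * (δ / (d + 1)) ^ 2) := by
  have hρ : 0 < 1 - ε := by linarith
  set c : (Fin (d + 1) → ℤ) → ℝ := fun i => w i * (1 - ε) ^ (-(i (Fin.last d))) with hc
  have hcμ : ∀ i ∈ S, μ / 2 ≤ c i := by
    intro i hi
    have h1 := half_le_zpow_neg_step hε0 hε ((hstep i hi).1 (Fin.last d))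
    have h2 := hμ i hi
    simp only [hc]
    nlinarith
  have hsum : ∑ i ∈ S, c i ≤ S1 d S w * (1 + 2 * ε ^ 2) := by
    have h1 := sum_mul_last_real (w := w) hstep fun e => (1 - ε) ^ (-e)
    have h2 : (1 - ε) + (1 - ε)⁻¹ ≤ 2 + 2 * ε ^ 2 := by
      have h3 : (1 - ε)⁻¹ * (1 - ε) = 1 := inv_mul_cancel₀ hρ.ne'
      have h4 : (1 - ε)⁻¹ ≤ 2 := by
        rw [inv_le_comm₀ hρ (by norm_num)]
        linarith
      nlinarith [sq_nonneg ε]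
    simp only [hc]
    rw [h1, S1_eq hstep, ← hzero]
    simp only [neg_neg, zpow_one, neg_zero, zpow_zero, zpow_neg]
    nlinarith [layerWeight_nonneg hw 0, layerWeight_nonneg hw (-1), sq_nonneg ε]
  have hsum0 : 0 ≤ ∑ i ∈ S, c i := sum_nonneg fun i hi => by linarith [hcμ i hi]
  obtain ⟨i, hi, k, hk, hik⟩ : ∃ i ∈ S, ∃ k ∈ S,
      2 / π ^ 2 * (δ / (d + 1)) ^ 2 ≤ 1 - Real.cos (phase i θ - phase k θ) := by
    by_contra! hcon
    refine hθ.2 (mem_Nparam_of_phases_close hstep hw hsym hfwd hbwd hδ0 hδ hθ.1 ?_)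
    intro i hi k hk
    obtain ⟨p, hp⟩ := exists_int_sq_le_one_sub_cos (phase i θ - phase k θ)
    refine ⟨p, abs_le_of_sq_le_sq (le_of_lt ?_) (by positivity)⟩
    exact lt_of_mul_lt_mul_left (hp.trans_lt (hcon i hi k hk)) (by positivity)
  have hterm : ∀ i ∈ S, ∀ k ∈ S, 0 ≤ c i * c k * (1 - Real.cos (phase i θ - phase k θ)) := by
    intro i hi k hk
    have h1 := hcμ i hi
    have h2 := hcμ k hk
    have h3 := Real.cos_le_one (phase i θ - phase k θ)
    exact mul_nonneg (mul_nonneg (by linarith) (by linarith)) (by linarith)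
  have hdouble : (μ / 2) ^ 2 * (2 / π ^ 2 * (δ / (d + 1)) ^ 2)
      ≤ ∑ i ∈ S, ∑ k ∈ S, c i * c k * (1 - Real.cos (phase i θ - phase k θ)) := by
    calc (μ / 2) ^ 2 * (2 / π ^ 2 * (δ / (d + 1)) ^ 2)
        ≤ c i * c k * (1 - Real.cos (phase i θ - phase k θ)) := by
          rw [pow_two (μ / 2)]
          have h1 := hcμ i hi
          have h2 := hcμ k hk
          exact mul_le_mul (mul_le_mul h1 h2 (by positivity) (by linarith)) hik (by positivity)
            (mul_nonneg (by linarith) (by linarith))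
      _ ≤ ∑ k ∈ S, c i * c k * (1 - Real.cos (phase i θ - phase k θ)) :=
          single_le_sum (f := fun k => c i * c k * (1 - Real.cos (phase i θ - phase k θ)))
            (hterm i hi) hk
      _ ≤ _ := single_le_sum
            (f := fun i => ∑ k ∈ S, c i * c k * (1 - Real.cos (phase i θ - phase k θ)))
            (fun i hi => sum_nonneg (hterm i hi)) hi
  rw [SbarC_zOf, norm_sum_mul_exp_sq S c fun i => phase i θ]
  have : (∑ i ∈ S, c i) ^ 2 ≤ (S1 d S w * (1 + 2 * ε ^ 2)) ^ 2 :=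
    pow_le_pow_left₀ hsum0 hsum 2
  linarith

/-- Gaussian-type decay of `S̄` off `N`. -/
theorem exists_norm_SbarC_le (hstep : ∀ i ∈ S, (∀ j, i j = -1 ∨ i j = 0 ∨ i j = 1) ∧ i ≠ 0)
    (hw : ∀ i ∈ S, 0 < w i)
    (hsym : ∀ k : Fin d, SymmetricAxis (d + 1) S w (Fin.castSucc k))
    (hfwd : ∀ k : Fin (d + 1), ∃ i ∈ S, i k = 1)
    (hbwd : ∃ i ∈ S, i (Fin.last d) = -1)
    (hzero : layerWeight S w (-1) = layerWeight S w 1) :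
    ∃ l > 0, ∃ c > 0, ∀ ε δ : ℝ, 0 < ε → ε ≤ 1 / 2 → 0 < δ → (d + 2) * δ ≤ 1 / 4 →
      ε ^ 2 ≤ c * δ ^ 2 → ∀ θ ∈ cell d \ Nparam d S w δ,
        ‖SbarC d S w (zOf d ε θ)‖ ≤ S1 d S w * Real.exp (-(l * δ ^ 2)) := by
  have hS := S1_pos hstep hw (hfwd (Fin.last d))
  obtain ⟨i₀, hi₀, hmin⟩ := S.exists_min_image w
    ⟨_, (hfwd (Fin.last d)).choose_spec.1⟩
  have hμ0 := hw i₀ hi₀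
  set κ : ℝ := (w i₀ / 2) ^ 2 * (2 / π ^ 2 * (1 / (d + 1)) ^ 2) with hκ
  have hκ0 : 0 < κ := by positivity
  refine ⟨κ / (4 * S1 d S w ^ 2), by positivity, κ / (16 * S1 d S w ^ 2), by positivity, ?_⟩
  intro ε δ hε0 hε hδ0 hδ hεδ θ hθ
  have h := norm_SbarC_sq_le hstep hw hsym hfwd hbwd hzero hμ0 hmin hε0 hε hδ0 hδ hθ
  have e : (w i₀ / 2) ^ 2 * (2 / π ^ 2 * (δ / (d + 1)) ^ 2) = κ * δ ^ 2 := by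
    rw [hκ]
    ring
  rw [e] at h
  refine le_of_sq_le_sq ?_ (by positivity)
  rw [mul_pow, ← Real.exp_nat_mul]
  have hexp := Real.add_one_le_exp (((2 : ℕ) : ℝ) * -(κ / (4 * S1 d S w ^ 2) * δ ^ 2))
  have h1 : S1 d S w ^ 2 * (((2 : ℕ) : ℝ) * -(κ / (4 * S1 d S w ^ 2) * δ ^ 2) + 1)
      = S1 d S w ^ 2 - κ * δ ^ 2 / 2 := by
    push_cast
    field_simp
    ring
  have h2 : S1 d S w ^ 2 * (16 * ε ^ 2) ≤ κ * δ ^ 2 := by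
    rw [div_mul_eq_mul_div, le_div_iff₀ (by positivity)] at hεδ
    linarith
  have h3 : (1 + 2 * ε ^ 2) ^ 2 ≤ 1 + 8 * ε ^ 2 := by
    have : ε ^ 2 ≤ 1 := by nlinarith
    nlinarith [sq_nonneg ε]
  have h4 := mul_le_mul_of_nonneg_left hexp (sq_nonneg (S1 d S w))
  have h5 := mul_le_mul_of_nonneg_left h3 (sq_nonneg (S1 d S w))
  rw [mul_pow] at h
  linarith

theorem norm_residueKernel_le (hstep : ∀ i ∈ S, (∀ j, i j = -1 ∨ i j = 0 ∨ i j = 1) ∧ i ≠ 0)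
    (hw : ∀ i ∈ S, 0 < w i) {ε M : ℝ} (hε0 : 0 < ε) (hε1 : ε < 1)
    (hM : layerWeight S w 0 + layerWeight S w (-1) ≤ M) (hMS : M ≤ S1 d S w)
    {θ : Fin (d + 1) → ℝ} (hθ : ‖SbarC d S w (zOf d ε θ)‖ ≤ M) (n : ℕ) :
    ‖residueKernel d S w (n + 1) (zOf d ε θ)‖
      ≤ 2 ^ (d + 1) / ε * (S1 d S w * ((n + 1) * M ^ n)) := by
  have hU := (norm_QC_add_le hw hε0 hε1 θ).trans hM
  have hM0 : 0 ≤ M := (norm_nonneg _).trans hθ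
  have hA := norm_AC_le hw ε θ
  have hB := SbarC_eq (w := w) hstep (zOf d ε θ)
  have htail := norm_binomTail_one_le hU (by rw [← hB]; exact hθ) n
  have hl := norm_zOf_last hε1 θ
  have hprod : ‖∏ j : Fin d, (1 + zOf d ε θ (Fin.castSucc j))‖ ≤ 2 ^ d := by
    rw [norm_prod]
    refine (prod_le_prod (g := fun _ => 2) (fun _ _ => norm_nonneg _) fun j _ => ?_).trans
      (by simp)
    refine (norm_add_le _ _).trans ?_
    rw [norm_zOf_castSucc, norm_one]
    norm_num
  have hden : ε ≤ ‖1 - zOf d ε θ (Fin.last d)‖ := by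
    have := norm_sub_norm_le (1 : ℂ) (zOf d ε θ (Fin.last d))
    rw [hl, norm_one] at this
    linarith
  have hfrac : ‖(∏ j : Fin d, (1 + zOf d ε θ (Fin.castSucc j))) /
      (1 - zOf d ε θ (Fin.last d))‖ ≤ 2 ^ d / ε := by
    rw [norm_div]
    gcongr
  have hzA : ‖zOf d ε θ (Fin.last d) * AC d S w (zOf d ε θ)‖ ≤ S1 d S w := by
    rw [norm_mul, hl]
    have := S1_eq (w := w) hstep
    nlinarith [layerWeight_nonneg hw 0, layerWeight_nonneg hw 1,
      norm_nonneg (AC d S w (zOf d ε θ))]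
  have hS0 : 0 ≤ S1 d S w := hM0.trans hMS
  have hMn : 0 ≤ M ^ n := by positivity
  have hmain : ‖SbarC d S w (zOf d ε θ) ^ (n + 1) - zOf d ε θ (Fin.last d) *
      AC d S w (zOf d ε θ) * binomTail (QC d S w (zOf d ε θ)
        + zOf d ε θ (Fin.last d) * AC d S w (zOf d ε θ))
        (BC d S w (zOf d ε θ) / zOf d ε θ (Fin.last d)) (n + 1) 1‖
      ≤ 2 * (S1 d S w * ((n + 1) * M ^ n)) := by
    refine (norm_sub_le _ _).trans ?_
    rw [norm_pow, norm_mul]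
    have h1 : ‖SbarC d S w (zOf d ε θ)‖ ^ (n + 1) ≤ S1 d S w * ((n + 1) * M ^ n) := by
      calc ‖SbarC d S w (zOf d ε θ)‖ ^ (n + 1) ≤ M ^ (n + 1) := by gcongr
        _ = M * (1 * M ^ n) := by ring
        _ ≤ S1 d S w * ((n + 1) * M ^ n) := by
          gcongr
          linarith [(Nat.cast_nonneg n : (0 : ℝ) ≤ n)]
    have h2 := mul_le_mul hzA htail (norm_nonneg _) hS0
    linarith
  rw [residueKernel, norm_mul]
  calc _ ≤ 2 ^ d / ε * (2 * (S1 d S w * ((n + 1) * M ^ n))) := by gcongr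
    _ = _ := by ring

theorem tendsto_pow_mul_stretched_exp (C a : ℝ) {b l : ℝ} (hb : 0 < b) (hl : 0 < l) (m : ℕ) :
    Tendsto (fun n : ℕ => (n : ℝ) ^ m * (C * (n : ℝ) ^ a * Real.exp (-l * (n : ℝ) ^ b)))
      atTop (nhds 0) := by
  have h := (tendsto_rpow_mul_exp_neg_mul_atTop_nhds_zero ((m + a) / b) l hl).comp
    ((tendsto_rpow_atTop hb).comp tendsto_natCast_atTop_atTop)
  have h' := h.const_mul C
  rw [mul_zero] at h'
  refine h'.congr' ?_
  filter_upwards [eventually_gt_atTop 0] with n hn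
  have hn' : (0 : ℝ) < n := by exact_mod_cast hn
  simp only [Function.comp_apply]
  rw [← Real.rpow_mul hn'.le, mul_div_cancel₀ _ hb.ne', Real.rpow_add hn', Real.rpow_natCast]
  ring

end Localization

end ZeroDrift

/-- Lemma (localization): restricting the Cauchy integral to the neighbourhoods `N`
of the points of `Γ` introduces an error `O(S(1)^n e_n)` with `e_n` decaying faster
than any fixed power of `n`. -/
theorem localization
    (d : ℕ) (S : Finset (Fin (d + 1) → ℤ)) (w : (Fin (d + 1) → ℤ) → ℝ)
    (hstep : ∀ i ∈ S, (∀ j, i j = -1 ∨ i j = 0 ∨ i j = 1) ∧ i ≠ 0)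
    (hw : ∀ i ∈ S, 0 < w i)
    (hsym : ∀ k : Fin d, SymmetricAxis (d + 1) S w (Fin.castSucc k))
    (hfwd : ∀ k : Fin (d + 1), ∃ i ∈ S, i k = 1)
    (hbwd : ∀ k : Fin (d + 1), ∃ i ∈ S, i k = -1)
    (hzero : (∑ i ∈ S.filter fun i => i (Fin.last d) = -1, w i)
        = ∑ i ∈ S.filter fun i => i (Fin.last d) = 1, w i)
    (α β : ℝ) (hα : 1 / 2 < α) (hαβ : α < 2 * β) (hsum : 1 < α + β)
    (hβ1 : 1 / 3 < β) (hβ2 : β < 1 / 2)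
    (γ : ℝ) (hγ0 : 0 < γ) (hγ1 : γ < 1) :
    ∃ e : ℕ → ℝ,
      (∀ m : ℕ, Tendsto (fun n : ℕ => (n : ℝ) ^ m * e n) atTop (nhds 0)) ∧
      ∀ᶠ n : ℕ in atTop,
        ‖(walkWeight (d + 1) S w n : ℂ) -
            ZeroDrift.fullIntegral d S w n ((n : ℝ) ^ (-α)) ((n : ℝ) ^ (-β))
              ((1 - γ) / ZeroDrift.S1 d S w)‖
          ≤ ZeroDrift.S1 d S w ^ n * e n := by
  have hzero' : ZeroDrift.layerWeight S w (-1) = ZeroDrift.layerWeight S w 1 := hzero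
  have hS := ZeroDrift.S1_pos hstep hw (hfwd (Fin.last d))
  obtain ⟨l, hl, c, hc, hdecay⟩ := ZeroDrift.exists_norm_SbarC_le hstep hw hsym hfwd
    (hbwd (Fin.last d)) hzero'
  have hb : 0 < 1 - 2 * β := by linarith
  refine ⟨fun n => 2 ^ (d + 1) * (n : ℝ) ^ (1 + α) *
    Real.exp (-(l / 2) * (n : ℝ) ^ (1 - 2 * β)),
    ZeroDrift.tendsto_pow_mul_stretched_exp _ _ hb (by positivity), ?_⟩
  have hrpow : ∀ {x : ℝ}, 0 < x → Tendsto (fun n : ℕ => (n : ℝ) ^ (-x)) atTop (nhds 0) :=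
    fun hx => (tendsto_rpow_neg_atTop hx).comp tendsto_natCast_atTop_atTop
  have hε := hrpow (show 0 < α by linarith)
  have hδ := hrpow (show 0 < β by linarith)
  have hratio := hrpow (show 0 < 2 * (α - β) by linarith)
  have hδd : Tendsto (fun n : ℕ => ((d : ℝ) + 2) * (n : ℝ) ^ (-β)) atTop (nhds 0) := by
    simpa using hδ.const_mul ((d : ℝ) + 2)
  have hMlim : Tendsto (fun n : ℕ => ZeroDrift.S1 d S w *
      Real.exp (-(l * ((n : ℝ) ^ (-β)) ^ 2))) atTop (nhds (ZeroDrift.S1 d S w)) := by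
    have h := (((hδ.pow 2).const_mul l).neg.rexp).const_mul (ZeroDrift.S1 d S w)
    simpa using h
  have hgap : ZeroDrift.layerWeight S w 0 + ZeroDrift.layerWeight S w (-1)
      < ZeroDrift.S1 d S w := by
    have := ZeroDrift.layerWeight_pos hw (hfwd (Fin.last d))
    rw [ZeroDrift.S1_eq hstep]
    linarith
  filter_upwards [eventually_ge_atTop 2, hε.eventually_le_const (show (0 : ℝ) < 1 / 2 by norm_num),
    hδd.eventually_le_const (show (0 : ℝ) < 1 / 4 by norm_num), hratio.eventually_le_const hc,
    hMlim.eventually_const_le hgap] with n hn hεn hδn hrn hMn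
  obtain ⟨k, rfl⟩ : ∃ k, n = k + 1 := ⟨n - 1, by omega⟩
  have hk : (1 : ℝ) ≤ k := by exact_mod_cast (by omega : 1 ≤ k)
  have hN : (0 : ℝ) < ((k + 1 : ℕ) : ℝ) := by positivity
  have hε0 : 0 < ((k + 1 : ℕ) : ℝ) ^ (-α) := Real.rpow_pos_of_pos hN _
  have hδ0 : 0 < ((k + 1 : ℕ) : ℝ) ^ (-β) := Real.rpow_pos_of_pos hN _
  have hδsq : (((k + 1 : ℕ) : ℝ) ^ (-β)) ^ 2 = ((k + 1 : ℕ) : ℝ) ^ (-(2 * β)) := by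
    rw [← Real.rpow_mul_natCast hN.le]
    congr 1
    push_cast
    ring
  have hεδ : (((k + 1 : ℕ) : ℝ) ^ (-α)) ^ 2 ≤ c * (((k + 1 : ℕ) : ℝ) ^ (-β)) ^ 2 := by
    refine le_trans (le_of_eq ?_) (mul_le_mul_of_nonneg_right hrn (sq_nonneg _))
    rw [hδsq, ← Real.rpow_add hN, ← Real.rpow_mul_natCast hN.le]
    congr 1
    push_cast
    ring
  have hMS : ZeroDrift.S1 d S w * Real.exp (-(l * (((k + 1 : ℕ) : ℝ) ^ (-β)) ^ 2))
      ≤ ZeroDrift.S1 d S w :=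
    mul_le_of_le_one_right hS.le (Real.exp_le_one_iff.mpr (by
      rw [neg_nonpos]
      positivity))
  have hδ4 : ((k + 1 : ℕ) : ℝ) ^ (-β) ≤ 1 / 4 := by
    nlinarith [(Nat.cast_nonneg d : (0 : ℝ) ≤ d)]
  refine ZeroDrift.norm_walkWeight_sub_fullIntegral_le hstep hw (hfwd (Fin.last d)) hsym hγ0 hγ1
    hε0 (by linarith) hδ4 k (fun θ hθ => ?_) (by positivity)
  refine (ZeroDrift.norm_residueKernel_le hstep hw hε0 (by linarith) hMn hMS
    (hdecay _ _ hε0 hεn hδ0 hδn hεδ θ hθ) k).trans ?_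
  have hexp : Real.exp (-(l * (((k + 1 : ℕ) : ℝ) ^ (-β)) ^ 2)) ^ k
      ≤ Real.exp (-(l / 2) * ((k + 1 : ℕ) : ℝ) ^ (1 - 2 * β)) := by
    rw [← Real.exp_nat_mul, Real.exp_le_exp, hδsq, sub_eq_add_neg, Real.rpow_add hN,
      Real.rpow_one]
    have hp : 0 < l * ((k + 1 : ℕ) : ℝ) ^ (-(2 * β)) := mul_pos hl (Real.rpow_pos_of_pos hN _)
    push_cast at hp ⊢
    nlinarith
  have hαpow : ((k + 1 : ℕ) : ℝ) ^ (1 + α) = ((k : ℝ) + 1) * (((k + 1 : ℕ) : ℝ) ^ (-α))⁻¹ := by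
    rw [Real.rpow_add hN, Real.rpow_one, Real.rpow_neg hN.le, inv_inv]
    push_cast
    ring
  calc _ = ZeroDrift.S1 d S w ^ (k + 1) * (2 ^ (d + 1) * ((k + 1 : ℕ) : ℝ) ^ (1 + α) *
        Real.exp (-(l * (((k + 1 : ℕ) : ℝ) ^ (-β)) ^ 2)) ^ k) := by
        rw [hαpow, mul_pow]
        ring
    _ ≤ _ := by gcongr

end
end
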